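/- For all integers Δ ≥ 3 and all δ > 0, there exists a constant C = C(Δ,δ) such that the following holds. Let α* be a positive real with α* = exp(1/α*) (this equation has a unique positive solution, α* ≈ 1.763). For every finite simple triangle-free graph G = (V,E) with n = |V| ≥ 2 vertices and maximum degree at most Δ, and every integer q ≥ (α*+δ)·Δ, the Glauber dynamics for the uniform distribution on proper q-colorings of G (maps σ : V → [q] with σ_u ≠ σ_v for every edge {u,v}) has mixing time T_mix(P_GL, 1/4) ≤ C·n·log n. -/

import Mathlib

/-!
The proof separates two ranges of `q`.

If `q ≥ 2Δ + 1`, path coupling applies. Dually, one step of the dynamics shrinks the Lipschitz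
constant of a function with respect to Hamming distance by a factor `exp (-1 / (n (Δ + 1)))`
(`hstp_lip`), and `mix_of_path` follows with a constant that does not depend on `q`.

If `q ≤ 2Δ`, only finitely many values of `q` occur, so that the constant may depend on `q`
(`mix_few`). The mixing time bound then comes from approximate tensorisation of entropy: for every
positive `f`, the entropy of `f` under the uniform distribution on proper colourings is at most a
constant, depending on `Δ` and `q` only, times the sum over `v` of the expected conditional
entropies at `v` (`at_col`). This makes the entropy decay by a factor `exp (-1 / (C n))` at each
step (`ent_stp_le`, `mix_of_at`).

Approximate tensorisation is obtained as follows.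

* In a triangle-free graph the neighbours of a vertex are independent given all other colours.
  Jensen's inequality for `exp` then bounds from below the mean number of available colours at a
  vertex, hence bounds the probability of each colour from above (`marg_bound`). The equation
  `α* = exp (1 / α*)` is the threshold at which
  `(number of neighbours) * (probability of a colour) < 1` for list colourings with one neighbour
  removed (`numeric_cond`); for integers `Δ ≥ 3` there is room even at `q = α* Δ`.
* This strict inequality makes a recursion for the effect of a single list change contract
  (`step_bound`), so the total influence of a vertex is bounded for every boundary condition
  (`pairBd_col`), which yields a covariance bound in the spirit of spectral independence
  (`cov_of_pairBd`).
* Viewed as a function of the block `R`, the expected entropy `ent` has second differences bounded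
  by covariances (`second_diff`) and first differences bounded below by variances. With the
  covariance bound and a lower bound on marginals this gives: sum of second differences is at most
  a constant times the sum of first differences (`local_entropy`), whence the sum of first
  differences is at most a constant `N` times the entropy itself (`dif_le`). By Russo's formula a
  random block of density `θ` therefore retains a fraction `θ ^ N` of the entropy (`bern_ge`).
* For small `θ` the random block splits into small connected components. Entropy is subadditive
  over components (`ent_split`), a component `U` has entropy at most `(72 q ^ 2) ^ |U|` times the
  sum of its single-site entropies (`crude`), and at most `Δ ^ (2 m)` connected sets of size `m`
  contain a given vertex (`card_conn_le`). The geometric series converges, with a sum that does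
  not depend on the graph (`at_of_dif`).
-/

open Finset

noncomputable section

variable {S : Type} [Fintype S] [DecidableEq S]

/-- Total variation distance between two (densities of) distributions on a finite set. -/
def tvDist (p μ : S → ℝ) : ℝ := (1 / 2) * ∑ x, |p x - μ x|

/-- Mixing time of a Markov chain with transition matrix `P` and stationary
distribution `μ`: the maximum over starting states `x` in the support of `μ` of the first
time `t` at which the distribution `P^t(x,·)` is within total variation distance `ε`
of `μ`. -/
def mixingTime (μ : S → ℝ) (P : Matrix S S ℝ) (ε : ℝ) : ℕ :=
  (@Finset.filter S (fun x => 0 < μ x) (Classical.decPred _) Finset.univ).sup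
    fun x => sInf {t : ℕ | tvDist (fun y => (P ^ t) x y) μ ≤ ε}

variable {V : Type} [Fintype V] [DecidableEq V]

/-- Glauber dynamics transition matrix for a distribution `μ` on `V → q`. -/
def glauberMatrix {q : Type} [Fintype q] [DecidableEq q] (μ : (V → q) → ℝ) :
    Matrix (V → q) (V → q) ℝ :=
  Matrix.of fun σ σ' =>
    (Fintype.card V : ℝ)⁻¹ *
      ∑ v : V, if ∀ u, u ≠ v → σ' u = σ u then
        μ σ' / ∑ j : q, μ (Function.update σ v j) else 0

/-- `σ` is a proper `q`-coloring of `G`. -/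
def IsProperColoring (G : SimpleGraph V) {q : ℕ} (σ : V → Fin q) : Prop :=
  ∀ u v, G.Adj u v → σ u ≠ σ v

instance (G : SimpleGraph V) [DecidableRel G.Adj] {q : ℕ} (σ : V → Fin q) :
    Decidable (IsProperColoring G σ) :=
  inferInstanceAs (Decidable (∀ u v, G.Adj u v → σ u ≠ σ v))

/-- The uniform distribution on proper `q`-colorings of `G`. -/
def coloringGibbs (G : SimpleGraph V) [DecidableRel G.Adj] (q : ℕ) (σ : V → Fin q) : ℝ :=
  (if IsProperColoring G σ then (1 : ℝ) else 0) /
    ∑ σ' : V → Fin q, if IsProperColoring G σ' then (1 : ℝ) else 0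

end

namespace ColoringMixing

set_option linter.unusedSectionVars false

noncomputable section

/-! ### Conditional averages over a finite set of configurations -/

section Blocks

variable {V α : Type} [Fintype V] [DecidableEq V] [DecidableEq α]

/-- The block of `σ`: the configurations of `Om` that agree with `σ` outside `R`. -/
def bl (Om : Finset (V → α)) (R : Finset V) (σ : V → α) : Finset (V → α) :=
  Om.filter fun τ => ∀ v, v ∉ R → τ v = σ v

/-- Conditional expectation, under the uniform distribution on `Om`, of `f` given the spins
outside `R`. -/
def av (Om : Finset (V → α)) (R : Finset V) (f : (V → α) → ℝ) (σ : V → α) : ℝ :=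
  (∑ τ ∈ bl Om R σ, f τ) / ((bl Om R σ).card : ℝ)

variable {Om : Finset (V → α)} {R R' : Finset V} {σ τ : V → α} {f g : (V → α) → ℝ}

lemma mem_bl : τ ∈ bl Om R σ ↔ τ ∈ Om ∧ ∀ v, v ∉ R → τ v = σ v := by
  simp [bl]

lemma self_mem_bl (h : σ ∈ Om) : σ ∈ bl Om R σ := by simp [mem_bl, h]

lemma bl_eq_of_mem (h : τ ∈ bl Om R σ) : bl Om R τ = bl Om R σ := by
  rw [mem_bl] at h
  ext ρ
  simp only [mem_bl]
  constructor
  · rintro ⟨h1, h2⟩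
    exact ⟨h1, fun v hv => (h2 v hv).trans (h.2 v hv)⟩
  · rintro ⟨h1, h2⟩
    exact ⟨h1, fun v hv => (h2 v hv).trans (h.2 v hv).symm⟩

lemma bl_mono (h : R' ⊆ R) : bl Om R' σ ⊆ bl Om R σ := by
  intro ρ
  simp only [mem_bl]
  rintro ⟨h1, h2⟩
  exact ⟨h1, fun v hv => h2 v (fun h' => hv (h h'))⟩

lemma bl_subset : bl Om R σ ⊆ Om := filter_subset _ _

lemma bl_univ : bl Om univ σ = Om := by
  ext ρ; simp [mem_bl]

lemma bl_empty (h : σ ∈ Om) : bl Om ∅ σ = {σ} := by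
  ext ρ
  simp only [mem_bl, mem_singleton, notMem_empty, not_false_eq_true, forall_true_left]
  constructor
  · rintro ⟨_, h2⟩
    exact funext h2
  · rintro rfl
    exact ⟨h, fun _ => rfl⟩

lemma card_bl_pos (h : σ ∈ Om) : (0 : ℝ) < ((bl Om R σ).card : ℝ) := by
  exact_mod_cast card_pos.mpr ⟨σ, self_mem_bl h⟩

lemma av_congr_mem (h : τ ∈ bl Om R σ) : av Om R f τ = av Om R f σ := by
  unfold av
  rw [bl_eq_of_mem h]

lemma av_congr (h : ∀ τ ∈ bl Om R σ, f τ = g τ) : av Om R f σ = av Om R g σ := by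
  unfold av
  rw [sum_congr rfl h]

lemma sum_bl_comm (hR : R' ⊆ R) (F : (V → α) → (V → α) → ℝ) :
    ∑ τ ∈ bl Om R σ, ∑ ρ ∈ bl Om R' τ, F τ ρ
      = ∑ ρ ∈ bl Om R σ, ∑ τ ∈ bl Om R' ρ, F τ ρ := by
  apply sum_comm'
  intro x y
  simp only [mem_bl]
  constructor
  · rintro ⟨⟨h1, h2⟩, h3, h4⟩
    exact ⟨⟨h1, fun v hv => (h4 v hv).symm⟩, h3,
      fun v hv => (h4 v (fun h => hv (hR h))).trans (h2 v hv)⟩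
  · rintro ⟨⟨h1, h2⟩, h3, h4⟩
    exact ⟨⟨h1, fun v hv => (h2 v (fun h => hv (hR h))).trans (h4 v hv)⟩, h3,
      fun v hv => (h2 v hv).symm⟩

/-- Conditional averages are self-adjoint, also inside a larger block. -/
lemma sum_av_mul (hR : R' ⊆ R) :
    ∑ τ ∈ bl Om R σ, av Om R' f τ * g τ = ∑ τ ∈ bl Om R σ, f τ * av Om R' g τ := by
  have h1 : ∀ f g : (V → α) → ℝ, ∑ τ ∈ bl Om R σ, av Om R' f τ * g τ
      = ∑ τ ∈ bl Om R σ, ∑ ρ ∈ bl Om R' τ, f ρ * g τ / ((bl Om R' τ).card : ℝ) := by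
    intro f g
    refine sum_congr rfl fun τ _ => ?_
    unfold av
    rw [div_mul_eq_mul_div, sum_mul, sum_div]
  rw [h1, sum_bl_comm hR]
  have h2 : ∑ τ ∈ bl Om R σ, f τ * av Om R' g τ = ∑ τ ∈ bl Om R σ, av Om R' g τ * f τ :=
    sum_congr rfl fun _ _ => mul_comm _ _
  rw [h2, h1]
  refine sum_congr rfl fun τ _ => sum_congr rfl fun ρ hρ => ?_
  rw [bl_eq_of_mem hρ, mul_comm]

lemma av_one (h : σ ∈ Om) : av Om R (fun _ => 1) σ = 1 := by
  unfold av
  simp [(card_bl_pos (R := R) h).ne']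

lemma av_const (h : σ ∈ Om) (c : ℝ) : av Om R (fun _ => c) σ = c := by
  unfold av
  have := card_bl_pos (R := R) h
  simp only [sum_const, nsmul_eq_mul]
  field_simp

lemma sum_av (hR : R' ⊆ R) :
    ∑ τ ∈ bl Om R σ, av Om R' f τ = ∑ τ ∈ bl Om R σ, f τ := by
  have h := sum_av_mul (Om := Om) (σ := σ) (f := f) (g := fun _ => 1) hR
  simp only [mul_one] at h
  rw [h]
  refine sum_congr rfl fun τ hτ => ?_
  rw [av_one (bl_subset hτ), mul_one]

lemma sum_av_mul' :
    ∑ τ ∈ Om, av Om R' f τ * g τ = ∑ τ ∈ Om, f τ * av Om R' g τ := by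
  rcases Om.eq_empty_or_nonempty with h | ⟨σ, _⟩
  · simp [h]
  · have := sum_av_mul (Om := Om) (σ := σ) (f := f) (g := g) (subset_univ R')
    rwa [bl_univ] at this

lemma sum_av' : ∑ τ ∈ Om, av Om R' f τ = ∑ τ ∈ Om, f τ := by
  rcases Om.eq_empty_or_nonempty with h | ⟨σ, _⟩
  · simp [h]
  · have := sum_av (Om := Om) (σ := σ) (f := f) (subset_univ R')
    rwa [bl_univ] at this

lemma av_av (hR : R' ⊆ R) : av Om R (av Om R' f) σ = av Om R f σ := by
  rw [av, sum_av hR, av]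

lemma av_mul_av (g : (V → α) → ℝ) :
    av Om R (fun τ => g τ * av Om R f τ) σ = av Om R g σ * av Om R f σ := by
  have h : ∀ τ ∈ bl Om R σ, g τ * av Om R f τ = g τ * av Om R f σ := fun τ hτ => by
    rw [av_congr_mem hτ]
  rw [av_congr h, av, ← sum_mul, mul_div_right_comm, ← av]

lemma av_empty (h : σ ∈ Om) : av Om ∅ f σ = f σ := by
  simp [av, bl_empty h]

lemma av_add : av Om R (fun τ => f τ + g τ) σ = av Om R f σ + av Om R g σ := by
  simp only [av, sum_add_distrib, add_div]

lemma av_sub : av Om R (fun τ => f τ - g τ) σ = av Om R f σ - av Om R g σ := by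
  simp only [av, sum_sub_distrib, sub_div]

lemma av_const_mul (c : ℝ) : av Om R (fun τ => c * f τ) σ = c * av Om R f σ := by
  simp only [av, ← mul_sum, mul_div_assoc]

lemma av_mono (h : ∀ τ ∈ bl Om R σ, f τ ≤ g τ) : av Om R f σ ≤ av Om R g σ := by
  unfold av
  exact div_le_div_of_nonneg_right (sum_le_sum h) (Nat.cast_nonneg _)

lemma av_nonneg (h : ∀ τ ∈ bl Om R σ, 0 ≤ f τ) : 0 ≤ av Om R f σ :=
  div_nonneg (sum_nonneg h) (Nat.cast_nonneg _)

lemma av_pos (hσ : σ ∈ Om) (h : ∀ τ ∈ Om, 0 < f τ) : 0 < av Om R f σ :=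
  div_pos (sum_pos (fun τ hτ => h τ (bl_subset hτ)) ⟨σ, self_mem_bl hσ⟩) (card_bl_pos hσ)

lemma card_mul_av (hσ : σ ∈ Om) :
    ((bl Om R σ).card : ℝ) * av Om R f σ = ∑ τ ∈ bl Om R σ, f τ := by
  unfold av
  have := card_bl_pos (R := R) hσ
  field_simp

lemma abs_av_le (hσ : σ ∈ Om) (c : ℝ) (h : ∀ τ ∈ bl Om R σ, |f τ| ≤ c) :
    |av Om R f σ| ≤ c := by
  rw [abs_le]
  constructor
  · rw [← av_const (Om := Om) (R := R) hσ (-c)]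
    exact av_mono fun τ hτ => (abs_le.mp (h τ hτ)).1
  · rw [← av_const (Om := Om) (R := R) hσ c]
    exact av_mono fun τ hτ => (abs_le.mp (h τ hτ)).2

end Blocks

/-! ### Relative entropy -/

section Entropy

variable {V α : Type} [Fintype V] [DecidableEq V] [DecidableEq α]

lemma mul_log_sub_ge {a b : ℝ} (ha : 0 < a) (hb : 0 < b) :
    a - b ≤ a * (Real.log a - Real.log b) := by
  have h := Real.log_le_sub_one_of_pos (div_pos hb ha)
  rw [Real.log_div hb.ne' ha.ne'] at h
  have h2 : a * (Real.log b - Real.log a) ≤ a * (b / a - 1) :=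
    mul_le_mul_of_nonneg_left h ha.le
  have h3 : a * (b / a - 1) = b - a := by field_simp
  linarith

/-- The (unnormalized) expected entropy of `f` in the blocks with free set `R`. -/
def ent (Om : Finset (V → α)) (f : (V → α) → ℝ) (R : Finset V) : ℝ :=
  ∑ σ ∈ Om, f σ * (Real.log (f σ) - Real.log (av Om R f σ))

variable {Om : Finset (V → α)} {R R' U W : Finset V} {σ τ : V → α} {f g : (V → α) → ℝ}

lemma ent_empty : ent Om f ∅ = 0 := by
  unfold ent
  refine sum_eq_zero fun σ hσ => ?_
  rw [av_empty hσ, sub_self, mul_zero]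

lemma ent_nonneg (hf : ∀ σ ∈ Om, 0 < f σ) : 0 ≤ ent Om f R := by
  have h : ∑ σ ∈ Om, (f σ - av Om R f σ) ≤ ent Om f R :=
    sum_le_sum fun σ hσ => mul_log_sub_ge (hf σ hσ) (av_pos hσ hf)
  rw [sum_sub_distrib, sum_av', sub_self] at h
  exact h

/-- Log-sum inequality in conditional form. -/
lemma log_sum_av (hσ : σ ∈ Om) (hf : ∀ σ ∈ Om, 0 < f σ) (hg : ∀ σ ∈ Om, 0 < g σ) :
    av Om R f σ * (Real.log (av Om R f σ) - Real.log (av Om R g σ))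
      ≤ av Om R (fun τ => f τ * (Real.log (f τ) - Real.log (g τ))) σ := by
  have hF := av_pos (R := R) hσ hf
  have hG := av_pos (R := R) hσ hg
  set F := av Om R f σ with hFd
  set H := av Om R g σ with hGd
  have key : ∀ τ ∈ bl Om R σ, (1 + (Real.log F - Real.log H)) * f τ - F / H * g τ
      ≤ f τ * (Real.log (f τ) - Real.log (g τ)) := by
    intro τ hτ
    have h1 := hf τ (bl_subset hτ)
    have h2 := hg τ (bl_subset hτ)
    have h := mul_log_sub_ge h1 (mul_pos (div_pos hF hG) h2)
    rw [Real.log_mul (div_pos hF hG).ne' h2.ne', Real.log_div hF.ne' hG.ne'] at h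
    linarith
  have h := av_mono key
  rw [av_sub, av_const_mul, av_const_mul, ← hFd, ← hGd] at h
  have : F / H * H = F := by field_simp
  linarith

end Entropy

/-! ### List colourings and the recursive influence bound -/

section Lists

variable {V : Type} [Fintype V] [DecidableEq V] (G : SimpleGraph V) [DecidableRel G.Adj] {q : ℕ}

/-- Assignments with values in the lists `L` whose restriction to `R` is a proper colouring of
the graph induced on `R`. Vertices outside `R` only obey their lists. -/
def lc (R : Finset V) (L : V → Finset (Fin q)) : Finset (V → Fin q) :=
  univ.filter fun x => (∀ v, x v ∈ L v) ∧ ∀ u ∈ R, ∀ v ∈ R, G.Adj u v → x u ≠ x v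

/-- The neighbours of `v` in `R`. -/
def nb (R : Finset V) (v : V) : Finset V := R.filter (G.Adj v)

/-- Each list in `R` exceeds the degree inside `R` by at least `s`. -/
def Valid (s : ℕ) (R : Finset V) (L : V → Finset (Fin q)) : Prop :=
  (∀ v, (L v).Nonempty) ∧ ∀ v ∈ R, (nb G R v).card + s ≤ (L v).card

/-- The lists obtained by giving `v` the colour `a` and deleting `a` at the neighbours of `v`. -/
def pin (R : Finset V) (L : V → Finset (Fin q)) (v : V) (a : Fin q) : V → Finset (Fin q) :=
  Function.update (fun u => if u ∈ nb G R v then (L u).erase a else L u) v {a}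

/-- Mean over list colourings. -/
def mean (R : Finset V) (L : V → Finset (Fin q)) (h : (V → Fin q) → ℝ) : ℝ :=
  (∑ x ∈ lc G R L, h x) / ((lc G R L).card : ℝ)

/-- An additive observable on `R`. -/
def obs (t : V → Fin q → ℝ) (R : Finset V) (x : V → Fin q) : ℝ := ∑ w ∈ R, t w (x w)

variable {G} {s : ℕ} {R : Finset V} {L L' : V → Finset (Fin q)} {v u : V}

lemma mem_nb : u ∈ nb G R v ↔ u ∈ R ∧ G.Adj v u := by simp [nb]

lemma mem_lc {x : V → Fin q} :
    x ∈ lc G R L ↔ (∀ v, x v ∈ L v) ∧ ∀ u ∈ R, ∀ v ∈ R, G.Adj u v → x u ≠ x v := by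
  simp [lc]

lemma notMem_nb_self : v ∉ nb G R v := by simp [nb]

lemma lc_filter_eq_pin (hv : v ∈ R) {a : Fin q} (ha : a ∈ L v) :
    (lc G R L).filter (fun x => x v = a) = lc G (R.erase v) (pin G R L v a) := by
  ext x
  simp only [mem_filter, mem_lc, pin]
  constructor
  · rintro ⟨⟨h1, h2⟩, h3⟩
    refine ⟨fun u => ?_, fun u hu w hw => h2 u (mem_of_mem_erase hu) w (mem_of_mem_erase hw)⟩
    by_cases huv : u = v
    · subst huv; simp [h3]
    · rw [Function.update_of_ne huv]
      split_ifs with hn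
      · rw [mem_nb] at hn
        rw [mem_erase]
        exact ⟨h3 ▸ (h2 v hv u hn.1 hn.2).symm, h1 u⟩
      · exact h1 u
  · rintro ⟨h1, h2⟩
    have h3 : x v = a := by simpa using h1 v
    have h4 : ∀ u ∈ nb G R v, x u ≠ a := by
      intro u hu
      have huv : u ≠ v := fun h => notMem_nb_self (h ▸ hu)
      have := h1 u
      rw [Function.update_of_ne huv, if_pos hu, mem_erase] at this
      exact this.1
    refine ⟨⟨fun u => ?_, fun u hu w hw huw => ?_⟩, h3⟩
    · by_cases huv : u = v
      · subst huv; rw [h3]; exact ha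
      · have := h1 u
        rw [Function.update_of_ne huv] at this
        split_ifs at this with hn
        · exact mem_of_mem_erase this
        · exact this
    · by_cases huv : u = v
      · subst huv
        rw [h3]
        exact (h4 w (mem_nb.mpr ⟨hw, huw⟩)).symm
      · by_cases hwv : w = v
        · subst hwv
          rw [h3]
          exact h4 u (mem_nb.mpr ⟨hu, huw.symm⟩)
        · exact h2 u (mem_erase.mpr ⟨huv, hu⟩) w (mem_erase.mpr ⟨hwv, hw⟩) huw

lemma nb_erase : nb G (R.erase v) u = (nb G R u).erase v := by
  ext w; simp [nb]; tauto

/-- Deleting a vertex lowers the degree of its neighbours by one, which pays for the deletion of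
one colour from each of their lists. -/
lemma valid_erase (hs : 1 ≤ s) (hL : Valid G s R L) (hv : v ∈ R)
    (h : ∀ u, u ≠ v → L' u = L u ∨ (u ∈ nb G R v ∧ ∃ b, L' u = (L u).erase b))
    (hne : (L' v).Nonempty) : Valid G s (R.erase v) L' := by
  have key : ∀ u ∈ nb G R v, ∀ b, (nb G (R.erase v) u).card + s ≤ ((L u).erase b).card := by
    intro u hu b
    have h1 := (mem_nb.mp hu)
    have h2 : v ∈ nb G R u := mem_nb.mpr ⟨hv, h1.2.symm⟩
    have h3 := hL.2 u h1.1
    rw [nb_erase, card_erase_of_mem h2]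
    have := card_pos.mpr ⟨v, h2⟩
    have := pred_card_le_card_erase (s := L u) (a := b)
    omega
  constructor
  · intro u
    by_cases huv : u = v
    · exact huv ▸ hne
    · rcases h u huv with h1 | ⟨h1, b, h2⟩
      · rw [h1]; exact hL.1 u
      · rw [h2, ← card_pos]
        have := key u h1 b
        omega
  · intro u hu
    obtain ⟨huv, huR⟩ := mem_erase.mp hu
    rcases h u huv with h1 | ⟨h1, b, h2⟩
    · rw [h1, nb_erase]
      exact (Nat.add_le_add_right (card_erase_le) s).trans (hL.2 u huR)
    · rw [h2]; exact key u h1 b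

lemma valid_pin (hs : 1 ≤ s) (hL : Valid G s R L) (hv : v ∈ R) (a : Fin q) :
    Valid G s (R.erase v) (pin G R L v a) := by
  refine valid_erase hs hL hv (fun u hu => ?_) (by simp [pin])
  simp only [pin, Function.update_of_ne hu]
  split_ifs with h
  · exact Or.inr ⟨h, a, rfl⟩
  · exact Or.inl rfl

lemma lc_nonempty (hs : 1 ≤ s) : ∀ (n : ℕ) (R : Finset V) (L : V → Finset (Fin q)),
    R.card = n → Valid G s R L → (lc G R L).Nonempty := by
  intro n
  induction n with
  | zero =>
    intro R L hR hL
    rw [card_eq_zero] at hR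
    subst hR
    choose x hx using hL.1
    exact ⟨x, by simp [mem_lc, hx]⟩
  | succ n ih =>
    intro R L hR hL
    obtain ⟨v, hv⟩ : R.Nonempty := by rw [← card_pos]; omega
    obtain ⟨a, ha⟩ := hL.1 v
    obtain ⟨x, hx⟩ := ih (R.erase v) (pin G R L v a) (by rw [card_erase_of_mem hv]; omega)
      (valid_pin hs hL hv a)
    rw [← lc_filter_eq_pin hv ha] at hx
    exact ⟨x, (mem_filter.mp hx).1⟩

lemma card_lc_pos (hs : 1 ≤ s) (hL : Valid G s R L) : (0 : ℝ) < ((lc G R L).card : ℝ) := by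
  exact_mod_cast card_pos.mpr (lc_nonempty hs _ R L rfl hL)

/-- The colour of a vertex outside `R` is irrelevant for observables on `R`. -/
lemma mean_change (hv : v ∉ R) (a a' : Fin q) (t : V → Fin q → ℝ) :
    mean G R (Function.update L v {a}) (obs t R) = mean G R (Function.update L v {a'}) (obs t R) := by
  have hmem : ∀ b b' : Fin q, ∀ x ∈ lc G R (Function.update L v {b}),
      Function.update x v b' ∈ lc G R (Function.update L v {b'}) := by
    intro b b' x hx
    rw [mem_lc] at hx ⊢
    constructor
    · intro u
      by_cases huv : u = v
      · subst huv; simp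
      · have := hx.1 u
        rw [Function.update_of_ne huv] at this ⊢
        rwa [Function.update_of_ne huv]
    · intro u hu w hw huw
      rw [Function.update_of_ne (ne_of_mem_of_not_mem hu hv), Function.update_of_ne (ne_of_mem_of_not_mem hw hv)]
      exact hx.2 u hu w hw huw
  have hinv : ∀ b b' : Fin q, ∀ x ∈ lc G R (Function.update L v {b}),
      Function.update (Function.update x v b') v b = x := by
    intro b b' x hx
    have h1 : x v = b := by simpa using (mem_lc.mp hx).1 v
    rw [Function.update_idem, ← h1, Function.update_eq_self]
  unfold mean
  congr 1
  · refine sum_bij' (fun x _ => Function.update x v a') (fun x _ => Function.update x v a)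
      (hmem a a') (hmem a' a) (hinv a a') (hinv a' a) ?_
    intro x _
    refine sum_congr rfl fun w hw => ?_
    rw [Function.update_of_ne (ne_of_mem_of_not_mem hw hv)]
  · congr 1
    exact card_bij' (fun x _ => Function.update x v a') (fun x _ => Function.update x v a)
      (hmem a a') (hmem a' a) (hinv a a') (hinv a' a)

/-- `B` bounds the effect, on additive observables bounded by one, of replacing one forbidden
colour by another in the list of a single vertex that has a neighbour outside `R`. -/
def StepBound (G : SimpleGraph V) [DecidableRel G.Adj] (q : ℕ) (D s : ℕ) (B : ℝ)
    (R : Finset V) : Prop :=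
  ∀ (L L' : V → Finset (Fin q)) (v : V) (Λ : Finset (Fin q)) (c c' : Fin q) (t : V → Fin q → ℝ),
    v ∈ R → Valid G s R L → Valid G s R L' → (∀ u, u ≠ v → L' u = L u) →
    L v = Λ.erase c → L' v = Λ.erase c' → (nb G R v).card + 1 ≤ D → (∀ w a, |t w a| ≤ 1) →
    |mean G R L (obs t R) - mean G R L' (obs t R)| ≤ B

/-- Changing the pinned colour of `v` is a sequence of list changes, one at each neighbour. -/
lemma pair_bound {D : ℕ} {B : ℝ} (hs : 1 ≤ s) (hD : ∀ u, (nb G R u).card ≤ D)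
    (hv : v ∈ R) (hB : StepBound G q D s B (R.erase v)) (hL : Valid G s R L) (a a' : Fin q)
    {t : V → Fin q → ℝ} (ht : ∀ w a, |t w a| ≤ 1) :
    |mean G (R.erase v) (pin G R L v a) (obs t (R.erase v))
      - mean G (R.erase v) (pin G R L v a') (obs t (R.erase v))| ≤ (nb G R v).card * B := by
  set M : Finset V → V → Finset (Fin q) := fun J => Function.update
    (fun u => if u ∈ J then (L u).erase a' else if u ∈ nb G R v then (L u).erase a else L u)
    v {a'} with hM
  have hvalid : ∀ J ⊆ nb G R v, Valid G s (R.erase v) (M J) := by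
    intro J hJ
    refine valid_erase hs hL hv (fun u hu => ?_) (by simp [hM])
    simp only [hM, Function.update_of_ne hu]
    split_ifs with h1 h2
    · exact Or.inr ⟨hJ h1, a', rfl⟩
    · exact Or.inr ⟨h2, a, rfl⟩
    · exact Or.inl rfl
  have h0 : mean G (R.erase v) (pin G R L v a) (obs t (R.erase v))
      = mean G (R.erase v) (M ∅) (obs t (R.erase v)) := by
    have := mean_change (G := G) (R := R.erase v) (v := v) (notMem_erase v R)
      (L := fun u => if u ∈ nb G R v then (L u).erase a else L u) a a' t
    simpa [hM, pin] using this
  have h1 : pin G R L v a' = M (nb G R v) := by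
    simp only [hM, pin]
    congr 1
    ext1 u
    split_ifs <;> rfl
  have key : ∀ J : Finset V, J ⊆ nb G R v →
      |mean G (R.erase v) (M ∅) (obs t (R.erase v)) - mean G (R.erase v) (M J) (obs t (R.erase v))|
        ≤ J.card * B := by
    intro J
    induction J using Finset.induction_on with
    | empty => intro _; simp
    | insert u J hu ih =>
      intro hJ
      have hJ' : J ⊆ nb G R v := (subset_insert u J).trans hJ
      have hun : u ∈ nb G R v := hJ (mem_insert_self u J)
      have huv : u ≠ v := fun h => notMem_nb_self (h ▸ hun)
      have huR := (mem_nb.mp hun).1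
      have h3 := hB (M J) (M (insert u J)) u (L u) a a' t (mem_erase.mpr ⟨huv, huR⟩)
        (hvalid J hJ') (hvalid _ hJ)
        (fun w hw => by
          by_cases hwv : w = v
          · subst hwv; simp [hM]
          · simp only [hM, Function.update_of_ne hwv, mem_insert, hw, false_or])
        (by simp [hM, Function.update_of_ne huv, hu, hun])
        (by simp [hM, Function.update_of_ne huv])
        (by
          have hvu : v ∈ nb G R u := mem_nb.mpr ⟨hv, (mem_nb.mp hun).2.symm⟩
          rw [nb_erase, card_erase_of_mem hvu]
          have := card_pos.mpr ⟨v, hvu⟩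
          have := hD u
          omega) ht
      have h4 := ih hJ'
      rw [card_insert_of_notMem hu]
      push_cast
      calc _ ≤ _ := abs_sub_le _ (mean G (R.erase v) (M J) (obs t (R.erase v))) _
        _ ≤ _ := by linarith
  rw [h0, h1]
  exact key _ subset_rfl

/-- Comparison of two weighted averages of a function of oscillation at most `D`, over sets `A`
and `A'` such that at most the point `c'` of `A` is missing from `A'`, when `A` carries at least
the total weight of `A'`: they differ by at most `D` times the relative weight of `c'` in `A`. -/
lemma wavg_diff {ι : Type} [DecidableEq ι] {A A' : Finset ι} {c' : ι}
    (hAA : ∀ a ∈ A, a ≠ c' → a ∈ A') {N F : ι → ℝ} (hN : ∀ a, 0 ≤ N a)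
    (hZ' : 0 < ∑ a ∈ A', N a) (hZ : ∑ a ∈ A', N a ≤ ∑ a ∈ A, N a) {m D B : ℝ}
    (hF : ∀ a, m ≤ F a ∧ F a ≤ m + D) (hB0 : 0 ≤ B)
    (hB : c' ∈ A → N c' / (∑ a ∈ A, N a) * D ≤ B) :
    |(∑ a ∈ A, N a * F a) / (∑ a ∈ A, N a) - (∑ a ∈ A', N a * F a) / (∑ a ∈ A', N a)| ≤ B := by
  set Z := ∑ a ∈ A, N a with hZd
  set Z' := ∑ a ∈ A', N a with hZd'
  have hZ0 : 0 < Z := hZ'.trans_le hZ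
  have hm : ∀ (T : Finset ι) (z k : ℝ), z = ∑ a ∈ T, N a → 0 < z →
      (∑ a ∈ T, N a * F a) / z = k + ∑ a ∈ T, N a / z * (F a - k) := by
    intro T z k hz hz0
    have h1 : ∑ a ∈ T, N a / z * (F a - k)
        = (∑ a ∈ T, N a * F a) / z - (∑ a ∈ T, N a) / z * k := by
      rw [sum_div, sum_div, sum_mul, ← sum_sub_distrib]
      refine sum_congr rfl fun a _ => by ring
    rw [h1, ← hz, div_self hz0.ne']
    ring
  have hcmp : ∀ a, N a / Z ≤ N a / Z' := fun a => div_le_div_of_nonneg_left (hN a) hZ' hZ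
  have hsub : A.erase c' ⊆ A' := fun a ha => by
    rw [mem_erase] at ha
    exact hAA a ha.2 ha.1
  have hsplit : ∀ φ : ι → ℝ, ∑ a ∈ A, φ a = (if c' ∈ A then φ c' else 0) + ∑ a ∈ A.erase c', φ a := by
    intro φ
    split_ifs with h
    · exact (add_sum_erase A φ h).symm
    · rw [erase_eq_of_notMem h, zero_add]
  have hD : 0 ≤ D := by have := hF c'; linarith
  have hw : ∀ a, 0 ≤ N a / Z := fun a => div_nonneg (hN a) hZ0.le
  rw [abs_le]
  constructor
  · rw [hm A Z (m + D) rfl hZ0, hm A' Z' (m + D) rfl hZ', hsplit]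
    have h1 : ∑ a ∈ A', N a / Z' * (F a - (m + D)) ≤ ∑ a ∈ A.erase c', N a / Z * (F a - (m + D)) := by
      calc ∑ a ∈ A', N a / Z' * (F a - (m + D)) ≤ ∑ a ∈ A', N a / Z * (F a - (m + D)) :=
            sum_le_sum fun a _ => mul_le_mul_of_nonpos_right (hcmp a) (by linarith [(hF a).2])
        _ ≤ _ := by
            rw [← neg_le_neg_iff, ← sum_neg_distrib, ← sum_neg_distrib]
            refine sum_le_sum_of_subset_of_nonneg hsub fun a _ _ => ?_
            have := mul_nonneg (hw a) (by linarith [(hF a).2] : 0 ≤ (m + D) - F a)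
            linarith
    have h2 : -B ≤ if c' ∈ A then N c' / Z * (F c' - (m + D)) else 0 := by
      split_ifs with h
      · have := hB h
        have h3 := mul_nonneg (hw c') (by linarith [(hF c').1] : 0 ≤ F c' - m)
        linarith
      · linarith
    linarith
  · rw [hm A Z m rfl hZ0, hm A' Z' m rfl hZ', hsplit]
    have h1 : ∑ a ∈ A.erase c', N a / Z * (F a - m) ≤ ∑ a ∈ A', N a / Z' * (F a - m) := by
      calc _ ≤ ∑ a ∈ A', N a / Z * (F a - m) :=
            sum_le_sum_of_subset_of_nonneg hsub fun a _ _ =>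
              mul_nonneg (hw a) (by linarith [(hF a).1])
        _ ≤ _ := sum_le_sum fun a _ => mul_le_mul_of_nonneg_right (hcmp a) (by linarith [(hF a).1])
    have h2 : (if c' ∈ A then N c' / Z * (F c' - m) else 0) ≤ B := by
      split_ifs with h
      · have := hB h
        have h3 := mul_le_mul_of_nonneg_left (by linarith [(hF c').2] : F c' - m ≤ D) (hw c')
        linarith
      · exact hB0
    linarith

/-- The number of list colourings giving colour `a` to `v`. -/
def cnt (G : SimpleGraph V) [DecidableRel G.Adj] (R : Finset V) (L : V → Finset (Fin q))
    (v : V) (a : Fin q) : ℝ :=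
  ((lc G (R.erase v) (pin G R L v a)).card : ℝ)

lemma sum_lc_eq (hv : v ∈ R) (h : (V → Fin q) → ℝ) :
    ∑ x ∈ lc G R L, h x = ∑ a ∈ L v, ∑ x ∈ lc G (R.erase v) (pin G R L v a), h x := by
  rw [← sum_fiberwise_of_maps_to (t := L v) (g := fun x => x v)
    (fun x hx => (mem_lc.mp hx).1 v)]
  exact sum_congr rfl fun a ha => by rw [lc_filter_eq_pin hv ha]

lemma card_lc_eq (hv : v ∈ R) : ((lc G R L).card : ℝ) = ∑ a ∈ L v, cnt G R L v a := by
  have := sum_lc_eq (G := G) (L := L) hv (fun _ => 1)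
  simpa [cnt] using this

/-- Conditioning on the colour of `v`. -/
lemma mean_eq_cond (hs : 1 ≤ s) (hv : v ∈ R) (hL : Valid G s R L) (t : V → Fin q → ℝ) :
    mean G R L (obs t R) = (∑ a ∈ L v, cnt G R L v a *
      (t v a + mean G (R.erase v) (pin G R L v a) (obs t (R.erase v)))) / ∑ a ∈ L v, cnt G R L v a := by
  rw [mean, card_lc_eq hv, sum_lc_eq hv]
  congr 1
  refine sum_congr rfl fun a _ => ?_
  have hpos := card_lc_pos hs (valid_pin hs hL hv a)
  have h1 : ∀ x ∈ lc G (R.erase v) (pin G R L v a), obs t R x = t v a + obs t (R.erase v) x := by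
    intro x hx
    have h3 : x v = a := by simpa [pin] using (mem_lc.mp hx).1 v
    rw [obs, ← add_sum_erase R _ hv, h3, obs]
  rw [sum_congr rfl h1, sum_add_distrib, sum_const, mean, cnt, nsmul_eq_mul]
  field_simp

/-- The marginal bound needed to contract: at a vertex with at most `D - 1` neighbours in `R`,
`(number of neighbours) * P(colour c) ≤ κ`. -/
def MargBound (G : SimpleGraph V) [DecidableRel G.Adj] (q : ℕ) (D s : ℕ) (κ : ℝ) : Prop :=
  ∀ (R : Finset V) (L : V → Finset (Fin q)) (v : V) (c : Fin q), v ∈ R → Valid G s R L →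
    (nb G R v).card + 1 ≤ D → c ∈ L v →
    ((nb G R v).card : ℝ) * cnt G R L v c ≤ κ * (lc G R L).card

/-- The influence recursion. Revealing the colour of `v` writes both means as averages of the same
function of that colour, whose oscillation is at most `2 + k B` by `pair_bound`, where `k` is the
number of neighbours of `v` in `R`. The averages differ by at most the probability of one colour
times this oscillation, which gives `B ≤ 2 + κ B` under the marginal bound. -/
lemma step_bound {D : ℕ} {κ : ℝ} (hs : 1 ≤ s) (hκ : κ < 1)
    (hD : ∀ (R : Finset V) u, (nb G R u).card ≤ D)
    (hM : MargBound G q D s κ) :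
    ∀ (n : ℕ) (R : Finset V), R.card = n → StepBound G q D s (2 / (1 - κ)) R := by
  intro n
  induction n with
  | zero =>
    intro R hR L L' v Λ c c' t hv
    rw [card_eq_zero] at hR
    simp [hR] at hv
  | succ n ih =>
    intro R hR L L' v Λ c c' t hv hL hL' hLL hc hc' hdeg ht
    set B := 2 / (1 - κ) with hBd
    have h1κ : 0 < 1 - κ := by linarith
    have hB0 : 0 ≤ B := by positivity
    have hBeq : 2 + κ * B = B := by rw [hBd]; field_simp; ring
    have hpin : ∀ a, pin G R L' v a = pin G R L v a := by
      intro a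
      ext1 u
      by_cases huv : u = v
      · subst huv; simp [pin]
      · simp [pin, Function.update_of_ne huv, hLL u huv]
    have hcnt : ∀ a, cnt G R L' v a = cnt G R L v a := fun a => by rw [cnt, cnt, hpin]
    have hih := ih (R.erase v) (by rw [card_erase_of_mem hv]; omega)
    set k : ℝ := ((nb G R v).card : ℝ) with hk
    set F : Fin q → ℝ := fun a => t v a + mean G (R.erase v) (pin G R L v a) (obs t (R.erase v))
      with hF
    set N : Fin q → ℝ := fun a => cnt G R L v a with hN
    have hFd : ∀ a a', F a' ≤ F a + (2 + k * B) := by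
      intro a a'
      have h1 := pair_bound hs (hD R) hv hih hL a a' ht
      have h2 := abs_le.mp (ht v a)
      have h3 := abs_le.mp (ht v a')
      have h4 := (abs_le.mp h1).1
      simp only [hF]
      linarith
    obtain ⟨m, -, hm⟩ := exists_min_image univ F ⟨c, mem_univ c⟩
    have hosc : ∀ a, F m ≤ F a ∧ F a ≤ F m + (2 + k * B) :=
      fun a => ⟨hm a (mem_univ a), hFd m a⟩
    have hNn : ∀ a, 0 ≤ N a := fun a => Nat.cast_nonneg _
    have hZ : 0 < ∑ a ∈ L v, N a := by rw [← card_lc_eq hv]; exact card_lc_pos hs hL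
    have hZ' : 0 < ∑ a ∈ L' v, N a := by
      have := card_lc_eq (G := G) (L := L') hv
      simp only [hcnt] at this
      rw [← this]; exact card_lc_pos hs hL'
    have hk0 : 0 ≤ k := Nat.cast_nonneg _
    have bnd : ∀ (A : Finset (Fin q)) (b : Fin q), 0 < ∑ a ∈ A, N a → b ∈ A →
        k * N b ≤ κ * ∑ a ∈ A, N a → N b / (∑ a ∈ A, N a) * (2 + k * B) ≤ B := by
      intro A b hA hb hkb
      have h1 : N b ≤ ∑ a ∈ A, N a := single_le_sum (fun a _ => hNn a) hb
      rw [div_mul_eq_mul_div, div_le_iff₀ hA]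
      have h2 := mul_le_mul_of_nonneg_right hkb hB0
      have h3 : B * ∑ a ∈ A, N a = 2 * ∑ a ∈ A, N a + κ * (∑ a ∈ A, N a) * B := by
        nth_rewrite 1 [← hBeq]; ring
      nlinarith
    rw [mean_eq_cond hs hv hL, mean_eq_cond hs hv hL']
    simp only [hcnt, hpin]
    rcases le_total (∑ a ∈ L' v, N a) (∑ a ∈ L v, N a) with hle | hle
    · refine wavg_diff (c' := c') (fun a ha hne => ?_) hNn hZ' hle hosc hB0 ?_
      · rw [hc] at ha; rw [hc']; exact mem_erase.mpr ⟨hne, mem_of_mem_erase ha⟩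
      · intro hmem
        refine bnd _ _ hZ hmem ?_
        have := hM R L v c' hv hL hdeg hmem
        rwa [card_lc_eq hv] at this
    · rw [abs_sub_comm]
      refine wavg_diff (c' := c) (fun a ha hne => ?_) hNn hZ hle hosc hB0 ?_
      · rw [hc'] at ha; rw [hc]; exact mem_erase.mpr ⟨hne, mem_of_mem_erase ha⟩
      · intro hmem
        refine bnd _ _ hZ' hmem ?_
        have := hM R L' v c hv hL' hdeg hmem
        rw [card_lc_eq hv] at this
        simpa only [hcnt] using this

end Lists

/-! ### Marginal probabilities in triangle-free graphs -/

/-- An upper bound for `-l log (1 - 1/l)`, obtained from `u ≤ sinh u` at `u = log (l/(l-1))`. -/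
lemma neg_log_bound {l s : ℝ} (hs : 0 < s) (hl : s + 1 ≤ l) :
    l * (-Real.log (1 - 1 / l)) ≤ 1 + 1 / (2 * s) := by
  have hl1 : 0 < l - 1 := by linarith
  have hl0 : 0 < l := by linarith
  set z := l / (l - 1) with hz
  have hz1 : 1 ≤ z := by rw [hz, le_div_iff₀ hl1]; linarith
  have hz0 : 0 < z := by linarith
  have h1 : -Real.log (1 - 1 / l) = Real.log z := by
    rw [← Real.log_inv]
    congr 1
    rw [hz]
    field_simp
  have h2 : Real.log z ≤ Real.sinh (Real.log z) :=
    Real.self_le_sinh_iff.mpr (Real.log_nonneg hz1)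
  rw [Real.sinh_eq, Real.exp_neg, Real.exp_log hz0] at h2
  have h3 : l * ((z - z⁻¹) / 2) = 1 + 1 / (2 * (l - 1)) := by
    rw [hz]; field_simp; ring
  have h4 : 1 / (2 * (l - 1)) ≤ 1 / (2 * s) := by
    apply one_div_le_one_div_of_le <;> linarith
  rw [h1]
  have := mul_le_mul_of_nonneg_left h2 hl0.le
  linarith

/-- Jensen's inequality for `exp`, in the form `∑ exp yᵢ ≥ m exp t` if `∑ yᵢ ≥ m t`. -/
lemma sum_exp_ge {ι : Type} (A : Finset ι) (y : ι → ℝ) (t : ℝ)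
    (h : (A.card : ℝ) * t ≤ ∑ a ∈ A, y a) :
    (A.card : ℝ) * Real.exp t ≤ ∑ a ∈ A, Real.exp (y a) := by
  have h1 : ∀ a ∈ A, Real.exp t * (1 + (y a - t)) ≤ Real.exp (y a) := by
    intro a _
    have h2 := Real.add_one_le_exp (y a - t)
    have h3 : Real.exp (y a) = Real.exp t * Real.exp (y a - t) := by rw [← Real.exp_add]; ring_nf
    rw [h3]
    exact mul_le_mul_of_nonneg_left (by linarith) (Real.exp_pos t).le
  have h2 := sum_le_sum h1
  rw [← mul_sum, sum_add_distrib, sum_sub_distrib, sum_const, sum_const, nsmul_eq_mul,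
    nsmul_eq_mul] at h2
  have h3 := mul_nonneg (Real.exp_pos t).le (sub_nonneg.mpr h)
  nlinarith

section Marg

variable {V : Type} [Fintype V] [DecidableEq V] {G : SimpleGraph V} [DecidableRel G.Adj] {q : ℕ}
variable {s : ℕ} {R : Finset V} {L : V → Finset (Fin q)} {v : V}

lemma card_lc_change (hv : v ∉ R) (a a' : Fin q) :
    (lc G R (Function.update L v {a})).card = (lc G R (Function.update L v {a'})).card := by
  have hmem : ∀ b b' : Fin q, ∀ x ∈ lc G R (Function.update L v {b}),
      Function.update x v b' ∈ lc G R (Function.update L v {b'}) := by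
    intro b b' x hx
    rw [mem_lc] at hx ⊢
    constructor
    · intro u
      by_cases huv : u = v
      · subst huv; simp
      · have := hx.1 u
        rw [Function.update_of_ne huv] at this ⊢
        rwa [Function.update_of_ne huv]
    · intro u hu w hw huw
      rw [Function.update_of_ne (ne_of_mem_of_not_mem hu hv),
        Function.update_of_ne (ne_of_mem_of_not_mem hw hv)]
      exact hx.2 u hu w hw huw
  have hinv : ∀ b b' : Fin q, ∀ x ∈ lc G R (Function.update L v {b}),
      Function.update (Function.update x v b') v b = x := by
    intro b b' x hx
    have h1 : x v = b := by simpa using (mem_lc.mp hx).1 v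
    rw [Function.update_idem, ← h1, Function.update_eq_self]
  exact card_bij' (fun x _ => Function.update x v a') (fun x _ => Function.update x v a)
      (hmem a a') (hmem a' a) (hinv a a') (hinv a' a)

/-- Counting colourings with colour `b` at `v` amounts to counting colourings of `R \ {v}` that
avoid `b` on the neighbours of `v`; the auxiliary colour `a` at `v` plays no role. -/
lemma cnt_eq_filter (a b : Fin q) :
    cnt G R L v b = (((lc G (R.erase v) (Function.update L v {a})).filter
      (fun y => ∀ u ∈ nb G R v, y u ≠ b)).card : ℝ) := by
  rw [cnt, pin, card_lc_change (notMem_erase v R) b a]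
  congr 2
  ext y
  simp only [mem_filter, mem_lc]
  constructor
  · rintro ⟨h1, h2⟩
    refine ⟨⟨fun u => ?_, h2⟩, fun u hu => ?_⟩
    · have := h1 u
      by_cases huv : u = v
      · subst huv; simpa using this
      · rw [Function.update_of_ne huv] at this ⊢
        split_ifs at this
        · exact mem_of_mem_erase this
        · exact this
    · have := h1 u
      have huv : u ≠ v := fun h => notMem_nb_self (h ▸ hu)
      rw [Function.update_of_ne huv, if_pos hu] at this
      exact ne_of_mem_erase this
  · rintro ⟨⟨h1, h2⟩, h3⟩
    refine ⟨fun u => ?_, h2⟩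
    have := h1 u
    by_cases huv : u = v
    · subst huv; simpa using this
    · rw [Function.update_of_ne huv] at this ⊢
      split_ifs with h
      · exact mem_erase.mpr ⟨h3 u h, this⟩
      · exact this

/-- The colours available at `u` given the colours `y` of its neighbours in `R`. -/
def avail (G : SimpleGraph V) [DecidableRel G.Adj] (R : Finset V) (L : V → Finset (Fin q))
    (y : V → Fin q) (u : V) : Finset (Fin q) :=
  (L u).filter fun a => ∀ w ∈ R, G.Adj u w → y w ≠ a

lemma card_avail (y : V → Fin q) (u : V) :
    (L u).card ≤ (avail G R L y u).card + (nb G R u).card := by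
  have h : L u ⊆ avail G R L y u ∪ (nb G R u).image y := by
    intro a ha
    rw [mem_union, mem_image]
    by_cases h : a ∈ avail G R L y u
    · exact Or.inl h
    · right
      simp only [avail, mem_filter, ha, true_and, not_forall, not_not] at h
      obtain ⟨w, hw, huw, hwa⟩ := h
      exact ⟨w, mem_nb.mpr ⟨hw, huw⟩, hwa⟩
  exact (card_le_card h).trans ((card_union_le _ _).trans (Nat.add_le_add_left card_image_le _))

/-- Given everything outside an independent set `W`, the colours in `W` are independent. -/
lemma bl_lc_eq_pi {W : Finset V} (hW : ∀ u ∈ W, ∀ w ∈ W, ¬ G.Adj u w) (hWR : W ⊆ R)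
    {y : V → Fin q} (hy : y ∈ lc G R L) :
    bl (lc G R L) W y = Fintype.piFinset fun u => if u ∈ W then avail G R L y u else {y u} := by
  ext x
  rw [mem_bl, Fintype.mem_piFinset]
  constructor
  · rintro ⟨h1, h2⟩ u
    rw [mem_lc] at h1
    split_ifs with hu
    · refine mem_filter.mpr ⟨h1.1 u, fun w hw huw => ?_⟩
      rw [← h2 w (fun h => hW u hu w h huw)]
      exact (h1.2 u (hWR hu) w hw huw).symm
    · rw [mem_singleton]; exact h2 u hu
  · intro h
    have h2 : ∀ u, u ∉ W → x u = y u := fun u hu => by simpa [hu] using h u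
    have h3 : ∀ u ∈ W, x u ∈ avail G R L y u := fun u hu => by simpa [hu] using h u
    rw [mem_lc] at hy
    refine ⟨mem_lc.mpr ⟨fun u => ?_, fun u hu w hw huw => ?_⟩, h2⟩
    · by_cases hu : u ∈ W
      · exact (mem_filter.mp (h3 u hu)).1
      · rw [h2 u hu]; exact hy.1 u
    · by_cases huW : u ∈ W
      · have hwW : w ∉ W := fun h => hW u huW w h huw
        rw [h2 w hwW]
        exact ((mem_filter.mp (h3 u huW)).2 w hw huw).symm
      · rw [h2 u huW]
        by_cases hwW : w ∈ W
        · exact (mem_filter.mp (h3 w hwW)).2 u hu huw.symm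
        · rw [h2 w hwW]; exact hy.2 u hu w hw huw

/-- Conditional probability that the colour `b` is not used on the independent set `W`. -/
lemma av_avoid {W : Finset V} (hW : ∀ u ∈ W, ∀ w ∈ W, ¬ G.Adj u w) (hWR : W ⊆ R)
    {y : V → Fin q} (hy : y ∈ lc G R L) (b : Fin q) :
    av (lc G R L) W (fun x => if ∀ u ∈ W, x u ≠ b then (1 : ℝ) else 0) y
      = ∏ u ∈ W, (((avail G R L y u).erase b).card : ℝ) / ((avail G R L y u).card : ℝ) := by
  have h1 : (bl (lc G R L) W y).filter (fun x => ∀ u ∈ W, x u ≠ b)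
      = Fintype.piFinset fun u => if u ∈ W then (avail G R L y u).erase b else {y u} := by
    rw [bl_lc_eq_pi hW hWR hy]
    ext x
    simp only [mem_filter, Fintype.mem_piFinset]
    constructor
    · rintro ⟨h1, h2⟩ u
      have := h1 u
      split_ifs at this ⊢ with hu
      · exact mem_erase.mpr ⟨h2 u hu, this⟩
      · exact this
    · intro h
      refine ⟨fun u => ?_, fun u hu => ?_⟩
      · have := h u
        split_ifs at this ⊢ with hu
        · exact mem_of_mem_erase this
        · exact this
      · have := h u
        rw [if_pos hu] at this
        exact ne_of_mem_erase this
  have hprod : ∀ f : V → Finset (Fin q),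
      ∏ u, (if u ∈ W then f u else {y u}).card = ∏ u ∈ W, (f u).card := by
    intro f
    rw [← prod_subset (subset_univ W)]
    · exact prod_congr rfl fun u hu => by rw [if_pos hu]
    · intro u _ hu; rw [if_neg hu, card_singleton]
  rw [av, sum_boole, h1, bl_lc_eq_pi hW hWR hy, Fintype.card_piFinset, Fintype.card_piFinset,
    hprod, hprod, prod_div_distrib]
  push_cast
  rfl

/-- Lower bound for the expected number of colours of `A` not used on `W`, when the vertices of
`W` get independent uniform colours from lists `Λ` of at least `s + 1` colours each. -/
lemma sum_prod_ge {W : Finset V} (hs : 1 ≤ s) (Λ : V → Finset (Fin q))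
    (hΛ : ∀ u ∈ W, s + 1 ≤ (Λ u).card) (A : Finset (Fin q)) (hA : A.Nonempty) :
    (A.card : ℝ) * Real.exp (-((W.card : ℝ) / A.card * (1 + 1 / (2 * (s : ℝ))))) ≤
      ∑ b ∈ A, ∏ u ∈ W, (((Λ u).erase b).card : ℝ) / ((Λ u).card : ℝ) := by
  have hs0 : (0 : ℝ) < s := by exact_mod_cast hs
  set e : V → ℝ := fun u => -Real.log (1 - 1 / ((Λ u).card : ℝ)) with he
  have hA0 : (0 : ℝ) < A.card := by exact_mod_cast card_pos.mpr hA
  have hfac : ∀ u ∈ W, ∀ b, (((Λ u).erase b).card : ℝ) / ((Λ u).card : ℝ)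
      = Real.exp (-(if b ∈ Λ u then e u else 0)) := by
    intro u hu b
    have h1 : ((s : ℝ) + 1) ≤ (Λ u).card := by exact_mod_cast hΛ u hu
    have h0 : (0 : ℝ) < (Λ u).card := by linarith
    split_ifs with hb
    · have h2 : (((Λ u).erase b).card : ℝ) = (Λ u).card - 1 := by
        rw [card_erase_of_mem hb, Nat.cast_sub (card_pos.mpr ⟨b, hb⟩)]; simp
      have h3 : (0 : ℝ) < 1 - 1 / ((Λ u).card : ℝ) := by
        rw [sub_pos, div_lt_one h0]; linarith
      rw [h2, he, neg_neg, Real.exp_log h3]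
      field_simp
    · rw [erase_eq_of_notMem hb, div_self h0.ne', neg_zero, Real.exp_zero]
  have hrw : ∑ b ∈ A, ∏ u ∈ W, (((Λ u).erase b).card : ℝ) / ((Λ u).card : ℝ)
      = ∑ b ∈ A, Real.exp (-∑ u ∈ W, if b ∈ Λ u then e u else 0) := by
    refine sum_congr rfl fun b _ => ?_
    rw [← sum_neg_distrib, Real.exp_sum]
    exact prod_congr rfl fun u hu => hfac u hu b
  rw [hrw]
  apply sum_exp_ge
  rw [sum_neg_distrib, sum_comm]
  have h2 : ∀ u ∈ W, ∑ b ∈ A, (if b ∈ Λ u then e u else 0) ≤ 1 + 1 / (2 * (s : ℝ)) := by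
    intro u hu
    have h1 : ((s : ℝ) + 1) ≤ (Λ u).card := by exact_mod_cast hΛ u hu
    have h0 : (0 : ℝ) < (Λ u).card := by linarith
    have he0 : 0 ≤ e u := by
      have h3 : (0 : ℝ) < 1 - 1 / ((Λ u).card : ℝ) := by
        rw [sub_pos, div_lt_one h0]; linarith
      have : Real.log (1 - 1 / ((Λ u).card : ℝ)) ≤ 0 :=
        Real.log_nonpos h3.le (by have := one_div_pos.mpr h0; linarith)
      simp only [he]; linarith
    rw [← sum_filter, sum_const, nsmul_eq_mul]
    refine le_trans ?_ (neg_log_bound hs0 h1)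
    refine mul_le_mul_of_nonneg_right ?_ he0
    exact_mod_cast card_le_card fun b hb => (mem_filter.mp hb).2
  have h3 := sum_le_sum h2
  rw [sum_const, nsmul_eq_mul] at h3
  have h4 : (A.card : ℝ) * -((W.card : ℝ) / A.card * (1 + 1 / (2 * (s : ℝ))))
      = -((W.card : ℝ) * (1 + 1 / (2 * (s : ℝ)))) := by
    field_simp
  rw [h4]
  linarith

/-- Triangle-freeness makes the neighbourhood of `v` independent, so that after averaging over
it about `m exp (-k/m)` of the `m` colours in the list of `v` remain available. -/
lemma marg_bound (hG : G.CliqueFree 3) {D : ℕ} {κ : ℝ} (hs : 1 ≤ s)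
    (hnum : ∀ k m : ℕ, k + 1 ≤ D → k + s ≤ m →
      (k : ℝ) ≤ κ * (m * Real.exp (-((k : ℝ) / m * (1 + 1 / (2 * (s : ℝ)))))))
    (hκ0 : 0 ≤ κ) :
    MargBound G q D s κ := by
  intro R L v c hv hL hdeg hc
  set W := nb G R v with hWd
  set Y := lc G (R.erase v) (Function.update L v {c}) with hY
  have hW : ∀ u ∈ W, ∀ w ∈ W, ¬ G.Adj u w := by
    intro u hu w hw huw
    have h1 := (mem_nb.mp hu).2
    have h2 := (mem_nb.mp hw).2
    exact hG {v, u, w} (SimpleGraph.is3Clique_triple_iff.mpr ⟨h1, h2, huw⟩)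
  have hWR : W ⊆ R.erase v := fun u hu =>
    mem_erase.mpr ⟨fun h => notMem_nb_self (h ▸ hu), (mem_nb.mp hu).1⟩
  have hLv := hL.2 v hv
  have hpt : ∀ y ∈ Y, (W.card : ℝ) ≤ κ * ∑ b ∈ L v,
      av Y W (fun x => if ∀ u ∈ W, x u ≠ b then (1 : ℝ) else 0) y := by
    intro y hy
    have h1 : ∀ u ∈ W, s + 1 ≤ (avail G (R.erase v) (Function.update L v {c}) y u).card := by
      intro u hu
      have huv : u ≠ v := fun h => notMem_nb_self (h ▸ hu)
      have h2 := card_avail (G := G) (R := R.erase v) (L := Function.update L v {c}) y u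
      have hvu : v ∈ nb G R u := mem_nb.mpr ⟨hv, (mem_nb.mp hu).2.symm⟩
      rw [nb_erase, card_erase_of_mem hvu, Function.update_of_ne huv] at h2
      have h3 := hL.2 u (mem_nb.mp hu).1
      have := card_pos.mpr ⟨v, hvu⟩
      omega
    have h2 := sum_prod_ge hs _ h1 (L v) ⟨c, hc⟩
    rw [sum_congr rfl fun b _ => av_avoid hW hWR hy b]
    exact (hnum _ _ hdeg hLv).trans (mul_le_mul_of_nonneg_left h2 hκ0)
  have hsum := sum_le_sum hpt
  rw [sum_const, nsmul_eq_mul, ← mul_sum, sum_comm] at hsum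
  have h5 : ∑ b ∈ L v, ∑ y ∈ Y, av Y W (fun x => if ∀ u ∈ W, x u ≠ b then (1 : ℝ) else 0) y
      = ((lc G R L).card : ℝ) := by
    rw [card_lc_eq hv]
    refine sum_congr rfl fun b _ => ?_
    rw [sum_av', sum_boole, cnt_eq_filter c b]
  rw [h5] at hsum
  have h6 : cnt G R L v c ≤ (Y.card : ℝ) := by
    rw [cnt_eq_filter c c]
    exact_mod_cast card_le_card (filter_subset _ _)
  have h7 := mul_le_mul_of_nonneg_left h6 (Nat.cast_nonneg (α := ℝ) W.card)
  linarith

end Marg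

/-! ### The numerical condition behind `α*` -/

lemma alpha_gt {α : ℝ} (h0 : 0 < α) (h : α = Real.exp (1 / α)) : 17 / 10 < α := by
  by_contra hle
  push Not at hle
  have h1 : 10 / 17 ≤ 1 / α := by rw [div_le_div_iff₀ (by norm_num) h0]; linarith
  have h2 := Real.quadratic_le_exp_of_nonneg (x := 1 / α) (by positivity)
  rw [← h] at h2
  nlinarith

lemma log_alpha_ge {α β : ℝ} (h0 : 0 < α) (h : α = Real.exp (1 / α)) (hβ : α ≤ β) :
    1 / β ≤ Real.log β := by
  have h1 : Real.log α = 1 / α := by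
    conv_lhs => rw [h]
    exact Real.log_exp _
  have h2 := Real.log_le_log h0 hβ
  have h3 := one_div_le_one_div_of_le h0 hβ
  linarith

/-- Strict contraction: `r exp (r (1 + 1/(2 s))) < 1` at the extremal ratio
`r = (Δ - 1)/(q - 1)`, with `s = q - Δ`. -/
lemma kappa_lt {α Δ q : ℝ} (h0 : 0 < α) (h : α = Real.exp (1 / α)) (hΔ : 3 ≤ Δ)
    (hq : α * Δ ≤ q) (hq2 : q ≤ 2 * Δ) :
    (Δ - 1) / (q - 1) * Real.exp ((Δ - 1) / (q - 1) * (1 + 1 / (2 * (q - Δ)))) < 1 := by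
  have hα := alpha_gt h0 h
  set β := q / Δ with hβ
  have hΔ0 : 0 < Δ := by linarith
  have hqβ : q = β * Δ := by rw [hβ]; field_simp
  have hβα : α ≤ β := by rw [hβ, le_div_iff₀ hΔ0]; exact hq
  have hβ2 : β ≤ 2 := by rw [hβ, div_le_iff₀ hΔ0]; exact hq2
  have hβ17 : 17 / 10 < β := by linarith
  have hlog := log_alpha_ge h0 h hβα
  have hβ0 : 0 < β := by linarith
  have hΔ1 : 0 < Δ - 1 := by linarith
  have hq1 : 0 < q - 1 := by nlinarith
  set x := (β - 1) / (β * (Δ - 1)) with hx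
  have hx0 : 0 < x := div_pos (by linarith) (by positivity)
  have hr : (Δ - 1) / (q - 1) = (β * (1 + x))⁻¹ := by
    rw [hx, hqβ]
    have : β * Δ - 1 ≠ 0 := by rw [← hqβ]; exact hq1.ne'
    field_simp
    ring
  set r := (Δ - 1) / (q - 1) with hrd
  have hr0 : 0 < r := div_pos hΔ1 hq1
  have hlr : Real.log r = -(Real.log β + Real.log (1 + x)) := by
    rw [hr, Real.log_inv, Real.log_mul hβ0.ne' (by linarith)]
  have hlx : x / (1 + x) ≤ Real.log (1 + x) := by
    have := Real.one_sub_inv_le_log_of_pos (by linarith : 0 < 1 + x)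
    have h2 : 1 - (1 + x)⁻¹ = x / (1 + x) := by field_simp; ring
    linarith
  have hqs : q - Δ = (β - 1) * Δ := by rw [hqβ]; ring
  have hmain : r * (1 + 1 / (2 * (q - Δ))) < 1 / β + x / (1 + x) := by
    rw [hr, hqs]
    have hxx : 1 / (2 * ((β - 1) * Δ)) < x * (1 + β) := by
      have hb1 : 0 < β - 1 := by linarith
      rw [hx, div_mul_eq_mul_div, div_lt_div_iff₀ (by positivity) (by positivity)]
      have h3 : β ≤ 2 * (β - 1) ^ 2 * (1 + β) := by nlinarith
      have h4 : β * (Δ - 1) < β * Δ := by nlinarith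
      have h5 := mul_le_mul_of_nonneg_right h3 hΔ0.le
      nlinarith
    have h6 : 1 / β + x / (1 + x) = (β * (1 + x))⁻¹ * (1 + x + β * x) := by field_simp
    rw [h6]
    apply mul_lt_mul_of_pos_left _ (by positivity)
    linarith
  have h7 : r = Real.exp (Real.log r) := (Real.exp_log hr0).symm
  have h8 : r * Real.exp (r * (1 + 1 / (2 * (q - Δ))))
      = Real.exp (Real.log r + r * (1 + 1 / (2 * (q - Δ)))) := by
    rw [Real.exp_add, Real.exp_log hr0]
  rw [h8, Real.exp_lt_one_iff, hlr]
  linarith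

/-- The worst case over degrees `k ≤ Δ - 1` and list sizes `m ≥ k + (q - Δ)`. -/
lemma numeric_cond {α : ℝ} {D q : ℕ} (h0 : 0 < α) (h : α = Real.exp (1 / α)) (hD : 3 ≤ D)
    (hq : α * D ≤ q) (hq2 : q ≤ 2 * D) :
    ∃ κ : ℝ, 0 ≤ κ ∧ κ < 1 ∧ ∀ k m : ℕ, k + 1 ≤ D → k + (q - D) ≤ m →
      (k : ℝ) ≤ κ * (m * Real.exp (-((k : ℝ) / m * (1 + 1 / (2 * ((q - D : ℕ) : ℝ)))))) := by
  have hα := alpha_gt h0 h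
  have hDR : (3 : ℝ) ≤ D := by exact_mod_cast hD
  have hqD : (D : ℝ) + 2 < q := by nlinarith
  have hqD' : D ≤ q := by
    have : (D : ℝ) ≤ q := by linarith
    exact_mod_cast this
  have hcast : ((q - D : ℕ) : ℝ) = (q : ℝ) - D := by rw [Nat.cast_sub hqD']
  rw [hcast]
  set g := 1 + 1 / (2 * ((q : ℝ) - D)) with hg
  have hg0 : 0 < g := by
    have : 0 < (q : ℝ) - D := by linarith
    positivity
  set r := ((D : ℝ) - 1) / (q - 1) with hr
  have hr0 : 0 ≤ r := div_nonneg (by linarith) (by linarith)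
  refine ⟨r * Real.exp (r * g), by positivity,
    kappa_lt h0 h hDR hq (by exact_mod_cast hq2), fun k m hk hm => ?_⟩
  have hkR : (k : ℝ) + 1 ≤ D := by exact_mod_cast hk
  have hmR : (k : ℝ) + ((q : ℝ) - D) ≤ m := by rw [← hcast]; exact_mod_cast hm
  have hk0 : (0 : ℝ) ≤ k := Nat.cast_nonneg k
  have hm0 : (0 : ℝ) < m := by linarith
  have hkm : (k : ℝ) / m ≤ r := by
    rw [hr, div_le_div_iff₀ hm0 (by linarith)]
    nlinarith
  have hexp : Real.exp (k / m * g) ≤ Real.exp (r * g) :=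
    Real.exp_le_exp.mpr (mul_le_mul_of_nonneg_right hkm hg0.le)
  have h1 : (k : ℝ) / m * Real.exp (k / m * g) ≤ r * Real.exp (r * g) :=
    mul_le_mul hkm hexp (Real.exp_pos _).le hr0
  have h2 : (k : ℝ) = (k / m * Real.exp (k / m * g)) * (m * Real.exp (-(k / m * g))) := by
    rw [Real.exp_neg]; field_simp
  calc (k : ℝ) = _ := h2
    _ ≤ _ := mul_le_mul_of_nonneg_right h1 (by positivity)

/-! ### Local entropy inequality from covariance and marginal bounds -/

section LocalEntropy

variable {V α : Type} [Fintype V] [DecidableEq V] [DecidableEq α]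
variable {Om : Finset (V → α)} {R R' U W : Finset V} {σ τ : V → α} {f g : (V → α) → ℝ}
  {u v : V}

/-- Spectral independence in every block: sums of covariances of single-site observables are
controlled by their sup norms. -/
def Cov (Om : Finset (V → α)) (η : ℝ) : Prop :=
  ∀ (R : Finset V), ∀ σ ∈ Om, ∀ (F : V → (V → α) → ℝ) (w : V → ℝ),
    (∀ u ∈ R, ∀ τ ∈ bl Om R σ, |F u τ| ≤ w u) →
    (∀ u ∈ R, av Om R (F u) σ = 0) →
    (∀ u ∈ R, ∀ τ ∈ bl Om R σ, ∀ τ' ∈ bl Om R σ, τ u = τ' u → F u τ = F u τ') →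
    ∑ u ∈ R, ∑ v ∈ R.erase u, av Om R (fun τ => F u τ * F v τ) σ ≤ η * ∑ u ∈ R, w u ^ 2

/-- Lower bound on the conditional marginals of feasible spins. -/
def Low (Om : Finset (V → α)) (b : ℝ) : Prop :=
  ∀ (R : Finset V), ∀ σ ∈ Om, ∀ u ∈ R, ∀ τ ∈ bl Om R σ,
    b ≤ av Om R (fun x => if x u = τ u then 1 else 0) σ

/-- `x log x - x + 1` is at least quadratic around `1` on a bounded interval. -/
lemma phi_ge {b x : ℝ} (hb0 : 0 < b) (hb1 : b ≤ 1) (hx : 0 < x) (hxb : x ≤ 1 / b) :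
    b / 4 * (x - 1) ^ 2 ≤ x * Real.log x - x + 1 := by
  obtain ⟨s, hs, rfl⟩ : ∃ s : ℝ, 0 < s ∧ s ^ 2 = x :=
    ⟨Real.sqrt x, Real.sqrt_pos.mpr hx, Real.sq_sqrt hx.le⟩
  have h1 := mul_log_sub_ge hs one_pos
  rw [Real.log_one, sub_zero] at h1
  rw [Real.log_pow]
  have h2 : (s - 1) ^ 2 ≤ s ^ 2 * (((2 : ℕ) : ℝ) * Real.log s) - s ^ 2 + 1 := by
    push_cast
    nlinarith
  refine le_trans ?_ h2
  have h3 : b * s ^ 2 ≤ 1 := by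
    rw [le_div_iff₀ hb0] at hxb; linarith
  have h4 : b / 4 * (s + 1) ^ 2 ≤ 1 := by
    nlinarith [sq_nonneg (s - 1)]
  calc b / 4 * (s ^ 2 - 1) ^ 2 = (b / 4 * (s + 1) ^ 2) * (s - 1) ^ 2 := by ring
    _ ≤ 1 * (s - 1) ^ 2 := mul_le_mul_of_nonneg_right h4 (sq_nonneg _)
    _ = (s - 1) ^ 2 := one_mul _

lemma mem_bl_erase (hτ : τ ∈ bl Om R σ) {ρ : V → α} :
    ρ ∈ bl Om (R.erase u) τ ↔ ρ ∈ bl Om R σ ∧ ρ u = τ u := by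
  rw [← bl_eq_of_mem hτ]
  simp only [mem_bl, mem_erase, not_and]
  constructor
  · rintro ⟨h1, h2⟩
    exact ⟨⟨h1, fun v hv => h2 v fun _ => hv⟩, h2 u fun h => absurd rfl h⟩
  · rintro ⟨⟨h1, h2⟩, h3⟩
    refine ⟨h1, fun v hv => ?_⟩
    by_cases h : v = u
    · rw [h, h3]
    · exact h2 v (hv h)

lemma bl_erase_eq (hτ : τ ∈ bl Om R σ) {τ' : V → α} (hτ' : τ' ∈ bl Om R σ)
    (h : τ u = τ' u) : bl Om (R.erase u) τ = bl Om (R.erase u) τ' := by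
  ext ρ
  rw [mem_bl_erase hτ, mem_bl_erase hτ', h]

/-- A nonnegative single-site function is at most its mean divided by the marginal lower
bound. -/
lemma low_mul_le {b : ℝ} (hL : Low Om b) (hσ : σ ∈ Om) (hu : u ∈ R) (hτ : τ ∈ bl Om R σ)
    (h : (V → α) → ℝ) (h0 : ∀ ρ ∈ bl Om R σ, 0 ≤ h ρ)
    (hd : ∀ ρ ∈ bl Om R σ, ρ u = τ u → h ρ = h τ) : b * h τ ≤ av Om R h σ := by
  have h1 : ∀ ρ ∈ bl Om R σ, h τ * (if ρ u = τ u then 1 else 0) ≤ h ρ := by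
    intro ρ hρ
    split_ifs with hh
    · rw [mul_one, hd ρ hρ hh]
    · rw [mul_zero]; exact h0 ρ hρ
  have h2 := av_mono h1
  rw [av_const_mul] at h2
  have h3 := mul_le_mul_of_nonneg_left (hL R σ hσ u hu τ hτ) (h0 τ hτ)
  linarith

lemma ent_sub_ent (R' : Finset V) : ent Om f R - ent Om f R'
    = ∑ σ ∈ Om, f σ * (Real.log (av Om R' f σ) - Real.log (av Om R f σ)) := by
  unfold ent
  rw [← sum_sub_distrib]
  exact sum_congr rfl fun σ _ => by ring

/-- `f` may be replaced by its block average against block-measurable functions. -/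
lemma sum_mul_of_meas (h : (V → α) → ℝ)
    (hm : ∀ σ ∈ Om, ∀ τ ∈ bl Om R σ, h τ = h σ) :
    ∑ σ ∈ Om, f σ * h σ = ∑ σ ∈ Om, av Om R f σ * h σ := by
  rw [sum_av_mul']
  refine sum_congr rfl fun σ hσ => ?_
  rw [av_congr (hm σ hσ), av_const hσ]

lemma av_meas (hR : R' ⊆ R) : ∀ σ ∈ Om, ∀ τ ∈ bl Om R' σ, av Om R f τ = av Om R f σ :=
  fun _ _ _ hτ => av_congr_mem (bl_mono hR hτ)

/-- Second difference of the entropy is bounded by a covariance. -/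
lemma second_diff (hf : ∀ σ ∈ Om, 0 < f σ) (u v : V) :
    ent Om f R - ent Om f (R.erase u) - ent Om f (R.erase v) + ent Om f ((R.erase u).erase v)
      ≤ ∑ σ ∈ Om, av Om R f σ * av Om R (fun τ =>
          (av Om (R.erase u) f τ / av Om R f τ - 1) * (av Om (R.erase v) f τ / av Om R f τ - 1)) σ
    := by
  have p0 := fun σ (hσ : σ ∈ Om) => av_pos (R := R) hσ hf
  have pu := fun σ (hσ : σ ∈ Om) => av_pos (R := R.erase u) hσ hf
  have pv := fun σ (hσ : σ ∈ Om) => av_pos (R := R.erase v) hσ hf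
  have puv := fun σ (hσ : σ ∈ Om) => av_pos (R := (R.erase u).erase v) hσ hf
  have su : R.erase u ⊆ R := erase_subset _ _
  have sv : R.erase v ⊆ R := erase_subset _ _
  have suv : (R.erase u).erase v ⊆ R.erase u := erase_subset _ _
  have suv' : (R.erase u).erase v ⊆ R.erase v := by
    intro x hx; simp only [mem_erase] at hx ⊢; tauto
  have hl : ent Om f R - ent Om f (R.erase u) - ent Om f (R.erase v)
      + ent Om f ((R.erase u).erase v)
      = - ∑ σ ∈ Om, f σ * (Real.log (av Om ((R.erase u).erase v) f σ)
          - Real.log (av Om (R.erase u) f σ * av Om (R.erase v) f σ / av Om R f σ)) := by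
    unfold ent
    rw [← sum_sub_distrib, ← sum_sub_distrib, ← sum_add_distrib, ← sum_neg_distrib]
    refine sum_congr rfl fun σ hσ => ?_
    rw [Real.log_div (mul_pos (pu σ hσ) (pv σ hσ)).ne' (p0 σ hσ).ne',
      Real.log_mul (pu σ hσ).ne' (pv σ hσ).ne']
    ring
  rw [hl, sum_mul_of_meas (R := (R.erase u).erase v)]
  swap
  · intro σ hσ τ hτ
    rw [av_meas subset_rfl σ hσ τ hτ, av_meas suv σ hσ τ hτ, av_meas suv' σ hσ τ hτ,
      av_meas (suv.trans su) σ hσ τ hτ]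
  have h1 : ∑ σ ∈ Om, (av Om ((R.erase u).erase v) f σ
        - av Om (R.erase u) f σ * av Om (R.erase v) f σ / av Om R f σ)
      ≤ ∑ σ ∈ Om, av Om ((R.erase u).erase v) f σ
        * (Real.log (av Om ((R.erase u).erase v) f σ)
          - Real.log (av Om (R.erase u) f σ * av Om (R.erase v) f σ / av Om R f σ)) :=
    sum_le_sum fun σ hσ => mul_log_sub_ge (puv σ hσ)
      (div_pos (mul_pos (pu σ hσ) (pv σ hσ)) (p0 σ hσ))
  rw [sum_sub_distrib, sum_av'] at h1
  have h2 : ∑ σ ∈ Om, av Om R f σ * av Om R (fun τ =>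
          (av Om (R.erase u) f τ / av Om R f τ - 1) * (av Om (R.erase v) f τ / av Om R f τ - 1)) σ
      = ∑ σ ∈ Om, av Om (R.erase u) f σ * av Om (R.erase v) f σ / av Om R f σ
        - ∑ σ ∈ Om, f σ := by
    rw [← sum_av_mul', ]
    have : ∀ σ ∈ Om, av Om R (av Om R f) σ * ((av Om (R.erase u) f σ / av Om R f σ - 1)
        * (av Om (R.erase v) f σ / av Om R f σ - 1))
        = av Om (R.erase u) f σ * av Om (R.erase v) f σ / av Om R f σ
          - av Om (R.erase u) f σ - av Om (R.erase v) f σ + av Om R f σ := by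
      intro σ hσ
      rw [av_av subset_rfl]
      have := (p0 σ hσ).ne'
      field_simp
      ring
    rw [sum_congr rfl this, sum_add_distrib, sum_sub_distrib, sum_sub_distrib, sum_av', sum_av',
      sum_av']
    ring
  rw [h2]
  linarith

/-- First difference of the entropy as a block average of `φ(g) = g log g - g + 1`. -/
lemma first_diff (hf : ∀ σ ∈ Om, 0 < f σ) (u : V) :
    ent Om f R - ent Om f (R.erase u) = ∑ σ ∈ Om, av Om R f σ * av Om R (fun τ =>
      av Om (R.erase u) f τ / av Om R f τ * Real.log (av Om (R.erase u) f τ / av Om R f τ)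
        - av Om (R.erase u) f τ / av Om R f τ + 1) σ := by
  have p0 := fun σ (hσ : σ ∈ Om) => av_pos (R := R) hσ hf
  have pu := fun σ (hσ : σ ∈ Om) => av_pos (R := R.erase u) hσ hf
  have su : R.erase u ⊆ R := erase_subset _ _
  rw [ent_sub_ent, sum_mul_of_meas (R := R.erase u), ← sum_av_mul']
  swap
  · intro σ hσ τ hτ
    rw [av_meas subset_rfl σ hσ τ hτ, av_meas su σ hσ τ hτ]
  have : ∀ σ ∈ Om, av Om R (av Om R f) σ * (av Om (R.erase u) f σ / av Om R f σ
        * Real.log (av Om (R.erase u) f σ / av Om R f σ)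
        - av Om (R.erase u) f σ / av Om R f σ + 1)
      = av Om (R.erase u) f σ * (Real.log (av Om (R.erase u) f σ) - Real.log (av Om R f σ))
        - av Om (R.erase u) f σ + av Om R f σ := by
    intro σ hσ
    rw [av_av subset_rfl, Real.log_div (pu σ hσ).ne' (p0 σ hσ).ne']
    have := (p0 σ hσ).ne'
    field_simp
  rw [sum_congr rfl this, sum_add_distrib, sum_sub_distrib, sum_av', sum_av']
  ring

/-- The local inequality: the total second difference of the entropy is at most a constant times
its total first difference. -/
lemma local_entropy {η b : ℝ} (hη : 0 ≤ η) (hb0 : 0 < b) (hb1 : b ≤ 1) (hC : Cov Om η)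
    (hL : Low Om b) (hf : ∀ σ ∈ Om, 0 < f σ) (R : Finset V) :
    ∑ u ∈ R, ∑ v ∈ R.erase u, (ent Om f R - ent Om f (R.erase u) - ent Om f (R.erase v)
        + ent Om f ((R.erase u).erase v))
      ≤ 4 * η / b ^ 2 * ∑ u ∈ R, (ent Om f R - ent Om f (R.erase u)) := by
  have p0 := fun σ (hσ : σ ∈ Om) => av_pos (R := R) hσ hf
  have pu := fun u σ (hσ : σ ∈ Om) => av_pos (R := R.erase u) hσ hf
  set g : V → (V → α) → ℝ := fun u τ => av Om (R.erase u) f τ / av Om R f τ with hg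
  have hgp : ∀ u, ∀ σ ∈ Om, 0 < g u σ := fun u σ hσ => div_pos (pu u σ hσ) (p0 σ hσ)
  calc _ ≤ ∑ u ∈ R, ∑ v ∈ R.erase u, ∑ σ ∈ Om, av Om R f σ * av Om R (fun τ =>
          (g u τ - 1) * (g v τ - 1)) σ :=
        sum_le_sum fun u _ => sum_le_sum fun v _ => second_diff hf u v
    _ = ∑ σ ∈ Om, av Om R f σ * ∑ u ∈ R, ∑ v ∈ R.erase u, av Om R (fun τ =>
          (g u τ - 1) * (g v τ - 1)) σ := by
        simp_rw [mul_sum]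
        rw [sum_comm]
        conv_rhs => rw [sum_comm]
        rw [sum_comm]
        exact sum_congr rfl fun u _ => by rw [sum_comm]
    _ ≤ ∑ σ ∈ Om, av Om R f σ * (4 * η / b ^ 2 * ∑ u ∈ R, av Om R (fun τ =>
          g u τ * Real.log (g u τ) - g u τ + 1) σ) := by
        refine sum_le_sum fun σ hσ => mul_le_mul_of_nonneg_left ?_ (p0 σ hσ).le
        -- the maximiser of `|g u - 1|` in the block
        have hmax : ∀ u, ∃ τ ∈ bl Om R σ, ∀ τ' ∈ bl Om R σ, |g u τ' - 1| ≤ |g u τ - 1| :=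
          fun u => exists_max_image _ _ ⟨σ, self_mem_bl hσ⟩
        choose m hm hm' using hmax
        have hdep : ∀ u ∈ R, ∀ τ ∈ bl Om R σ, ∀ τ' ∈ bl Om R σ, τ u = τ' u →
            g u τ = g u τ' := by
          intro u hu τ hτ τ' hτ' h
          simp only [hg]
          rw [av_congr_mem hτ, av_congr_mem hτ']
          unfold av
          rw [bl_erase_eq hτ hτ' h]
        have hmean : ∀ u, av Om R (g u) σ = 1 := by
          intro u
          have : ∀ τ ∈ bl Om R σ, g u τ = (av Om R f σ)⁻¹ * av Om (R.erase u) f τ := by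
            intro τ hτ
            simp only [hg]
            rw [av_congr_mem hτ, div_eq_inv_mul]
          rw [av_congr this, av_const_mul, av_av (erase_subset _ _)]
          exact inv_mul_cancel₀ (p0 σ hσ).ne'
        have h1 := hC R σ hσ (fun u τ => g u τ - 1) (fun u => |g u (m u) - 1|)
          (fun u _ τ hτ => hm' u τ hτ)
          (fun u _ => by rw [av_sub, hmean, av_one hσ, sub_self])
          (fun u hu τ hτ τ' hτ' h => by simp only [hdep u hu τ hτ τ' hτ' h])
        refine h1.trans ?_
        rw [mul_sum, mul_sum]
        refine sum_le_sum fun u hu => ?_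
        have hgm := hgp u _ (bl_subset (hm u))
        have h2 := low_mul_le hL hσ hu (hm u) (g u) (fun ρ hρ => (hgp u ρ (bl_subset hρ)).le)
          (fun ρ hρ h => hdep u hu ρ hρ _ (hm u) h)
        rw [hmean] at h2
        have h3 : g u (m u) ≤ 1 / b := by rw [le_div_iff₀ hb0]; linarith
        have h4 := phi_ge hb0 hb1 hgm h3
        have h5 := low_mul_le hL hσ hu (hm u)
          (fun τ => g u τ * Real.log (g u τ) - g u τ + 1)
          (fun ρ hρ => by
            have := mul_log_sub_ge (hgp u ρ (bl_subset hρ)) one_pos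
            rw [Real.log_one, sub_zero] at this
            linarith)
          (fun ρ hρ h => by simp only [hdep u hu ρ hρ _ (hm u) h])
        have h6 : b * (b / 4 * (g u (m u) - 1) ^ 2)
            ≤ av Om R (fun τ => g u τ * Real.log (g u τ) - g u τ + 1) σ :=
          (mul_le_mul_of_nonneg_left h4 hb0.le).trans h5
        rw [sq_abs]
        calc η * (g u (m u) - 1) ^ 2
            = 4 * η / b ^ 2 * (b * (b / 4 * (g u (m u) - 1) ^ 2)) := by field_simp
          _ ≤ _ := mul_le_mul_of_nonneg_left h6 (by positivity)
    _ = _ := by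
        simp_rw [mul_sum]
        rw [sum_comm]
        refine sum_congr rfl fun u _ => ?_
        rw [first_diff hf, mul_sum]
        exact sum_congr rfl fun σ _ => by ring

end LocalEntropy

/-! ### From influence bounds to spectral independence -/

section Influence

variable {V : Type} [Fintype V] [DecidableEq V] {q : ℕ}
variable {Om : Finset (V → Fin q)} {R : Finset V} {σ τ : V → Fin q} {u v : V} {E : ℝ}

/-- Total influence bound: changing the spin of `u` inside a block moves the conditional mean of
any additive observable bounded by one by at most `E`. -/
def PairBd (Om : Finset (V → Fin q)) (E : ℝ) : Prop :=
  ∀ (R : Finset V), ∀ σ ∈ Om, ∀ u ∈ R, ∀ τ ∈ bl Om R σ, ∀ τ' ∈ bl Om R σ,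
    ∀ t : V → Fin q → ℝ, (∀ w a, |t w a| ≤ 1) →
    |av Om (R.erase u) (obs t (R.erase u)) τ - av Om (R.erase u) (obs t (R.erase u)) τ'| ≤ E

/-- Conditional probability of spin `c` at `v` given the spins outside `R \ {u}`. -/
def prb (Om : Finset (V → Fin q)) (R : Finset V) (u : V) (τ : V → Fin q) (v : V) (c : Fin q) :
    ℝ := av Om (R.erase u) (fun x => if x v = c then 1 else 0) τ

lemma av_single (s : Fin q → ℝ) : av Om (R.erase u) (fun x => s (x v)) τ
    = ∑ c, s c * prb Om R u τ v c := by
  have : (fun x : V → Fin q => s (x v)) = fun x => ∑ c, s c * (if x v = c then 1 else 0) := by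
    ext x; simp
  rw [this]
  simp only [prb, av, mul_div_assoc', ← sum_div, mul_sum]
  rw [sum_comm]

lemma av_obs (t : V → Fin q → ℝ) (W : Finset V) : av Om (R.erase u) (obs t W) τ
    = ∑ v ∈ W, ∑ c, t v c * prb Om R u τ v c := by
  simp_rw [← av_single]
  simp only [av, obs, ← sum_div]
  rw [sum_comm]

/-- Row sums of total variation influences. -/
lemma row_sum (hP : PairBd Om E) (hσ : σ ∈ Om) (hu : u ∈ R) (hτ : τ ∈ bl Om R σ)
    {τ' : V → Fin q} (hτ' : τ' ∈ bl Om R σ) :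
    ∑ v ∈ R.erase u, ∑ c, |prb Om R u τ v c - prb Om R u τ' v c| ≤ E := by
  -- test against the signs of the differences
  have h := hP R σ hσ u hu τ hτ τ' hτ'
    (fun v c => if 0 ≤ prb Om R u τ v c - prb Om R u τ' v c then 1 else -1)
    (fun v c => by split_ifs <;> simp)
  rw [av_obs, av_obs, ← sum_sub_distrib] at h
  refine le_trans (le_of_eq ?_) ((le_abs_self _).trans h)
  refine sum_congr rfl fun v _ => ?_
  rw [← sum_sub_distrib]
  refine sum_congr rfl fun c _ => ?_
  split_ifs with h0
  · rw [abs_of_nonneg h0]; ring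
  · rw [abs_of_neg (not_le.mp h0)]; ring

lemma sum_offdiag_comm (g : V → V → ℝ) :
    ∑ u ∈ R, ∑ v ∈ R.erase u, g u v = ∑ u ∈ R, ∑ v ∈ R.erase u, g v u := by
  apply sum_comm'
  intro x y
  simp only [mem_erase]
  constructor
  · rintro ⟨h1, h2, h3⟩; exact ⟨⟨h2.symm, h1⟩, h3⟩
  · rintro ⟨⟨h1, h2⟩, h3⟩; exact ⟨h2, h1.symm, h3⟩

/-- Bounded total influence implies the covariance bound: the mean of `F v` given the spin at `u`
moves by at most the influence of `u` on `v`, and `w u * w v ≤ (w u ^ 2 + w v ^ 2) / 2`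
symmetrises the resulting double sum. -/
lemma cov_of_pairBd (hP : PairBd Om E) : Cov Om ((q : ℝ) ^ 2 * E) := by
  intro R σ hσ F w hF h0 hd
  -- a representative of the block with given spin at `u`
  have hrep : ∀ (u : V) (a : Fin q), ∃ ρ ∈ bl Om R σ, ∀ τ ∈ bl Om R σ, τ u = a → τ u = ρ u := by
    intro u a
    by_cases h : ∃ ρ ∈ bl Om R σ, ρ u = a
    · obtain ⟨ρ, hρ, h1⟩ := h
      exact ⟨ρ, hρ, fun τ _ h2 => h2.trans h1.symm⟩
    · exact ⟨σ, self_mem_bl hσ, fun τ hτ h2 => absurd ⟨τ, hτ, h2⟩ h⟩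
  choose ρ hρ hρ' using hrep
  have hw : ∀ u ∈ R, 0 ≤ w u := fun u hu => (abs_nonneg _).trans (hF u hu σ (self_mem_bl hσ))
  set J : V → V → ℝ := fun u v => ∑ a, ∑ a', ∑ c,
    |prb Om R u (ρ u a) v c - prb Om R u (ρ u a') v c| with hJ
  have hJ0 : ∀ u v, 0 ≤ J u v := fun u v => sum_nonneg fun _ _ => sum_nonneg fun _ _ =>
    sum_nonneg fun _ _ => abs_nonneg _
  have hrow : ∀ u ∈ R, ∑ v ∈ R.erase u, J u v ≤ (q : ℝ) ^ 2 * E := by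
    intro u hu
    simp only [hJ]
    rw [sum_comm]
    have : ∀ a ∈ (univ : Finset (Fin q)), ∑ v ∈ R.erase u, ∑ a', ∑ c,
        |prb Om R u (ρ u a) v c - prb Om R u (ρ u a') v c| ≤ q * E := by
      intro a _
      rw [sum_comm]
      refine (sum_le_sum fun a' _ => row_sum hP hσ hu (hρ u a) (hρ u a')).trans ?_
      simp
    refine (sum_le_sum this).trans ?_
    simp only [sum_const, card_univ, Fintype.card_fin, nsmul_eq_mul]
    exact le_of_eq (by ring)
  have hprb : ∀ u, ∀ τ ∈ bl Om R σ, ∀ v c, prb Om R u τ v c = prb Om R u (ρ u (τ u)) v c := by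
    intro u τ hτ v c
    unfold prb av
    rw [bl_erase_eq hτ (hρ u (τ u)) (hρ' u (τ u) τ hτ rfl)]
  have hent : ∀ u ∈ R, ∀ v ∈ R, av Om R (fun τ => F u τ * F v τ) σ ≤ w u * (w v * J u v) := by
    intro u hu v hv
    have hs : ∀ c, |F v (ρ v c)| ≤ w v := fun c => hF v hv _ (hρ v c)
    have hav : ∀ τ ∈ bl Om R σ, av Om (R.erase u) (F v) τ
        = ∑ c, F v (ρ v c) * prb Om R u (ρ u (τ u)) v c := by
      intro τ hτ
      have h1 : ∀ x ∈ bl Om (R.erase u) τ, F v x = (fun y : V → Fin q => F v (ρ v (y v))) x := by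
        intro x hx
        have hx' := ((mem_bl_erase hτ).mp hx).1
        exact hd v hv x hx' _ (hρ v _) (hρ' v _ x hx' rfl)
      rw [av_congr h1, av_single (fun c => F v (ρ v c))]
      exact sum_congr rfl fun c _ => by rw [hprb u τ hτ]
    have hdiff : ∀ τ ∈ bl Om R σ, ∀ τ' ∈ bl Om R σ,
        |av Om (R.erase u) (F v) τ - av Om (R.erase u) (F v) τ'| ≤ w v * J u v := by
      intro τ hτ τ' hτ'
      rw [hav τ hτ, hav τ' hτ', ← sum_sub_distrib]
      refine (abs_sum_le_sum_abs _ _).trans ?_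
      have h2 : ∀ c ∈ (univ : Finset (Fin q)),
          |F v (ρ v c) * prb Om R u (ρ u (τ u)) v c - F v (ρ v c) * prb Om R u (ρ u (τ' u)) v c|
          ≤ w v * |prb Om R u (ρ u (τ u)) v c - prb Om R u (ρ u (τ' u)) v c| := by
        intro c _
        rw [← mul_sub, abs_mul]
        exact mul_le_mul_of_nonneg_right (hs c) (abs_nonneg _)
      refine (sum_le_sum h2).trans ?_
      rw [← mul_sum]
      refine mul_le_mul_of_nonneg_left ?_ (hw v hv)
      have h3 := single_le_sum (f := fun a' => ∑ c,
        |prb Om R u (ρ u (τ u)) v c - prb Om R u (ρ u a') v c|)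
        (fun a _ => sum_nonneg fun c _ => abs_nonneg _) (mem_univ (τ' u))
      have h4 := single_le_sum (f := fun a => ∑ a', ∑ c,
        |prb Om R u (ρ u a) v c - prb Om R u (ρ u a') v c|)
        (fun a _ => sum_nonneg fun a' _ => sum_nonneg fun c _ => abs_nonneg _) (mem_univ (τ u))
      exact h3.trans h4
    have hcond : ∀ τ ∈ bl Om R σ, |av Om (R.erase u) (F v) τ| ≤ w v * J u v := by
      intro τ hτ
      have h5 : av Om R (fun τ' => av Om (R.erase u) (F v) τ - av Om (R.erase u) (F v) τ') σ
          = av Om (R.erase u) (F v) τ := by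
        rw [av_sub, av_av (erase_subset _ _), h0 v hv, av_const hσ, sub_zero]
      rw [← h5]
      exact abs_av_le hσ _ fun τ' hτ' => hdiff τ hτ τ' hτ'
    rw [← av_av (erase_subset u R)]
    refine (le_abs_self _).trans (abs_av_le hσ _ fun τ hτ => ?_)
    have h6 : ∀ x ∈ bl Om (R.erase u) τ, F u x * F v x = F u τ * F v x := by
      intro x hx
      obtain ⟨hx1, hx2⟩ := (mem_bl_erase hτ).mp hx
      rw [hd u hu x hx1 τ hτ hx2]
    rw [av_congr h6, av_const_mul, abs_mul]
    exact mul_le_mul (hF u hu τ hτ) (hcond τ hτ) (abs_nonneg _) (hw u hu)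
  have hsym : ∀ u ∈ R, ∀ v ∈ R.erase u, av Om R (fun τ => F u τ * F v τ) σ
      ≤ 1 / 2 * (w u ^ 2 * J u v) + 1 / 2 * (w v ^ 2 * J v u) := by
    intro u hu v hv
    have hv' := mem_of_mem_erase hv
    have h1 := hent u hu v hv'
    have h2 := hent v hv' u hu
    have h3 : av Om R (fun τ => F v τ * F u τ) σ = av Om R (fun τ => F u τ * F v τ) σ :=
      av_congr fun τ _ => mul_comm _ _
    rw [h3] at h2
    have hm1 := hJ0 u v
    have hm2 := hJ0 v u
    rcases le_total (J u v) (J v u) with h | h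
    · nlinarith [mul_nonneg hm1 (sq_nonneg (w u - w v)),
        mul_nonneg (sub_nonneg.mpr h) (sq_nonneg (w v))]
    · nlinarith [mul_nonneg hm2 (sq_nonneg (w u - w v)),
        mul_nonneg (sub_nonneg.mpr h) (sq_nonneg (w u))]
  calc _ ≤ ∑ u ∈ R, ∑ v ∈ R.erase u,
        (1 / 2 * (w u ^ 2 * J u v) + 1 / 2 * (w v ^ 2 * J v u)) :=
        sum_le_sum fun u hu => sum_le_sum fun v hv => hsym u hu v hv
    _ = ∑ u ∈ R, ∑ v ∈ R.erase u, w u ^ 2 * J u v := by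
        simp_rw [sum_add_distrib, ← mul_sum]
        rw [sum_offdiag_comm (fun u v => w v ^ 2 * J v u)]
        simp_rw [← mul_sum]
        ring
    _ ≤ _ := by
        rw [mul_sum]
        refine sum_le_sum fun u hu => ?_
        rw [← mul_sum, mul_comm]
        exact mul_le_mul_of_nonneg_right (hrow u hu) (sq_nonneg _)

end Influence

/-! ### Proper colourings: recolouring, marginal lower bound, influence bound -/

section Colorings

variable {V : Type} [Fintype V] [DecidableEq V] {G : SimpleGraph V} [DecidableRel G.Adj] {q : ℕ}
variable {R : Finset V} {σ τ : V → Fin q} {u v : V} {D : ℕ}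

variable (G q) in
/-- The set of proper colourings. -/
def col : Finset (V → Fin q) := univ.filter fun σ => IsProperColoring G σ

lemma mem_col : σ ∈ col G q ↔ ∀ u v, G.Adj u v → σ u ≠ σ v := by
  rw [col, mem_filter]
  simp [IsProperColoring]

lemma update_mem_col (hσ : σ ∈ col G q) {c : Fin q} (h : ∀ u, G.Adj v u → σ u ≠ c) :
    Function.update σ v c ∈ col G q := by
  rw [mem_col] at hσ ⊢
  intro a b hab
  by_cases ha : a = v
  · subst ha
    rw [Function.update_self, Function.update_of_ne hab.ne']
    exact (h b hab).symm
  · by_cases hb : b = v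
    · subst hb
      rw [Function.update_self, Function.update_of_ne ha]
      exact h a hab.symm
    · rw [Function.update_of_ne ha, Function.update_of_ne hb]
      exact hσ a b hab

/-- A colour distinct from `c` that is free at `v`. -/
lemma exists_free (hD : ∀ v, G.degree v ≤ D) (hq : D + 2 ≤ q) (σ : V → Fin q) (v : V)
    (c : Fin q) : ∃ d, d ≠ c ∧ ∀ u, G.Adj v u → σ u ≠ d := by
  have h : (insert c ((G.neighborFinset v).image σ)).card < (univ : Finset (Fin q)).card := by
    rw [card_univ, Fintype.card_fin]
    have h1 := card_insert_le c ((G.neighborFinset v).image σ)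
    have h2 := card_image_le (s := G.neighborFinset v) (f := σ)
    rw [SimpleGraph.card_neighborFinset_eq_degree] at h2
    have := hD v
    omega
  obtain ⟨d, _, hd⟩ := exists_mem_notMem_of_card_lt_card h
  simp only [mem_insert, mem_image, SimpleGraph.mem_neighborFinset, not_or, not_exists,
    not_and] at hd
  exact ⟨d, hd.1, hd.2⟩

/-- Any set of vertices can be recoloured so as to avoid a given colour. -/
lemma recolor (hD : ∀ v, G.degree v ≤ D) (hq : D + 2 ≤ q) (hσ : σ ∈ col G q) (c : Fin q)
    (W : Finset V) : ∃ y ∈ col G q, (∀ v, v ∉ W → y v = σ v) ∧ ∀ w ∈ W, y w ≠ c := by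
  induction W using Finset.induction_on with
  | empty => exact ⟨σ, hσ, fun _ _ => rfl, by simp⟩
  | insert w W _ ih =>
    obtain ⟨y, hy, h1, h2⟩ := ih
    obtain ⟨d, hdc, hd⟩ := exists_free hD hq y w c
    refine ⟨Function.update y w d, update_mem_col hy hd, fun v hv => ?_, fun x hx => ?_⟩
    · rw [mem_insert, not_or] at hv
      rw [Function.update_of_ne hv.1, h1 v hv.2]
    · by_cases hxw : x = w
      · rw [hxw, Function.update_self]; exact hdc
      · rw [Function.update_of_ne hxw]
        exact h2 x ((mem_insert.mp hx).resolve_left hxw)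

lemma card_bl_le (Om : Finset (V → Fin q)) (R : Finset V) (σ : V → Fin q) :
    (bl Om R σ).card ≤ q ^ R.card := by
  have h : (bl Om R σ).card ≤ (Fintype.piFinset fun v => if v ∈ R then univ else {σ v}).card := by
    refine card_le_card fun x hx => ?_
    rw [Fintype.mem_piFinset]
    intro v
    split_ifs with hv
    · exact mem_univ _
    · rw [mem_singleton]; exact (mem_bl.mp hx).2 v hv
  refine h.trans (le_of_eq ?_)
  rw [Fintype.card_piFinset]
  have : ∀ v : V, (if v ∈ R then (univ : Finset (Fin q)) else {σ v}).card
      = if v ∈ R then q else 1 := by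
    intro v; split_ifs <;> simp
  simp_rw [this]
  rw [prod_ite_mem, univ_inter, prod_const]

lemma card_nb_le (hD : ∀ v, G.degree v ≤ D) (R : Finset V) (v : V) : (nb G R v).card ≤ D := by
  refine le_trans (card_le_card fun u hu => ?_) (hD v)
  rw [SimpleGraph.mem_neighborFinset]
  exact (mem_nb.mp hu).2

/-- Colour `c` can be installed at `v`, changing only neighbours of `v` inside `R`, as soon as no
neighbour outside `R` uses it. -/
lemma install (hD : ∀ v, G.degree v ≤ D) (hq : D + 2 ≤ q) (hσ : σ ∈ col G q) (c : Fin q)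
    (hc : ∀ u, u ∉ R → G.Adj v u → σ u ≠ c) :
    ∃ y ∈ bl (col G q) (nb G R v) σ, Function.update y v c ∈ col G q := by
  obtain ⟨y, hy, h1, h2⟩ := recolor hD hq hσ c (nb G R v)
  refine ⟨y, mem_bl.mpr ⟨hy, h1⟩, update_mem_col hy fun u hu => ?_⟩
  by_cases huR : u ∈ nb G R v
  · exact h2 u huR
  · rw [h1 u huR]
    exact hc u (fun h => huR (mem_nb.mpr ⟨h, hu⟩)) hu

/-- Marginal lower bound for colourings: every colouring of a block yields, by recolouring only
`u` and its neighbours, one with the prescribed colour at `u`, and each colouring arises from at most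
`q ^ (D + 1)` others. -/
lemma low_col (hD : ∀ v, G.degree v ≤ D) (hq : D + 2 ≤ q) :
    Low (col G q) (1 / (q : ℝ) ^ (D + 1)) := by
  intro R σ hσ u hu τ hτ
  set S := (bl (col G q) R σ).filter fun x => x u = τ u with hS
  have hav : av (col G q) R (fun x => if x u = τ u then 1 else 0) σ
      = (S.card : ℝ) / ((bl (col G q) R σ).card : ℝ) := by
    rw [av, hS, sum_boole]
  have hex : ∀ x ∈ bl (col G q) R σ, ∃ y ∈ S, x ∈ bl (col G q) (insert u (nb G R u)) y := by
    intro x hx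
    rw [mem_bl] at hx hτ
    obtain ⟨y, hy, h2⟩ := install (R := R) (v := u) hD hq hx.1 (τ u) (fun w hw huw => by
      rw [hx.2 w hw, ← hτ.2 w hw]
      exact (mem_col.mp hτ.1 u w huw).symm)
    rw [mem_bl] at hy
    refine ⟨Function.update y u (τ u), ?_, ?_⟩
    · rw [hS, mem_filter, mem_bl]
      refine ⟨⟨h2, fun w hw => ?_⟩, Function.update_self ..⟩
      have hwu : w ≠ u := fun h => hw (h ▸ hu)
      rw [Function.update_of_ne hwu, hy.2 w (fun h => hw (mem_nb.mp h).1), hx.2 w hw]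
    · rw [mem_bl]
      refine ⟨hx.1, fun w hw => ?_⟩
      rw [mem_insert, not_or] at hw
      rw [Function.update_of_ne hw.1, hy.2 w hw.2]
  have hcard : (bl (col G q) R σ).card ≤ S.card * q ^ (D + 1) := by
    refine le_trans (card_le_card (t := S.biUnion fun y => bl (col G q) (insert u (nb G R u)) y)
      fun x hx => ?_) (card_biUnion_le_card_mul _ _ _ fun y _ => ?_)
    · obtain ⟨y, hy, h⟩ := hex x hx
      exact mem_biUnion.mpr ⟨y, hy, h⟩
    · refine (card_bl_le _ _ _).trans (Nat.pow_le_pow_right (by omega) ?_)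
      exact (card_insert_le _ _).trans (Nat.add_le_add_right (card_nb_le hD R u) 1)
  have hcard' : ((bl (col G q) R σ).card : ℝ) ≤ S.card * (q : ℝ) ^ (D + 1) := by
    exact_mod_cast hcard
  have hq0 : (0 : ℝ) < q := by
    have : 0 < q := by omega
    exact_mod_cast this
  rw [hav, div_le_div_iff₀ (by positivity) (card_bl_pos hσ)]
  linarith

/-- Lists induced on a block by the boundary condition `σ`. -/
def bdry (G : SimpleGraph V) [DecidableRel G.Adj] (R : Finset V) (σ : V → Fin q) (v : V) :
    Finset (Fin q) :=
  if v ∈ R then univ.filter (fun c => ∀ w, w ∉ R → G.Adj v w → σ w ≠ c) else {σ v}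

/-- A block of proper colourings is a set of list colourings. -/
lemma bl_col_eq (hσ : σ ∈ col G q) : bl (col G q) R σ = lc G R (bdry G R σ) := by
  ext x
  rw [mem_bl, mem_lc, mem_col]
  rw [mem_col] at hσ
  constructor
  · rintro ⟨h1, h2⟩
    refine ⟨fun v => ?_, fun a _ b _ => h1 a b⟩
    unfold bdry
    split_ifs with hv
    · rw [mem_filter]
      refine ⟨mem_univ _, fun w hw hvw => ?_⟩
      rw [← h2 w hw]
      exact (h1 v w hvw).symm
    · rw [mem_singleton, h2 v hv]
  · rintro ⟨h1, h2⟩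
    have h3 : ∀ v, v ∉ R → x v = σ v := by
      intro v hv
      have := h1 v
      rwa [bdry, if_neg hv, mem_singleton] at this
    have h4 : ∀ v ∈ R, ∀ w, w ∉ R → G.Adj v w → x w ≠ x v := by
      intro v hv w hw hvw
      have := h1 v
      rw [bdry, if_pos hv, mem_filter] at this
      rw [h3 w hw]
      exact this.2 w hw hvw
    refine ⟨fun a b hab => ?_, h3⟩
    by_cases ha : a ∈ R <;> by_cases hb : b ∈ R
    · exact h2 a ha b hb hab
    · exact (h4 a ha b hb hab).symm
    · exact h4 b hb a ha hab.symm
    · rw [h3 a ha, h3 b hb]; exact hσ a b hab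

lemma valid_bdry (hD : ∀ v, G.degree v ≤ D) (hq : D + 1 ≤ q) :
    Valid G (q - D) R (bdry G R σ) := by
  have key : ∀ v ∈ R, (nb G R v).card + (q - D) ≤ (bdry G R σ v).card := by
    intro v hv
    have h1 : (univ : Finset (Fin q)) ⊆ bdry G R σ v ∪ ((G.neighborFinset v \ R).image σ) := by
      intro c _
      rw [mem_union, bdry, if_pos hv, mem_filter]
      by_contra h
      rw [not_or] at h
      apply h.1
      refine ⟨mem_univ _, fun w hw hvw hc => h.2 ?_⟩
      exact mem_image.mpr ⟨w, mem_sdiff.mpr ⟨(G.mem_neighborFinset v w).mpr hvw, hw⟩, hc⟩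
    have h2 := (card_le_card h1).trans (card_union_le _ _)
    rw [card_univ, Fintype.card_fin] at h2
    have h3 := card_image_le (s := G.neighborFinset v \ R) (f := σ)
    have h4 : (G.neighborFinset v \ R).card + (nb G R v).card = G.degree v := by
      have h5 : nb G R v = G.neighborFinset v ∩ R := by
        ext w
        simp [mem_nb, and_comm]
      rw [h5, card_sdiff_add_card_inter, SimpleGraph.card_neighborFinset_eq_degree]
    have := hD v
    omega
  refine ⟨fun v => ?_, key⟩
  by_cases hv : v ∈ R
  · rw [← card_pos]
    have := key v hv
    omega
  · rw [bdry, if_neg hv]; exact singleton_nonempty _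

/-- The influence recursion applied to blocks of proper colourings. -/
lemma pairBd_col {κ : ℝ} (hD : ∀ v, G.degree v ≤ D) (hq : D + 1 ≤ q) (hκ : κ < 1)
    (hM : MargBound G q D (q - D) κ) : PairBd (col G q) (D * (2 / (1 - κ))) := by
  intro R σ hσ u hu τ hτ τ' hτ' t ht
  have hs : 1 ≤ q - D := by omega
  have hbl : ∀ ρ ∈ bl (col G q) R σ, av (col G q) (R.erase u) (obs t (R.erase u)) ρ
      = mean G (R.erase u) (pin G R (bdry G R σ) u (ρ u)) (obs t (R.erase u)) := by
    intro ρ hρ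
    have h1 : bl (col G q) (R.erase u) ρ
        = lc G (R.erase u) (pin G R (bdry G R σ) u (ρ u)) := by
      rw [← lc_filter_eq_pin hu, ← bl_col_eq hσ]
      · ext x; rw [mem_bl_erase hρ, mem_filter]
      · rw [bl_col_eq hσ] at hρ
        exact (mem_lc.mp hρ).1 u
    rw [av, mean, h1]
  rw [hbl τ hτ, hbl τ' hτ']
  have hB := step_bound hs hκ (fun R u => card_nb_le hD R u) hM _ (R.erase u) rfl
  refine (pair_bound hs (card_nb_le hD R) hu hB (valid_bdry hD hq) (τ u) (τ' u) ht).trans ?_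
  refine mul_le_mul_of_nonneg_right ?_ (by have := sub_pos.mpr hκ; positivity)
  exact_mod_cast card_nb_le hD R u

end Colorings

/-! ### From local inequalities to random blocks -/

section Bernoulli

variable {V : Type} [Fintype V] [DecidableEq V] {g h : Finset V → ℝ} {R : Finset V}

/-- Total first difference of a set function. -/
def dif (g : Finset V → ℝ) (R : Finset V) : ℝ := ∑ u ∈ R, (g R - g (R.erase u))

lemma nonneg_of_dif (h0 : h ∅ = 0) (hd : ∀ R, 0 ≤ dif h R) : ∀ (n : ℕ) (R : Finset V),
    R.card = n → 0 ≤ h R := by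
  intro n
  induction n with
  | zero => intro R hR; rw [card_eq_zero] at hR; rw [hR, h0]
  | succ n ih =>
    intro R hR
    have h1 := hd R
    rw [dif, sum_sub_distrib, sum_const, nsmul_eq_mul] at h1
    have h2 : 0 ≤ ∑ u ∈ R, h (R.erase u) := sum_nonneg fun u hu =>
      ih _ (by rw [card_erase_of_mem hu, hR]; rfl)
    have h3 : (0 : ℝ) < R.card := by rw [hR]; positivity
    by_contra hneg
    have := mul_neg_of_pos_of_neg h3 (not_le.mp hneg)
    linarith

/-- Iterating the first difference produces the second differences; each `u` contributes its own
first difference once more. -/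
lemma dif_dif : dif (dif g) R = dif g R + ∑ u ∈ R, ∑ v ∈ R.erase u,
    (g R - g (R.erase u) - g (R.erase v) + g ((R.erase u).erase v)) := by
  conv_lhs => rw [dif]
  conv_rhs => rw [dif]
  rw [← sum_add_distrib]
  refine sum_congr rfl fun u hu => ?_
  rw [dif, dif, ← add_sum_erase R _ hu, add_sub_assoc, ← sum_sub_distrib]
  congr 1
  exact sum_congr rfl fun v _ => by ring

/-- If the second differences are controlled by the first ones, the first differences are
controlled by the function. -/
lemma dif_le {K : ℝ} (hg0 : g ∅ = 0)
    (hK : ∀ R : Finset V, ∑ u ∈ R, ∑ v ∈ R.erase u,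
      (g R - g (R.erase u) - g (R.erase v) + g ((R.erase u).erase v)) ≤ K * dif g R) :
    dif g R ≤ (K + 1) * g R := by
  have h1 := nonneg_of_dif (h := fun R => (K + 1) * g R - dif g R)
    (by simp [hg0, dif]) (fun R => by
      have : dif (fun R => (K + 1) * g R - dif g R) R = (K + 1) * dif g R - dif (dif g) R := by
        simp only [dif, mul_sum]
        rw [← sum_sub_distrib]
        exact sum_congr rfl fun u _ => by ring
      rw [this, dif_dif]
      linarith [hK R]) _ R rfl
  linarith

/-- Mean of `g` over a random set containing each vertex independently with probability `θ`. -/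
def bern (g : Finset V → ℝ) (θ : ℝ) : ℝ := ∑ R, θ ^ R.card * (1 - θ) ^ Rᶜ.card * g R

/-- Russo's formula: the derivative of the mean over random sets of density `θ` is the mean total
first difference divided by `θ`. -/
lemma bern_hasDeriv (g : Finset V → ℝ) {θ : ℝ} (hθ : θ ≠ 0) :
    HasDerivAt (bern g) (bern (dif g) θ / θ) θ := by
  have h1 : HasDerivAt (bern g) (∑ R : Finset V,
      (((R.card : ℕ) : ℝ) * θ ^ (R.card - 1) * (1 - θ) ^ Rᶜ.card
        + θ ^ R.card * ((Rᶜ.card : ℝ) * (1 - θ) ^ (Rᶜ.card - 1) * (-1))) * g R) θ := by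
    unfold bern
    refine HasDerivAt.fun_sum fun R _ => HasDerivAt.mul_const ?_ _
    refine HasDerivAt.fun_mul (hasDerivAt_pow _ _) ?_
    have := ((hasDerivAt_id θ).const_sub 1).fun_pow Rᶜ.card
    simpa using this
  convert h1 using 1
  rw [div_eq_iff hθ, sum_mul]
  have h2 : ∑ R : Finset V, ∑ u ∈ Rᶜ, θ ^ (R.card + 1) * (1 - θ) ^ (Rᶜ.card - 1) * g R
      = ∑ R : Finset V, ∑ u ∈ R, θ ^ R.card * (1 - θ) ^ Rᶜ.card * g (R.erase u) := by
    rw [sum_sigma', sum_sigma']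
    refine sum_nbij' (fun x => ⟨insert x.2 x.1, x.2⟩) (fun x => ⟨x.1.erase x.2, x.2⟩)
      ?_ ?_ ?_ ?_ ?_
    · rintro ⟨R, u⟩ hx; simp
    · rintro ⟨R, u⟩ hx; simp
    · rintro ⟨R, u⟩ hx
      simp only [mem_sigma, mem_univ, mem_compl, true_and] at hx
      simp [erase_insert hx]
    · rintro ⟨R, u⟩ hx
      simp only [mem_sigma, mem_univ, true_and] at hx
      simp [insert_erase hx]
    · rintro ⟨R, u⟩ hx
      simp only [mem_sigma, mem_univ, mem_compl, true_and] at hx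
      rw [card_insert_of_notMem hx, erase_insert hx, compl_insert,
        card_erase_of_mem (mem_compl.mpr hx)]
  have h3 : ∑ R : Finset V, θ ^ R.card * ((Rᶜ.card : ℝ) * (1 - θ) ^ (Rᶜ.card - 1)) * g R * θ
      = ∑ R : Finset V, ∑ u ∈ R, θ ^ R.card * (1 - θ) ^ Rᶜ.card * g (R.erase u) := by
    rw [← h2]
    refine sum_congr rfl fun R _ => ?_
    rw [sum_const, nsmul_eq_mul]
    ring
  have h4 : ∀ R : Finset V,
      (((R.card : ℕ) : ℝ) * θ ^ (R.card - 1) * (1 - θ) ^ Rᶜ.card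
        + θ ^ R.card * ((Rᶜ.card : ℝ) * (1 - θ) ^ (Rᶜ.card - 1) * (-1))) * g R * θ
      = R.card * (θ ^ R.card * (1 - θ) ^ Rᶜ.card * g R)
        - θ ^ R.card * ((Rᶜ.card : ℝ) * (1 - θ) ^ (Rᶜ.card - 1)) * g R * θ := by
    intro R
    have : (R.card : ℝ) * θ ^ (R.card - 1) * θ = R.card * θ ^ R.card := by
      rcases Nat.eq_zero_or_pos R.card with h | h
      · simp [h]
      · rw [mul_assoc, ← pow_succ, Nat.sub_add_cancel h]
    linear_combination (1 - θ) ^ Rᶜ.card * g R * this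
  rw [sum_congr rfl fun R _ => h4 R, sum_sub_distrib, h3, ← sum_sub_distrib]
  unfold bern
  refine sum_congr rfl fun R _ => ?_
  rw [dif, mul_sum]
  simp only [mul_sub, sum_sub_distrib, sum_const, nsmul_eq_mul]

lemma bern_one : bern g 1 = g univ := by
  unfold bern
  rw [sum_eq_single univ]
  · simp
  · intro R _ hR
    have : Rᶜ.card ≠ 0 := by
      rw [Ne, card_eq_zero, compl_eq_empty_iff]
      exact hR
    simp [this]
  · simp

/-- A random block keeps a fraction `θ ^ N` of the global quantity: by Russo's formula
`bern g t / t ^ N` is nonincreasing in `t`. -/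
lemma bern_ge {N : ℕ} (hd : ∀ R, dif g R ≤ N * g R) {θ : ℝ} (h0 : 0 < θ) (h1 : θ ≤ 1) :
    θ ^ N * g univ ≤ bern g θ := by
  have hanti : AntitoneOn (fun t => bern g t / t ^ N) (Set.Icc θ 1) := by
    have hder : ∀ t ∈ Set.Icc θ 1, HasDerivAt (fun t => bern g t / t ^ N)
        ((bern (dif g) t / t * t ^ N - bern g t * (N * t ^ (N - 1))) / (t ^ N) ^ 2) t := by
      intro t ht
      have ht0 : t ≠ 0 := (h0.trans_le ht.1).ne'
      exact (bern_hasDeriv g ht0).fun_div (hasDerivAt_pow N t) (pow_ne_zero _ ht0)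
    refine antitoneOn_of_deriv_nonpos (convex_Icc _ _)
      (fun t ht => (hder t ht).continuousAt.continuousWithinAt)
      (fun t ht => (hder t (interior_subset ht)).differentiableAt.differentiableWithinAt) ?_
    intro t ht
    have ht' := interior_subset ht
    rw [(hder t ht').deriv]
    have ht0 : 0 < t := h0.trans_le ht'.1
    refine div_nonpos_of_nonpos_of_nonneg ?_ (by positivity)
    have h2 : bern (dif g) t ≤ N * bern g t := by
      unfold bern
      rw [mul_sum]
      refine sum_le_sum fun R _ => ?_
      have : 0 ≤ t ^ R.card * (1 - t) ^ Rᶜ.card :=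
        mul_nonneg (pow_nonneg ht0.le _) (pow_nonneg (by linarith [ht'.2]) _)
      nlinarith [mul_le_mul_of_nonneg_left (hd R) this]
    have h3 : (N : ℝ) * t ^ (N - 1) = N * (t ^ N / t) := by
      rcases Nat.eq_zero_or_pos N with h | h
      · simp [h]
      · congr 1
        rw [eq_div_iff ht0.ne', ← pow_succ, Nat.sub_add_cancel h]
    rw [h3]
    have h4 : bern (dif g) t / t * t ^ N - bern g t * (N * (t ^ N / t))
        = (bern (dif g) t - N * bern g t) * (t ^ N / t) := by ring
    rw [h4]
    exact mul_nonpos_of_nonpos_of_nonneg (by linarith) (by positivity)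
  have h5 := hanti (Set.left_mem_Icc.mpr h1) (Set.right_mem_Icc.mpr h1) h1
  simp only [one_pow, div_one, bern_one] at h5
  rw [le_div_iff₀ (by positivity)] at h5
  linarith

/-- A random set contains `U` with probability `θ ^ |U|`. -/
lemma bern_indicator (U : Finset V) (θ : ℝ) :
    bern (fun R => if U ⊆ R then 1 else 0) θ = θ ^ U.card := by
  have h1 : ∏ v : V, (θ + if v ∈ U then 0 else 1 - θ) = θ ^ U.card := by
    have : ∀ v : V, (θ + if v ∈ U then 0 else 1 - θ) = if v ∈ U then θ else 1 := by
      intro v; split_ifs <;> ring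
    simp_rw [this]
    rw [prod_ite_mem, univ_inter, prod_const]
  rw [← h1, Fintype.prod_add]
  unfold bern
  refine sum_congr rfl fun R _ => ?_
  rw [prod_const, mul_assoc]
  congr 1
  by_cases hU : U ⊆ R
  · beta_reduce
    rw [if_pos hU, mul_one, ← prod_const]
    refine prod_congr rfl fun v hv => ?_
    rw [if_neg fun h => (mem_compl.mp hv) (hU h)]
  · beta_reduce
    rw [if_neg hU, mul_zero]
    obtain ⟨v, hv, hvR⟩ := not_subset.mp hU
    exact (prod_eq_zero (mem_compl.mpr hvR) (by simp [hv])).symm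

lemma bern_mono {θ : ℝ} (h0 : 0 ≤ θ) (h1 : θ ≤ 1) (hgh : ∀ R, g R ≤ h R) :
    bern g θ ≤ bern h θ :=
  sum_le_sum fun R _ => mul_le_mul_of_nonneg_left (hgh R)
    (mul_nonneg (pow_nonneg h0 _) (pow_nonneg (by linarith) _))

end Bernoulli

/-! ### Hellinger lower bound for the entropy -/

section Hellinger

variable {V α : Type} [Fintype V] [DecidableEq V] [DecidableEq α]
variable {Om : Finset (V → α)} {R : Finset V} {σ τ : V → α} {f g : (V → α) → ℝ}

/-- Relative entropy dominates the squared Hellinger distance. -/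
lemma hell_le (hf : ∀ σ ∈ Om, 0 < f σ) :
    ∑ σ ∈ Om, (√(f σ) - √(av Om R f σ)) ^ 2 ≤ ent Om f R := by
  have h1 : ∀ σ ∈ Om, (√(f σ) - √(av Om R f σ)) ^ 2 - av Om R f σ + f σ
      ≤ f σ * (Real.log (f σ) - Real.log (av Om R f σ)) := by
    intro σ hσ
    have ha := hf σ hσ
    have hb := av_pos (R := R) hσ hf
    have h := mul_log_sub_ge (Real.sqrt_pos.mpr ha) (Real.sqrt_pos.mpr hb)
    rw [Real.log_sqrt ha.le, Real.log_sqrt hb.le] at h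
    have h2 := mul_le_mul_of_nonneg_left h (Real.sqrt_nonneg (f σ))
    have h3 := Real.mul_self_sqrt ha.le
    have h4 := Real.mul_self_sqrt hb.le
    have h5 : √(f σ) * (√(f σ) * (Real.log (f σ) / 2 - Real.log (av Om R f σ) / 2))
        = f σ * (Real.log (f σ) - Real.log (av Om R f σ)) / 2 := by
      rw [← mul_assoc, h3]; ring
    rw [h5] at h2
    nlinarith
  have h := sum_le_sum h1
  rw [sum_add_distrib, sum_sub_distrib, sum_av'] at h
  unfold ent
  linarith

end Hellinger

/-! ### A crude entropy bound for small blocks of colourings -/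

section Crude

variable {V : Type} [Fintype V] [DecidableEq V] {G : SimpleGraph V} [DecidableRel G.Adj] {q : ℕ}
variable {R : Finset V} {σ τ : V → Fin q} {u v : V} {D : ℕ} {f g : (V → Fin q) → ℝ}

/-- Unnormalised single-site Dirichlet energy. -/
def nrg (G : SimpleGraph V) [DecidableRel G.Adj] (g : (V → Fin q) → ℝ) (v : V)
    (ρ : V → Fin q) : ℝ := ∑ ρ' ∈ bl (col G q) {v} ρ, (g ρ - g ρ') ^ 2

lemma nrg_nonneg (ρ : V → Fin q) : 0 ≤ nrg G g v ρ := sum_nonneg fun _ _ => sq_nonneg _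

/-- Any two colourings of a block are joined by a path of single-site recolourings inside the
block, so the oscillation of `g` is controlled by its single-site energies. -/
lemma path_bound (hD : ∀ v, G.degree v ≤ D) (hq : D + 2 ≤ q) (R : Finset V) :
    ∀ σ ∈ col G q, ∀ τ ∈ bl (col G q) R σ,
      (g σ - g τ) ^ 2 ≤ 9 ^ R.card * ∑ v ∈ R, ∑ ρ ∈ bl (col G q) R σ, nrg G g v ρ := by
  induction R using Finset.induction_on with
  | empty =>
    intro σ hσ τ hτ
    rw [bl_empty hσ, mem_singleton] at hτ
    simp [hτ]
  | insert v R hv ih =>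
    intro σ hσ τ hτ
    have hτ' := mem_bl.mp hτ
    -- `σ → σ₁` inside `R` to make room, `σ₁ → σ₂` at `v`, and `σ₂ → τ` inside `R`
    obtain ⟨σ₁, h1, h2⟩ := install (R := R) (v := v) hD hq hσ (τ v) (fun u hu hvu => by
      have : u ∉ insert v R := by simp [hu, hvu.ne']
      rw [← hτ'.2 u this]
      exact (mem_col.mp hτ'.1 v u hvu).symm)
    set σ₂ := Function.update σ₁ v (τ v) with hσ₂
    have h3 : σ₁ ∈ bl (col G q) R σ := by
      refine bl_mono ?_ h1
      exact filter_subset _ _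
    have h4 : σ₂ ∈ bl (col G q) {v} σ₁ := by
      rw [mem_bl]
      refine ⟨h2, fun w hw => ?_⟩
      rw [mem_singleton] at hw
      rw [hσ₂, Function.update_of_ne hw]
    have h5 : τ ∈ bl (col G q) R σ₂ := by
      rw [mem_bl]
      refine ⟨hτ'.1, fun w hw => ?_⟩
      by_cases hwv : w = v
      · rw [hwv, hσ₂, Function.update_self]
      · rw [hσ₂, Function.update_of_ne hwv, (mem_bl.mp h3).2 w hw]
        exact hτ'.2 w (by simp [hw, hwv])
    have hsub : R ⊆ insert v R := subset_insert v R
    have h6 : σ₁ ∈ bl (col G q) (insert v R) σ := bl_mono hsub h3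
    have h7 : σ₂ ∈ bl (col G q) (insert v R) σ := by
      rw [← bl_eq_of_mem h6]
      exact bl_mono (by simp) h4
    set S := ∑ w ∈ insert v R, ∑ ρ ∈ bl (col G q) (insert v R) σ, nrg G g w ρ with hS
    have hS0 : ∀ σ' ∈ bl (col G q) (insert v R) σ,
        ∑ w ∈ R, ∑ ρ ∈ bl (col G q) R σ', nrg G g w ρ ≤ S := by
      intro σ' hσ'
      have hb := bl_eq_of_mem hσ'
      rw [hS, ← hb]
      refine (sum_le_sum fun w _ => sum_le_sum_of_subset_of_nonneg (bl_mono hsub)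
        fun ρ _ _ => nrg_nonneg ρ).trans ?_
      exact sum_le_sum_of_subset_of_nonneg hsub fun w _ _ => sum_nonneg fun ρ _ => nrg_nonneg ρ
    have e1 := ih σ hσ σ₁ h3
    have e3 := ih σ₂ h2 τ h5
    have e2 : (g σ₁ - g σ₂) ^ 2 ≤ S := by
      calc _ ≤ nrg G g v σ₁ :=
            single_le_sum (f := fun ρ' => (g σ₁ - g ρ') ^ 2) (fun _ _ => sq_nonneg _) h4
        _ ≤ ∑ ρ ∈ bl (col G q) (insert v R) σ, nrg G g v ρ :=
            single_le_sum (f := fun ρ => nrg G g v ρ) (fun ρ _ => nrg_nonneg ρ) h6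
        _ ≤ S := single_le_sum (f := fun w => ∑ ρ ∈ bl (col G q) (insert v R) σ, nrg G g w ρ)
            (fun w _ => sum_nonneg fun ρ _ => nrg_nonneg ρ) (mem_insert_self v R)
    have p9 : (1 : ℝ) ≤ 9 ^ R.card := one_le_pow₀ (by norm_num)
    have m1 := mul_le_mul_of_nonneg_left (hS0 σ (self_mem_bl hσ)) (by linarith : (0:ℝ) ≤ 9 ^ R.card)
    have m3 := mul_le_mul_of_nonneg_left (hS0 σ₂ h7) (by linarith : (0:ℝ) ≤ 9 ^ R.card)
    have hSn : 0 ≤ S := (sq_nonneg _).trans e2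
    have m2 := mul_le_mul_of_nonneg_right p9 hSn
    rw [card_insert_of_notMem hv, pow_succ (9 : ℝ)]
    have htri : (g σ - g τ) ^ 2 ≤ 3 * ((g σ - g σ₁) ^ 2 + (g σ₁ - g σ₂) ^ 2 + (g σ₂ - g τ) ^ 2) := by
      nlinarith [sq_nonneg ((g σ - g σ₁) - (g σ₁ - g σ₂)), sq_nonneg ((g σ₁ - g σ₂) - (g σ₂ - g τ)),
        sq_nonneg ((g σ - g σ₁) - (g σ₂ - g τ))]
    linarith

/-- The average entropy of `f` in a block is at most twice the squared oscillation of `√f`. -/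
lemma block_ent_le {Om : Finset (V → Fin q)} (hf : ∀ σ ∈ Om, 0 < f σ) (hσ : σ ∈ Om) {M : ℝ}
    (hM : ∀ τ ∈ bl Om R σ, ∀ ρ ∈ bl Om R σ, (√(f τ) - √(f ρ)) ^ 2 ≤ M) :
    av Om R (fun τ => f τ * (Real.log (f τ) - Real.log (av Om R f τ))) σ ≤ 2 * M := by
  set F := av Om R f σ with hF
  have hF0 : 0 < F := av_pos hσ hf
  set N := ((bl Om R σ).card : ℝ) with hN
  have hN0 : 0 < N := card_bl_pos hσ
  have hsum : ∑ τ ∈ bl Om R σ, f τ = N * F := (card_mul_av hσ).symm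
  have h1 : ∀ τ ∈ bl Om R σ, f τ * (Real.log (f τ) - Real.log (av Om R f τ))
      ≤ (f τ ^ 2 - F * f τ) / F := by
    intro τ hτ
    rw [av_congr_mem hτ, ← hF]
    have hp := hf τ (bl_subset hτ)
    have := mul_log_sub_ge hF0 hp
    rw [le_div_iff₀ hF0]
    nlinarith [mul_le_mul_of_nonneg_left this hp.le]
  have h2 : ∑ τ ∈ bl Om R σ, ∑ ρ ∈ bl Om R σ, (f τ - f ρ) ^ 2
      = 2 * N * (∑ τ ∈ bl Om R σ, f τ ^ 2 - N * F ^ 2) := by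
    have : ∀ τ ∈ bl Om R σ, ∑ ρ ∈ bl Om R σ, (f τ - f ρ) ^ 2
        = N * f τ ^ 2 + ∑ ρ ∈ bl Om R σ, f ρ ^ 2 - 2 * (N * F) * f τ := by
      intro τ _
      have : ∀ ρ ∈ bl Om R σ, (f τ - f ρ) ^ 2 = f τ ^ 2 + f ρ ^ 2 - 2 * f τ * f ρ :=
        fun ρ _ => by ring
      rw [sum_congr rfl this, sum_sub_distrib, sum_add_distrib, ← mul_sum, hsum, sum_const,
        nsmul_eq_mul]
      ring
    rw [sum_congr rfl this, sum_sub_distrib, sum_add_distrib, ← mul_sum, ← mul_sum, hsum,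
      sum_const, nsmul_eq_mul]
    ring
  have h3 : ∑ τ ∈ bl Om R σ, ∑ ρ ∈ bl Om R σ, (f τ - f ρ) ^ 2 ≤ 4 * M * N ^ 2 * F := by
    have h4 : ∀ τ ∈ bl Om R σ, ∀ ρ ∈ bl Om R σ, (f τ - f ρ) ^ 2 ≤ 2 * M * (f τ + f ρ) := by
      intro τ hτ ρ hρ
      have a1 := Real.mul_self_sqrt (hf τ (bl_subset hτ)).le
      have a2 := Real.mul_self_sqrt (hf ρ (bl_subset hρ)).le
      have h5 : (√(f τ) + √(f ρ)) ^ 2 ≤ 2 * (f τ + f ρ) := by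
        nlinarith [sq_nonneg (√(f τ) - √(f ρ))]
      have h6 : f τ - f ρ = (√(f τ) - √(f ρ)) * (√(f τ) + √(f ρ)) := by nlinarith
      rw [h6, mul_pow]
      calc _ ≤ M * (2 * (f τ + f ρ)) := mul_le_mul (hM τ hτ ρ hρ) h5 (sq_nonneg _)
              ((sq_nonneg _).trans (hM τ hτ ρ hρ))
        _ = _ := by ring
    refine (sum_le_sum fun τ hτ => sum_le_sum fun ρ hρ => h4 τ hτ ρ hρ).trans (le_of_eq ?_)
    simp_rw [← mul_sum, sum_add_distrib, hsum, sum_const, nsmul_eq_mul, ← mul_sum, hsum]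
    ring
  rw [av, div_le_iff₀ hN0]
  refine (sum_le_sum h1).trans ?_
  rw [← sum_div, sum_sub_distrib, ← mul_sum, hsum, div_le_iff₀ hF0]
  rw [h2] at h3
  have h7 : 2 * N * (∑ τ ∈ bl Om R σ, f τ ^ 2 - N * F ^ 2) ≤ 2 * N * (2 * M * N * F) := by
    linarith
  have h8 := le_of_mul_le_mul_left h7 (by positivity)
  linarith

/-- The single-site energy of `√f` is controlled by the single-site entropy of `f`. -/
lemma sum_nrg_le (hf : ∀ σ ∈ col G q, 0 < f σ) (v : V) :
    ∑ ρ ∈ col G q, nrg G (fun x => √(f x)) v ρ ≤ 4 * q * ent (col G q) f {v} := by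
  have h1 : ∀ ρ ∈ col G q, nrg G (fun x => √(f x)) v ρ
      ≤ 2 * q * (√(f ρ) - √(av (col G q) {v} f ρ)) ^ 2
        + ∑ ρ' ∈ bl (col G q) {v} ρ, 2 * (√(f ρ') - √(av (col G q) {v} f ρ')) ^ 2 := by
    intro ρ hρ
    have h2 : ∀ ρ' ∈ bl (col G q) {v} ρ, (√(f ρ) - √(f ρ')) ^ 2
        ≤ 2 * (√(f ρ) - √(av (col G q) {v} f ρ)) ^ 2
          + 2 * (√(f ρ') - √(av (col G q) {v} f ρ')) ^ 2 := by
      intro ρ' hρ'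
      rw [av_congr_mem hρ']
      nlinarith [sq_nonneg ((√(f ρ) - √(av (col G q) {v} f ρ))
        + (√(f ρ') - √(av (col G q) {v} f ρ)))]
    refine (sum_le_sum h2).trans ?_
    rw [sum_add_distrib, sum_const, nsmul_eq_mul]
    have h3 : ((bl (col G q) {v} ρ).card : ℝ) ≤ q := by
      have := card_bl_le (col G q) {v} ρ
      rw [card_singleton, pow_one] at this
      exact_mod_cast this
    nlinarith [mul_le_mul_of_nonneg_right h3 (sq_nonneg (√(f ρ) - √(av (col G q) {v} f ρ)))]
  refine (sum_le_sum h1).trans ?_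
  have h4 : ∀ h : (V → Fin q) → ℝ, (∀ ρ ∈ col G q, 0 ≤ h ρ) →
      ∑ ρ ∈ col G q, ∑ ρ' ∈ bl (col G q) {v} ρ, h ρ' ≤ q * ∑ ρ ∈ col G q, h ρ := by
    intro h hh
    rcases (col G q).eq_empty_or_nonempty with he | ⟨σ, hσ⟩
    · simp [he]
    have := sum_bl_comm (Om := col G q) (σ := σ) (subset_univ {v}) (fun _ ρ => h ρ)
    rw [bl_univ] at this
    rw [this, mul_sum]
    refine sum_le_sum fun ρ hρ => ?_
    rw [sum_const, nsmul_eq_mul]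
    refine mul_le_mul_of_nonneg_right ?_ (hh ρ hρ)
    have := card_bl_le (col G q) {v} ρ
    rw [card_singleton, pow_one] at this
    exact_mod_cast this
  rw [sum_add_distrib, ← mul_sum]
  have h5 := h4 (fun ρ => 2 * (√(f ρ) - √(av (col G q) {v} f ρ)) ^ 2)
    (fun ρ _ => by positivity)
  rw [← mul_sum] at h5
  have h6 := hell_le (R := {v}) hf
  have h7 := mul_le_mul_of_nonneg_left h6 (by positivity : (0:ℝ) ≤ 4 * q)
  linarith

/-- Crude factorisation of entropy, exponential in the size of the block. -/
lemma crude (hD : ∀ v, G.degree v ≤ D) (hq : D + 2 ≤ q) (hf : ∀ σ ∈ col G q, 0 < f σ)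
    (R : Finset V) :
    ent (col G q) f R ≤ (72 * (q : ℝ) ^ 2) ^ R.card * ∑ v ∈ R, ent (col G q) f {v} := by
  rcases R.eq_empty_or_nonempty with hR | hR
  · rw [hR, ent_empty]; simp
  have hq1 : (1 : ℝ) ≤ q := by exact_mod_cast (by omega : 1 ≤ q)
  have h1 : ent (col G q) f R ≤ ∑ σ ∈ col G q, 2 * (9 ^ R.card *
      ∑ v ∈ R, ∑ ρ ∈ bl (col G q) R σ, nrg G (fun x => √(f x)) v ρ) := by
    rw [ent, ← sum_av' (R' := R)]
    refine sum_le_sum fun σ hσ => block_ent_le hf hσ fun τ hτ ρ hρ => ?_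
    have := path_bound (g := fun x => √(f x)) hD hq R τ (bl_subset hτ) ρ
      (by rwa [bl_eq_of_mem hτ])
    rwa [bl_eq_of_mem hτ] at this
  have h2 : ∀ v ∈ R, ∑ σ ∈ col G q, ∑ ρ ∈ bl (col G q) R σ, nrg G (fun x => √(f x)) v ρ
      ≤ (q : ℝ) ^ R.card * (4 * q * ent (col G q) f {v}) := by
    intro v _
    rcases (col G q).eq_empty_or_nonempty with he | ⟨σ, hσ⟩
    · simp [he, ent]
    have := sum_bl_comm (Om := col G q) (σ := σ) (subset_univ R)
      (fun _ ρ => nrg G (fun x => √(f x)) v ρ)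
    rw [bl_univ] at this
    rw [this]
    refine le_trans ?_ (mul_le_mul_of_nonneg_left (sum_nrg_le hf v) (by positivity))
    rw [mul_sum]
    refine sum_le_sum fun ρ hρ => ?_
    rw [sum_const, nsmul_eq_mul]
    refine mul_le_mul_of_nonneg_right ?_ (nrg_nonneg ρ)
    exact_mod_cast card_bl_le (col G q) R ρ
  have h3 : ∑ σ ∈ col G q, 2 * (9 ^ R.card *
      ∑ v ∈ R, ∑ ρ ∈ bl (col G q) R σ, nrg G (fun x => √(f x)) v ρ)
      = 2 * (9 ^ R.card * ∑ v ∈ R, ∑ σ ∈ col G q, ∑ ρ ∈ bl (col G q) R σ,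
        nrg G (fun x => √(f x)) v ρ) := by
    rw [← mul_sum, ← mul_sum, sum_comm]
  rw [h3] at h1
  have h4 : 2 * (9 ^ R.card * ∑ v ∈ R, ∑ σ ∈ col G q, ∑ ρ ∈ bl (col G q) R σ,
        nrg G (fun x => √(f x)) v ρ)
      ≤ 2 * (9 ^ R.card * ∑ v ∈ R, (q : ℝ) ^ R.card * (4 * q * ent (col G q) f {v})) := by
    gcongr with v hv
    exact h2 v hv
  refine (h1.trans h4).trans ?_
  simp_rw [← mul_sum]
  have h5 : 0 ≤ ∑ v ∈ R, ent (col G q) f {v} := sum_nonneg fun v _ => ent_nonneg hf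
  have h6 : (8 * q : ℝ) ≤ (8 * q) ^ R.card :=
    le_self_pow₀ (by linarith) (card_pos.mpr hR).ne'
  have h7 : (72 * (q : ℝ) ^ 2) ^ R.card = (8 * q) ^ R.card * (9 * q) ^ R.card := by
    rw [← mul_pow]; congr 1; ring
  rw [h7]
  have h8 := mul_le_mul_of_nonneg_right h6
    (mul_nonneg (by positivity : (0:ℝ) ≤ (9 * q) ^ R.card) h5)
  rw [mul_pow] at h8
  rw [mul_pow (9 : ℝ)]
  linarith

end Crude

/-! ### Factorisation over disconnected blocks -/

section Split

variable {V : Type} [Fintype V] [DecidableEq V] {G : SimpleGraph V} [DecidableRel G.Adj] {q : ℕ}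
variable {R U W : Finset V} {σ τ ρ : V → Fin q} {u v : V} {D : ℕ} {f g : (V → Fin q) → ℝ}

/-- The configuration equal to `ρ` on `W` and to `τ` off `W`. -/
def glue (W : Finset V) (ρ τ : V → Fin q) : V → Fin q := fun v => if v ∈ W then ρ v else τ v

lemma glue_mem (hadj : ∀ u ∈ U, ∀ w ∈ W, ¬ G.Adj u w)
    (hρ : ρ ∈ bl (col G q) (U ∪ W) σ) (hτ : τ ∈ bl (col G q) (U ∪ W) σ) :
    glue W ρ τ ∈ bl (col G q) (U ∪ W) σ := by
  rw [mem_bl] at *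
  refine ⟨?_, fun v hv => ?_⟩
  · have key : ∀ a b, G.Adj a b → a ∈ W → b ∉ W → τ b = ρ b := by
      intro a b hab ha hb
      have hbU : b ∉ U := fun h => hadj b h a ha hab.symm
      have : b ∉ U ∪ W := by simp [hb, hbU]
      rw [hτ.2 b this, hρ.2 b this]
    rw [mem_col]
    intro a b hab
    have h1 := mem_col.mp hρ.1 a b hab
    have h2 := mem_col.mp hτ.1 a b hab
    unfold glue
    by_cases ha : a ∈ W <;> by_cases hb : b ∈ W <;> simp only [ha, hb, if_true, if_false]
    · exact h1
    · rw [key a b hab ha hb]; exact h1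
    · rw [key b a hab.symm hb ha]; exact h1
    · exact h2
  · unfold glue
    have : v ∉ W := fun h => hv (mem_union_right _ h)
    simp only [this, if_false]
    exact hτ.2 v hv

lemma card_bl_split (hadj : ∀ u ∈ U, ∀ w ∈ W, ¬ G.Adj u w) (hσ : σ ∈ col G q)
    (hτ : τ ∈ bl (col G q) U σ) :
    (bl (col G q) W τ).card = (bl (col G q) W σ).card := by
  have hτ' : τ ∈ bl (col G q) (U ∪ W) σ := bl_mono subset_union_left hτ
  have hσ' : σ ∈ bl (col G q) (U ∪ W) σ := self_mem_bl hσ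
  have hm : ∀ ρ ∈ bl (col G q) W τ, ρ ∈ bl (col G q) (U ∪ W) σ := fun ρ hρ => by
    rw [← bl_eq_of_mem hτ']; exact bl_mono subset_union_right hρ
  have hm' : ∀ ρ ∈ bl (col G q) W σ, ρ ∈ bl (col G q) (U ∪ W) σ := fun ρ hρ =>
    bl_mono subset_union_right hρ
  refine card_bij' (fun ρ _ => glue W ρ σ) (fun ρ _ => glue W ρ τ) ?_ ?_ ?_ ?_
  · intro ρ hρ
    rw [mem_bl]
    refine ⟨bl_subset (glue_mem hadj (hm ρ hρ) hσ'), fun v hv => ?_⟩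
    simp [glue, hv]
  · intro ρ hρ
    rw [mem_bl]
    refine ⟨bl_subset (glue_mem hadj (hm' ρ hρ) hτ'), fun v hv => ?_⟩
    simp [glue, hv]
  · intro ρ hρ
    funext v
    have := (mem_bl.mp hρ).2 v
    by_cases hv : v ∈ W
    · simp [glue, hv]
    · simp [glue, hv, this hv]
  · intro ρ hρ
    funext v
    have := (mem_bl.mp hρ).2 v
    by_cases hv : v ∈ W
    · simp [glue, hv]
    · simp [glue, hv, this hv]

lemma sum_bl_split (hUW : Disjoint U W) (hadj : ∀ u ∈ U, ∀ w ∈ W, ¬ G.Adj u w)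
    (hσ : σ ∈ col G q) (f : (V → Fin q) → ℝ) :
    ∑ τ ∈ bl (col G q) U σ, ∑ ρ ∈ bl (col G q) W τ, f ρ
      = ∑ ρ ∈ bl (col G q) (U ∪ W) σ, f ρ := by
  have hσ' : σ ∈ bl (col G q) (U ∪ W) σ := self_mem_bl hσ
  have hmaps : ∀ ρ ∈ bl (col G q) (U ∪ W) σ, glue W σ ρ ∈ bl (col G q) U σ := by
    intro ρ hρ
    rw [mem_bl]
    refine ⟨bl_subset (glue_mem hadj hσ' hρ), fun v hv => ?_⟩
    by_cases hw : v ∈ W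
    · simp [glue, hw]
    · simp [glue, hw, (mem_bl.mp hρ).2 v (by simp [hv, hw])]
  rw [← sum_fiberwise_of_maps_to hmaps]
  refine sum_congr rfl fun τ hτ => sum_congr ?_ fun _ _ => rfl
  have hτ' : τ ∈ bl (col G q) (U ∪ W) σ := bl_mono subset_union_left hτ
  ext ρ
  rw [mem_filter]
  constructor
  · intro hρ
    refine ⟨by rw [← bl_eq_of_mem hτ']; exact bl_mono subset_union_right hρ, ?_⟩
    funext v
    by_cases hv : v ∈ W
    · have : v ∉ U := fun h => disjoint_left.mp hUW h hv
      simp [glue, hv, (mem_bl.mp hτ).2 v this]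
    · simp [glue, hv, (mem_bl.mp hρ).2 v hv]
  · rintro ⟨h1, h2⟩
    rw [mem_bl]
    refine ⟨bl_subset h1, fun v hv => ?_⟩
    rw [← h2]
    simp [glue, hv]

/-- Without edges between `U` and `W`, the conditional law on `U ∪ W` is a product. -/
lemma av_split (hUW : Disjoint U W) (hadj : ∀ u ∈ U, ∀ w ∈ W, ¬ G.Adj u w)
    (hσ : σ ∈ col G q) (f : (V → Fin q) → ℝ) :
    av (col G q) (U ∪ W) f σ = av (col G q) U (av (col G q) W f) σ := by
  have hc := fun f => sum_bl_split (f := f) hUW hadj hσ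
  have h1 := hc fun _ => 1
  simp only [sum_const, nsmul_eq_mul, mul_one] at h1
  have h2 : ∀ τ ∈ bl (col G q) U σ, ((bl (col G q) W τ).card : ℝ) = (bl (col G q) W σ).card :=
    fun τ hτ => by rw [card_bl_split hadj hσ hτ]
  rw [sum_congr rfl h2, sum_const, nsmul_eq_mul] at h1
  have h3 : ∀ τ ∈ bl (col G q) U σ, av (col G q) W f τ
      = (∑ ρ ∈ bl (col G q) W τ, f ρ) / (bl (col G q) W σ).card := fun τ hτ => by
    rw [av, h2 τ hτ]
  rw [av, av, sum_congr rfl h3, ← sum_div, hc f, ← h1, div_div, mul_comm]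

/-- Entropy is subadditive over blocks without edges between them. -/
lemma ent_split (hUW : Disjoint U W) (hadj : ∀ u ∈ U, ∀ w ∈ W, ¬ G.Adj u w)
    (hf : ∀ σ ∈ col G q, 0 < f σ) :
    ent (col G q) f (U ∪ W) ≤ ent (col G q) f U + ent (col G q) f W := by
  have hp : ∀ σ ∈ col G q, 0 < av (col G q) W f σ := fun σ hσ => av_pos hσ hf
  have h1 : ∑ σ ∈ col G q, f σ * (Real.log (av (col G q) U f σ)
      - Real.log (av (col G q) (U ∪ W) f σ)) ≤ ent (col G q) f W := by
    have h2 : ∑ σ ∈ col G q, f σ * (Real.log (av (col G q) U f σ)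
        - Real.log (av (col G q) (U ∪ W) f σ))
        = ∑ σ ∈ col G q, av (col G q) U f σ * (Real.log (av (col G q) U f σ)
        - Real.log (av (col G q) (U ∪ W) f σ)) := by
      rw [sum_av_mul']
      refine sum_congr rfl fun σ hσ => ?_
      congr 1
      rw [← av_const (Om := col G q) (R := U) hσ (Real.log (av (col G q) U f σ)
        - Real.log (av (col G q) (U ∪ W) f σ))]
      refine av_congr fun τ hτ => ?_
      rw [av_congr_mem hτ, av_congr_mem (bl_mono (subset_union_left) hτ)]
    rw [h2]
    unfold ent
    rw [← sum_av' (R' := U) (f := fun σ => f σ * (Real.log (f σ) - Real.log (av (col G q) W f σ)))]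
    refine sum_le_sum fun σ hσ => ?_
    rw [av_split hUW hadj hσ]
    exact log_sum_av hσ hf hp
  have h3 : ent (col G q) f (U ∪ W) = ent (col G q) f U + ∑ σ ∈ col G q,
      f σ * (Real.log (av (col G q) U f σ) - Real.log (av (col G q) (U ∪ W) f σ)) := by
    unfold ent
    rw [← sum_add_distrib]
    exact sum_congr rfl fun σ _ => by ring
  linarith

/-- The subgraph of `G` induced on `R` is nonempty and connected, expressed through cuts: every
proper nonempty subset of `R` has an edge to the rest of `R`. -/
def Conn (G : SimpleGraph V) (R : Finset V) : Prop :=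
  R.Nonempty ∧ ∀ U ⊆ R, U.Nonempty → U ≠ R → ∃ u ∈ U, ∃ w ∈ R \ U, G.Adj u w

open Classical in
/-- Cluster decomposition: the entropy of a block is at most the sum of crude bounds over
its connected subsets. -/
lemma ent_le_conn (hD : ∀ v, G.degree v ≤ D) (hq : D + 2 ≤ q) (hf : ∀ σ ∈ col G q, 0 < f σ)
    (R : Finset V) :
    ent (col G q) f R ≤ ∑ U ∈ R.powerset with Conn G U,
      (72 * (q : ℝ) ^ 2) ^ U.card * ∑ v ∈ U, ent (col G q) f {v} := by
  induction R using Finset.strongInduction with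
  | H R ih =>
  have hnn : ∀ U : Finset V, 0 ≤ (72 * (q : ℝ) ^ 2) ^ U.card * ∑ v ∈ U, ent (col G q) f {v} :=
    fun U => mul_nonneg (by positivity) (sum_nonneg fun v _ => ent_nonneg hf)
  rcases R.eq_empty_or_nonempty with hR | hR
  · rw [hR, ent_empty]
    exact sum_nonneg fun U _ => hnn U
  by_cases hc : Conn G R
  · refine (crude hD hq hf R).trans ?_
    exact single_le_sum (f := fun U : Finset V => (72 * (q : ℝ) ^ 2) ^ U.card *
      ∑ v ∈ U, ent (col G q) f {v}) (fun U _ => hnn U) (by simp [hc])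
  · have : ∃ U ⊆ R, U.Nonempty ∧ U ≠ R ∧ ∀ u ∈ U, ∀ w ∈ R \ U, ¬ G.Adj u w := by
      by_contra h
      push Not at h
      exact hc ⟨hR, h⟩
    obtain ⟨U, hUR, hUn, hUne, hadj⟩ := this
    have hW : R \ U ⊂ R := by
      refine Finset.ssubset_iff_subset_ne.mpr ⟨sdiff_subset, fun h => ?_⟩
      obtain ⟨u, hu⟩ := hUn
      have := hUR hu
      rw [← h] at this
      exact (mem_sdiff.mp this).2 hu
    have h1 := ent_split (f := f) disjoint_sdiff hadj hf
    rw [union_sdiff_of_subset hUR] at h1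
    refine h1.trans ((add_le_add (ih U (Finset.ssubset_iff_subset_ne.mpr ⟨hUR, hUne⟩)) (ih _ hW)).trans ?_)
    rw [← sum_union]
    · refine sum_le_sum_of_subset_of_nonneg ?_ fun U _ _ => hnn U
      intro X hX
      simp only [mem_union, mem_filter, mem_powerset] at hX ⊢
      rcases hX with ⟨a, b⟩ | ⟨a, b⟩
      · exact ⟨a.trans hUR, b⟩
      · exact ⟨a.trans sdiff_subset, b⟩
    · rw [disjoint_left]
      intro X hX hX'
      simp only [mem_filter, mem_powerset] at hX hX'
      obtain ⟨x, hx⟩ := hX.2.1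
      exact (mem_sdiff.mp (hX'.1 hx)).2 (hX.1 hx)

/-! ### Counting connected sets -/

/-- Vertex sets of the walks of length `k` started at `v`. -/
def trails (G : SimpleGraph V) [DecidableRel G.Adj] : ℕ → V → Finset (Finset V)
  | 0, v => {{v}}
  | k + 1, v => (G.neighborFinset v).biUnion fun w => (trails G k w).image (insert v)

lemma card_trails (hD : ∀ v, G.degree v ≤ D) (k : ℕ) (v : V) : (trails G k v).card ≤ D ^ k := by
  induction k generalizing v with
  | zero => simp [trails]
  | succ k ih =>
    rw [trails, pow_succ, mul_comm]
    refine (card_biUnion_le_card_mul _ _ (D ^ k) fun w _ => card_image_le.trans (ih w)).trans ?_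
    exact Nat.mul_le_mul_right _ (by rw [SimpleGraph.card_neighborFinset_eq_degree]; exact hD v)

lemma self_mem_of_trails {k : ℕ} {v : V} {S : Finset V} (h : S ∈ trails G k v) : v ∈ S := by
  cases k with
  | zero => simp only [trails, mem_singleton] at h; simp [h]
  | succ k =>
    simp only [trails, mem_biUnion, mem_image] at h
    obtain ⟨w, _, T, _, rfl⟩ := h
    exact mem_insert_self _ _

/-- A walk visiting `u` can be extended by a detour `u → w → u`. -/
lemma insert_mem_trails {k : ℕ} {v u w : V} {S : Finset V} (h : S ∈ trails G k v) (hu : u ∈ S)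
    (huw : G.Adj u w) : insert w S ∈ trails G (k + 2) v := by
  induction k generalizing v S with
  | zero =>
    simp only [trails, mem_singleton] at h
    subst h
    rw [mem_singleton] at hu
    subst hu
    simp only [trails, mem_biUnion, mem_image, SimpleGraph.mem_neighborFinset, mem_singleton]
    refine ⟨w, huw, insert w {u}, ⟨u, huw.symm, {u}, rfl, rfl⟩, ?_⟩
    ext x; simp
  | succ k ih =>
    by_cases huv : u = v
    · subst huv
      rw [trails]
      simp only [mem_biUnion, mem_image, SimpleGraph.mem_neighborFinset]
      refine ⟨w, huw, insert w S, ?_, ?_⟩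
      · rw [trails]
        simp only [mem_biUnion, mem_image, SimpleGraph.mem_neighborFinset]
        exact ⟨u, huw.symm, S, h, rfl⟩
      · exact insert_eq_self.mpr (mem_insert_of_mem hu)
    · rw [trails] at h
      simp only [mem_biUnion, mem_image, SimpleGraph.mem_neighborFinset] at h
      obtain ⟨z, hz, T, hT, rfl⟩ := h
      have huT : u ∈ T := (mem_insert.mp hu).resolve_left huv
      have := ih hT huT
      rw [show k + 1 + 2 = (k + 2) + 1 by omega, trails]
      simp only [mem_biUnion, mem_image, SimpleGraph.mem_neighborFinset]
      exact ⟨z, hz, _, this, insert_comm _ _ _⟩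

/-- A connected set is traversed by a walk that uses every edge of a spanning tree twice. -/
lemma conn_mem_trails (hU : Conn G U) (hv : v ∈ U) : U ∈ trails G (2 * (U.card - 1)) v := by
  have key : ∀ m, m + 1 ≤ U.card → ∃ S ⊆ U, S.card = m + 1 ∧ S ∈ trails G (2 * m) v := by
    intro m
    induction m with
    | zero => exact fun _ => ⟨{v}, by simpa using hv, by simp, by simp [trails]⟩
    | succ m ih =>
      intro hm
      obtain ⟨S, hS, hc, ht⟩ := ih (by omega)
      obtain ⟨u, hu, w, hw, huw⟩ := hU.2 S hS (card_pos.mp (by omega)) (by rintro rfl; omega)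
      rw [mem_sdiff] at hw
      refine ⟨insert w S, ?_, ?_, insert_mem_trails ht hu huw⟩
      · intro x hx
        rcases mem_insert.mp hx with rfl | hx
        · exact hw.1
        · exact hS hx
      · rw [card_insert_of_notMem hw.2, hc]
  have h0 : 0 < U.card := card_pos.mpr hU.1
  obtain ⟨S, hS, hc, ht⟩ := key (U.card - 1) (by omega)
  rwa [eq_of_subset_of_card_le hS (by omega)] at ht

open Classical in
/-- There are at most `D ^ (2 m)` connected sets of size `m` containing a given vertex. -/
lemma card_conn_le (hD : ∀ v, G.degree v ≤ D) (hD1 : 1 ≤ D) (v : V) (m : ℕ) :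
    (univ.filter fun U : Finset V => Conn G U ∧ v ∈ U ∧ U.card = m).card ≤ (D ^ 2) ^ m := by
  calc _ ≤ (trails G (2 * (m - 1)) v).card := card_le_card fun U hU => by
          simp only [mem_filter, mem_univ, true_and] at hU
          obtain ⟨h1, h2, rfl⟩ := hU
          exact conn_mem_trails h1 h2
    _ ≤ D ^ (2 * (m - 1)) := card_trails hD _ _
    _ ≤ (D ^ 2) ^ m := by rw [← pow_mul]; exact Nat.pow_le_pow_right hD1 (by omega)

/-! ### Approximate tensorisation of entropy -/

open Classical in
lemma sum_conn_le (hD : ∀ v, G.degree v ≤ D) (hD1 : 1 ≤ D) (v : V) {x : ℝ} (hx : 0 ≤ x)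
    (hx2 : 2 * x * (D : ℝ) ^ 2 ≤ 1) :
    ∑ U with Conn G U ∧ v ∈ U, x ^ U.card ≤ 2 := by
  have hmaps : ∀ U ∈ univ.filter (fun U : Finset V => Conn G U ∧ v ∈ U),
      U.card ∈ range (Fintype.card V + 1) := fun U _ => by
    rw [mem_range]; exact Nat.lt_succ_of_le (card_le_univ U)
  rw [← sum_fiberwise_of_maps_to hmaps]
  have h1 : ∀ m ∈ range (Fintype.card V + 1),
      ∑ U ∈ (univ.filter (fun U : Finset V => Conn G U ∧ v ∈ U)) with U.card = m, x ^ U.card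
      ≤ (1 / 2 : ℝ) ^ m := by
    intro m _
    rw [filter_filter]
    have h2 : ∀ U ∈ univ.filter (fun U : Finset V => (Conn G U ∧ v ∈ U) ∧ U.card = m),
        x ^ U.card = x ^ m := fun U hU => by
      rw [(mem_filter.mp hU).2.2]
    rw [sum_congr rfl h2, sum_const, nsmul_eq_mul]
    have h3 : ((univ.filter (fun U : Finset V => (Conn G U ∧ v ∈ U) ∧ U.card = m)).card : ℝ)
        ≤ (((D : ℝ) ^ 2)) ^ m := by
      have := card_conn_le hD hD1 v m
      simp only [and_assoc] at this ⊢
      exact_mod_cast this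
    calc _ ≤ ((D : ℝ) ^ 2) ^ m * x ^ m := mul_le_mul_of_nonneg_right h3 (by positivity)
      _ = ((D : ℝ) ^ 2 * x) ^ m := (mul_pow _ _ _).symm
      _ ≤ _ := pow_le_pow_left₀ (by positivity) (by linarith) _
  refine (sum_le_sum h1).trans ?_
  have := Summable.sum_le_tsum (range (Fintype.card V + 1)) (fun i _ => by positivity)
    summable_geometric_two
  rwa [tsum_geometric_two] at this

lemma bern_lin (S : Finset (Finset V)) (c : Finset V → ℝ) (θ : ℝ) :
    bern (fun R => ∑ U ∈ S, c U * (if U ⊆ R then 1 else 0)) θ = ∑ U ∈ S, c U * θ ^ U.card := by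
  rw [bern]
  simp_rw [mul_sum]
  rw [sum_comm]
  refine sum_congr rfl fun U _ => ?_
  rw [← bern_indicator U θ, bern, mul_sum]
  refine sum_congr rfl fun R _ => ?_
  ring

/-- If small-scale entropy increments are controlled (`hN`), entropy tensorises approximately,
with a constant that does not depend on the graph. -/
lemma at_of_dif (hD : ∀ v, G.degree v ≤ D) (hD1 : 1 ≤ D) (hq : D + 2 ≤ q)
    (hf : ∀ σ ∈ col G q, 0 < f σ) {N : ℕ}
    (hN : ∀ R, dif (ent (col G q) f) R ≤ N * ent (col G q) f R) :
    ent (col G q) f univ ≤ 2 * (144 * (q : ℝ) ^ 2 * (D : ℝ) ^ 2) ^ N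
      * ∑ v, ent (col G q) f {v} := by
  classical
  have hq1 : (1 : ℝ) ≤ q := by exact_mod_cast (by omega : 1 ≤ q)
  have hD1' : (1 : ℝ) ≤ D := by exact_mod_cast hD1
  set B : ℝ := 144 * (q : ℝ) ^ 2 * (D : ℝ) ^ 2 with hB
  have hB1 : 1 ≤ B := by
    have h1 : (1 : ℝ) ≤ (q : ℝ) ^ 2 := one_le_pow₀ hq1
    have h2 : (1 : ℝ) ≤ (D : ℝ) ^ 2 := one_le_pow₀ hD1'
    nlinarith [mul_le_mul h1 h2 (by norm_num) (by positivity)]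
  have hB0 : 0 < B := by linarith
  set θ : ℝ := B⁻¹ with hθ
  have h0 : 0 < θ := inv_pos.mpr hB0
  have h1 : θ ≤ 1 := inv_le_one_of_one_le₀ hB1
  have hE : ∀ v, 0 ≤ ent (col G q) f {v} := fun v => ent_nonneg hf
  have hge := bern_ge hN h0 h1
  have hle : bern (ent (col G q) f) θ ≤ 2 * ∑ v, ent (col G q) f {v} := by
    have hmono : bern (ent (col G q) f) θ ≤ bern (fun R => ∑ U with Conn G U,
        ((72 * (q : ℝ) ^ 2) ^ U.card * ∑ v ∈ U, ent (col G q) f {v})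
          * (if U ⊆ R then 1 else 0)) θ := by
      refine bern_mono h0.le h1 fun R => (ent_le_conn hD hq hf R).trans (le_of_eq ?_)
      simp only [mul_ite, mul_one, mul_zero]
      rw [← sum_filter, filter_filter]
      refine sum_congr ?_ fun _ _ => rfl
      ext U
      simp [and_comm]
    have hlin : bern (fun R => ∑ U with Conn G U,
        ((72 * (q : ℝ) ^ 2) ^ U.card * ∑ v ∈ U, ent (col G q) f {v})
          * (if U ⊆ R then 1 else 0)) θ
        = ∑ U with Conn G U, ((72 * (q : ℝ) ^ 2) ^ U.card * ∑ v ∈ U, ent (col G q) f {v})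
          * θ ^ U.card := by
      exact bern_lin _ _ θ
    refine hmono.trans (hlin.le.trans ?_)
    have h2 : ∀ U : Finset V, ((72 * (q : ℝ) ^ 2) ^ U.card * ∑ v ∈ U, ent (col G q) f {v})
          * θ ^ U.card = ∑ v, if v ∈ U then (72 * (q : ℝ) ^ 2 * θ) ^ U.card
            * ent (col G q) f {v} else 0 := by
      intro U
      rw [← sum_filter, filter_mem_eq_inter, univ_inter, ← mul_sum, mul_pow _ θ]
      ring
    simp_rw [h2]
    rw [sum_comm, mul_sum]
    refine sum_le_sum fun v _ => ?_
    rw [← sum_filter, filter_filter, ← sum_mul]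
    refine mul_le_mul_of_nonneg_right (sum_conn_le hD hD1 v (by positivity) ?_) (hE v)
    rw [hθ]
    calc 2 * (72 * (q : ℝ) ^ 2 * B⁻¹) * (D : ℝ) ^ 2 = B * B⁻¹ := by
          nth_rewrite 2 [hB]; ring
      _ ≤ 1 := (mul_inv_cancel₀ hB0.ne').le
  have h3 : θ ^ N * ent (col G q) f univ ≤ 2 * ∑ v, ent (col G q) f {v} := hge.trans hle
  rw [hθ, inv_pow, inv_mul_le_iff₀ (by positivity)] at h3
  linarith

/-- Approximate tensorisation from the marginal bound. -/
lemma at_col {κ : ℝ} (hD : ∀ v, G.degree v ≤ D) (hD1 : 1 ≤ D) (hq : D + 2 ≤ q) (hκ : κ < 1)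
    (hM : MargBound G q D (q - D) κ) (hf : ∀ σ ∈ col G q, 0 < f σ) {N : ℕ}
    (hN : 4 * ((q : ℝ) ^ 2 * (D * (2 / (1 - κ)))) / (1 / (q : ℝ) ^ (D + 1)) ^ 2 + 1 ≤ N) :
    ent (col G q) f univ ≤ 2 * (144 * (q : ℝ) ^ 2 * (D : ℝ) ^ 2) ^ N
      * ∑ v, ent (col G q) f {v} := by
  have hq1 : (1 : ℝ) ≤ q := by exact_mod_cast (by omega : 1 ≤ q)
  refine at_of_dif hD hD1 hq hf fun R => ?_
  have h1 : (0:ℝ) < 1 - κ := by linarith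
  refine (dif_le ent_empty (fun R => local_entropy ?_ ?_ ?_
    (cov_of_pairBd (pairBd_col hD (by omega) hκ hM)) (low_col hD hq) hf R)).trans
    (mul_le_mul_of_nonneg_right hN (ent_nonneg hf))
  · positivity
  · positivity
  · exact div_le_one_of_le₀ (one_le_pow₀ hq1) (by positivity)

end Split

/-! ### The Glauber transition operator -/

section Glauber

variable {V : Type} [Fintype V] [DecidableEq V] {G : SimpleGraph V} [DecidableRel G.Adj] {q : ℕ}
variable {σ τ ρ x y : V → Fin q} {u v : V} {D : ℕ} {f g : (V → Fin q) → ℝ}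

lemma gibbs_eq (σ : V → Fin q) :
    coloringGibbs G q σ = if σ ∈ col G q then 1 / ((col G q).card : ℝ) else 0 := by
  have h : ∑ σ' : V → Fin q, (if IsProperColoring G σ' then (1 : ℝ) else 0)
      = ((col G q).card : ℝ) := by
    rw [sum_boole]; rfl
  unfold coloringGibbs
  rw [h]
  have : IsProperColoring G σ ↔ σ ∈ col G q := mem_col.symm
  by_cases hs : σ ∈ col G q <;> simp [hs, this]

lemma sum_update_eq (σ : V → Fin q) (v : V) (F : (V → Fin q) → ℝ) :
    ∑ j : Fin q, (if Function.update σ v j ∈ col G q then F (Function.update σ v j) else 0)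
      = ∑ τ ∈ bl (col G q) {v} σ, F τ := by
  rw [← sum_filter]
  refine sum_nbij' (fun j => Function.update σ v j) (fun τ => τ v) ?_ ?_ ?_ ?_ ?_
  · intro j hj
    rw [mem_bl]
    refine ⟨(mem_filter.mp hj).2, fun w hw => ?_⟩
    rw [Function.update_of_ne (by simpa using hw)]
  · intro τ hτ
    rw [mem_bl] at hτ
    have : Function.update σ v (τ v) = τ := by
      funext w
      by_cases hw : w = v
      · subst hw; simp
      · rw [Function.update_of_ne hw, hτ.2 w (by simpa using hw)]
    simp only [mem_filter, mem_univ, true_and]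
    rw [this]; exact hτ.1
  · intro j _; simp
  · intro τ hτ
    rw [mem_bl] at hτ
    funext w
    by_cases hw : w = v
    · subst hw; simp
    · rw [Function.update_of_ne hw, hτ.2 w (by simpa using hw)]
  · intro j _; rfl

/-- The Glauber dynamics as an operator on functions: the average over `v` of the conditional
expectations at `v`. -/
def stp (G : SimpleGraph V) [DecidableRel G.Adj] (q : ℕ) (f : (V → Fin q) → ℝ)
    (σ : V → Fin q) : ℝ :=
  (Fintype.card V : ℝ)⁻¹ * ∑ v, av (col G q) {v} f σ

lemma glauber_zero (hy : y ∉ col G q) : glauberMatrix (coloringGibbs G q) x y = 0 := by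
  simp [glauberMatrix, gibbs_eq, hy]

/-- On functions, the transition matrix acts as `stp` at every proper colouring. -/
lemma glauber_sum (hσ : σ ∈ col G q) (f : (V → Fin q) → ℝ) :
    ∑ y, glauberMatrix (coloringGibbs G q) σ y * f y = stp G q f σ := by
  have hN : (0 : ℝ) < (col G q).card := by exact_mod_cast card_pos.mpr ⟨σ, hσ⟩
  have h1 : ∀ v, ∑ j : Fin q, coloringGibbs G q (Function.update σ v j)
      = ((bl (col G q) {v} σ).card : ℝ) / (col G q).card := fun v => by
    simp_rw [gibbs_eq]
    rw [sum_update_eq σ v (fun _ => 1 / ((col G q).card : ℝ)), sum_const, nsmul_eq_mul]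
    ring
  unfold glauberMatrix stp
  simp only [Matrix.of_apply, h1]
  simp_rw [mul_assoc, ← mul_sum, sum_mul]
  rw [sum_comm]
  congr 1
  refine sum_congr rfl fun v _ => ?_
  have hc := card_bl_pos (R := {v}) hσ
  rw [av, sum_div, ← sum_filter_add_sum_filter_not univ (fun y => y ∈ bl (col G q) {v} σ)]
  have h2 : ∑ y with ¬ y ∈ bl (col G q) {v} σ,
      (if ∀ u, u ≠ v → y u = σ u then coloringGibbs G q y /
        (((bl (col G q) {v} σ).card : ℝ) / (col G q).card) else 0) * f y = 0 := by
    refine sum_eq_zero fun y hy => ?_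
    simp only [mem_filter, mem_univ, true_and, mem_bl, mem_singleton] at hy
    split_ifs with h
    · rw [gibbs_eq, if_neg fun h' => hy ⟨h', h⟩]; simp
    · simp
  rw [h2, add_zero, filter_mem_eq_inter, univ_inter]
  refine sum_congr rfl fun y hy => ?_
  rw [mem_bl] at hy
  rw [if_pos fun u hu => hy.2 u (by simpa using hu), gibbs_eq, if_pos hy.1]
  field_simp

lemma stp_congr (h : ∀ τ ∈ col G q, f τ = g τ) (σ : V → Fin q) : stp G q f σ = stp G q g σ := by
  unfold stp
  congr 1
  exact sum_congr rfl fun v _ => av_congr fun τ hτ => h τ (bl_subset hτ)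

lemma pow_sum (hσ : σ ∈ col G q) (f : (V → Fin q) → ℝ) (t : ℕ) :
    ∑ y, (glauberMatrix (coloringGibbs G q) ^ t) σ y * f y = (stp G q)^[t] f σ := by
  induction t generalizing σ with
  | zero => simp [Matrix.one_apply]
  | succ t ih =>
    rw [pow_succ', Function.iterate_succ_apply']
    simp_rw [Matrix.mul_apply, sum_mul, mul_assoc]
    rw [sum_comm, ← glauber_sum hσ]
    refine sum_congr rfl fun z _ => ?_
    rw [← mul_sum]
    by_cases hz : z ∈ col G q
    · rw [ih hz]
    · rw [glauber_zero hz, zero_mul, zero_mul]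

lemma iter_congr (h : ∀ τ ∈ col G q, f τ = g τ) (t : ℕ) (hσ : σ ∈ col G q) :
    (stp G q)^[t] f σ = (stp G q)^[t] g σ := by
  induction t generalizing σ with
  | zero => exact h σ hσ
  | succ t ih =>
    rw [Function.iterate_succ_apply', Function.iterate_succ_apply']
    exact stp_congr (fun τ hτ => ih hτ) σ

lemma stp_const [Nonempty V] (hσ : σ ∈ col G q) (c : ℝ) : stp G q (fun _ => c) σ = c := by
  have hn : (Fintype.card V : ℝ) ≠ 0 := by exact_mod_cast Fintype.card_ne_zero
  unfold stp
  rw [sum_congr rfl fun v _ => av_const hσ c, sum_const, nsmul_eq_mul, card_univ]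
  field_simp

lemma iter_const [Nonempty V] (hσ : σ ∈ col G q) (c : ℝ) (t : ℕ) :
    (stp G q)^[t] (fun _ => c) σ = c := by
  induction t generalizing σ with
  | zero => rfl
  | succ t ih =>
    rw [Function.iterate_succ_apply', stp_congr (g := fun _ => c) (fun τ hτ => ih hτ) σ,
      stp_const hσ]

/-- Reversibility. -/
lemma sum_stp_mul : ∑ σ ∈ col G q, stp G q f σ * g σ = ∑ σ ∈ col G q, f σ * stp G q g σ := by
  have h1 : ∀ f g : (V → Fin q) → ℝ, ∑ σ ∈ col G q, stp G q f σ * g σ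
      = (Fintype.card V : ℝ)⁻¹ * ∑ v, ∑ σ ∈ col G q, av (col G q) {v} f σ * g σ := by
    intro f g
    unfold stp
    simp_rw [mul_assoc, ← mul_sum, sum_mul]
    rw [sum_comm]
  rw [h1, sum_congr rfl fun σ _ => mul_comm (f σ) _, h1]
  congr 1
  refine sum_congr rfl fun v _ => ?_
  rw [sum_av_mul']
  exact sum_congr rfl fun σ _ => mul_comm _ _

lemma sum_iter_mul (t : ℕ) :
    ∑ σ ∈ col G q, (stp G q)^[t] f σ * g σ = ∑ σ ∈ col G q, f σ * (stp G q)^[t] g σ := by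
  induction t generalizing f g with
  | zero => rfl
  | succ t ih =>
    rw [Function.iterate_succ_apply', sum_stp_mul, ih, Function.iterate_succ_apply]

lemma sum_iter [Nonempty V] (t : ℕ) :
    ∑ σ ∈ col G q, (stp G q)^[t] f σ = ∑ σ ∈ col G q, f σ := by
  have := sum_iter_mul (G := G) (f := f) (g := fun _ => 1) t
  have h : ∀ σ ∈ col G q, f σ * (stp G q)^[t] (fun _ => 1) σ = f σ := fun σ hσ => by
    rw [iter_const hσ, mul_one]
  rw [sum_congr rfl h] at this
  simpa using this

lemma pow_apply (hσ : σ ∈ col G q) (t : ℕ) (y : V → Fin q) :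
    (glauberMatrix (coloringGibbs G q) ^ t) σ y
      = (stp G q)^[t] (fun z => if z = y then 1 else 0) σ := by
  rw [← pow_sum hσ]
  simp

lemma pow_apply_zero (hσ : σ ∈ col G q) (t : ℕ) (hy : y ∉ col G q) :
    (glauberMatrix (coloringGibbs G q) ^ t) σ y = 0 := by
  have h0 : ∀ τ ∈ col G q, (if τ = y then (1 : ℝ) else 0) = 0 := fun τ hτ =>
    if_neg (fun (h : τ = y) => hy (h ▸ hτ))
  rw [pow_apply hσ, iter_congr (g := fun _ => 0) h0 t hσ]
  induction t generalizing σ with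
  | zero => rfl
  | succ t ih =>
    rw [Function.iterate_succ_apply', stp_congr (g := fun _ => 0) (fun τ hτ => ih hτ)]
    simp [stp, av]

lemma tv_eq (hσ : σ ∈ col G q) (t : ℕ) :
    tvDist (fun y => (glauberMatrix (coloringGibbs G q) ^ t) σ y) (coloringGibbs G q)
      = 1 / 2 * ∑ y ∈ col G q, |(glauberMatrix (coloringGibbs G q) ^ t) σ y
        - 1 / ((col G q).card : ℝ)| := by
  unfold tvDist
  congr 1
  rw [← sum_filter_add_sum_filter_not univ (fun y => y ∈ col G q), filter_mem_eq_inter, univ_inter]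
  rw [sum_eq_zero (s := univ.filter fun y => ¬ y ∈ col G q), add_zero]
  · exact sum_congr rfl fun y hy => by rw [gibbs_eq, if_pos hy]
  · intro y hy
    have hy' := (mem_filter.mp hy).2
    have h := pow_apply_zero hσ t hy'
    rw [gibbs_eq, if_neg hy', sub_zero]
    simpa using h

lemma mixing_le {t : ℕ} {ε : ℝ} (h : ∀ σ ∈ col G q,
    tvDist (fun y => (glauberMatrix (coloringGibbs G q) ^ t) σ y) (coloringGibbs G q) ≤ ε) :
    mixingTime (coloringGibbs G q) (glauberMatrix (coloringGibbs G q)) ε ≤ t := by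
  unfold mixingTime
  refine Finset.sup_le fun σ hσ => Nat.sInf_le ?_
  refine h σ ?_
  by_contra hn
  have := (mem_filter.mp hσ).2
  rw [gibbs_eq, if_neg hn] at this
  exact lt_irrefl _ this

/-! ### Entropy decay and mixing -/

lemma stp_pos [Nonempty V] (hf : ∀ σ ∈ col G q, 0 < f σ) (hσ : σ ∈ col G q) :
    0 < stp G q f σ :=
  mul_pos (inv_pos.mpr (by exact_mod_cast Fintype.card_pos))
    (sum_pos (fun v _ => av_pos hσ hf) univ_nonempty)

/-- One step of the dynamics contracts entropy. The update at `v` leaves the entropy of the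
conditional mean, that is, the total entropy minus the single-site entropy at `v`; convexity
handles the average over `v`, and approximate tensorisation bounds the sum from below. -/
lemma ent_stp_le [Nonempty V] {C : ℝ} (hC : 0 < C)
    (hAT : ∀ f : (V → Fin q) → ℝ, (∀ σ ∈ col G q, 0 < f σ) →
      ent (col G q) f univ ≤ C * ∑ v, ent (col G q) f {v})
    (hf : ∀ σ ∈ col G q, 0 < f σ) :
    ent (col G q) (stp G q f) univ
      ≤ Real.exp (-(1 / (C * Fintype.card V))) * ent (col G q) f univ := by
  set n : ℝ := (Fintype.card V : ℝ) with hn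
  have hn0 : 0 < n := by rw [hn]; exact_mod_cast Fintype.card_pos
  have h1 : ent (col G q) (stp G q f) univ ≤ n⁻¹ * ∑ v, (ent (col G q) f univ
      - ent (col G q) f {v}) := by
    have hm : ∀ σ ∈ col G q, av (col G q) univ (stp G q f) σ = av (col G q) univ f σ := by
      intro σ hσ
      rw [av, av, bl_univ]
      congr 1
      exact sum_iter 1
    have h2 : ∀ v, ent (col G q) f univ - ent (col G q) f {v}
        = ∑ σ ∈ col G q, av (col G q) {v} f σ * (Real.log (av (col G q) {v} f σ)
          - Real.log (av (col G q) univ f σ)) := by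
      intro v
      rw [sum_av_mul']
      unfold ent
      rw [← sum_sub_distrib]
      refine sum_congr rfl fun σ hσ => ?_
      have h3 : av (col G q) {v} (fun τ => Real.log (av (col G q) {v} f τ)
          - Real.log (av (col G q) univ f τ)) σ
          = Real.log (av (col G q) {v} f σ) - Real.log (av (col G q) univ f σ) := by
        rw [← av_const (Om := col G q) (R := {v}) hσ (Real.log (av (col G q) {v} f σ)
          - Real.log (av (col G q) univ f σ))]
        refine av_congr fun τ hτ => ?_
        rw [av_congr_mem hτ, av_congr_mem (bl_mono (subset_univ _) hτ)]
      rw [h3]; ring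
    simp_rw [h2]
    rw [sum_comm, mul_sum]
    refine sum_le_sum fun σ hσ => ?_
    rw [hm σ hσ]
    have hs := stp_pos hf hσ
    -- Jensen's inequality for `x ↦ x log x`
    have h4 : ∑ v, (av (col G q) {v} f σ - stp G q f σ) ≤ ∑ v, av (col G q) {v} f σ *
        (Real.log (av (col G q) {v} f σ) - Real.log (stp G q f σ)) :=
      sum_le_sum fun v _ => mul_log_sub_ge (av_pos hσ hf) hs
    have h5 : ∑ v, av (col G q) {v} f σ = n * stp G q f σ := by
      unfold stp; rw [← hn]; field_simp
    rw [sum_sub_distrib, h5, sum_const, nsmul_eq_mul, card_univ, ← hn, sub_self] at h4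
    have h6 : ∑ v, av (col G q) {v} f σ * (Real.log (av (col G q) {v} f σ)
        - Real.log (av (col G q) univ f σ))
        = ∑ v, av (col G q) {v} f σ * (Real.log (av (col G q) {v} f σ)
          - Real.log (stp G q f σ))
          + n * (stp G q f σ * (Real.log (stp G q f σ) - Real.log (av (col G q) univ f σ))) := by
      rw [← mul_assoc, ← h5, sum_mul, ← sum_add_distrib]
      exact sum_congr rfl fun v _ => by ring
    rw [h6, ← div_eq_inv_mul, le_div_iff₀ hn0]
    linarith
  have hE := ent_nonneg (R := univ) hf
  have h7 := hAT f hf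
  rw [sum_sub_distrib, sum_const, nsmul_eq_mul, card_univ, ← hn] at h1
  have h8 : ent (col G q) f univ / C ≤ ∑ v, ent (col G q) f {v} := by
    rw [div_le_iff₀ hC]; linarith
  have h9 : n⁻¹ * (n * ent (col G q) f univ - ∑ v, ent (col G q) f {v})
      ≤ (1 - 1 / (C * n)) * ent (col G q) f univ := by
    have : (1 - 1 / (C * n)) * ent (col G q) f univ
        = n⁻¹ * (n * ent (col G q) f univ - ent (col G q) f univ / C) := by
      field_simp
    rw [this]
    exact mul_le_mul_of_nonneg_left (by linarith) (by positivity)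
  refine h1.trans (h9.trans (mul_le_mul_of_nonneg_right ?_ hE))
  have := Real.add_one_le_exp (-(1 / (C * n)))
  linarith

lemma ent_iter_le [Nonempty V] {C : ℝ} (hC : 0 < C)
    (hAT : ∀ f : (V → Fin q) → ℝ, (∀ σ ∈ col G q, 0 < f σ) →
      ent (col G q) f univ ≤ C * ∑ v, ent (col G q) f {v})
    (hf : ∀ σ ∈ col G q, 0 < f σ) (t : ℕ) :
    (∀ σ ∈ col G q, 0 < (stp G q)^[t] f σ) ∧ ent (col G q) ((stp G q)^[t] f) univ
      ≤ Real.exp (-(t / (C * Fintype.card V))) * ent (col G q) f univ := by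
  induction t with
  | zero => exact ⟨hf, by simp⟩
  | succ t ih =>
    rw [Function.iterate_succ_apply']
    refine ⟨fun σ hσ => stp_pos ih.1 hσ, (ent_stp_le hC hAT ih.1).trans ?_⟩
    refine (mul_le_mul_of_nonneg_left ih.2 (Real.exp_pos _).le).trans (le_of_eq ?_)
    rw [← mul_assoc, ← Real.exp_add]
    congr 2
    push_cast
    ring

/-- Exponential decay of the total variation distance. By reversibility the density of the
distribution after `t` steps is the image of the initial density under `t` steps of the
operator. -/
lemma tv_le_of_at [Nonempty V] {C : ℝ} (hC : 0 < C)
    (hAT : ∀ f : (V → Fin q) → ℝ, (∀ σ ∈ col G q, 0 < f σ) →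
      ent (col G q) f univ ≤ C * ∑ v, ent (col G q) f {v})
    (hx : x ∈ col G q) (t : ℕ) :
    tvDist (fun y => (glauberMatrix (coloringGibbs G q) ^ t) x y) (coloringGibbs G q) ^ 2
      ≤ 4 * Real.exp (-(t / (C * Fintype.card V))) * (Fintype.card V * q) := by
  set N : ℝ := ((col G q).card : ℝ) with hN
  have hN1 : 1 ≤ N := by rw [hN]; exact_mod_cast card_pos.mpr ⟨x, hx⟩
  have hN0 : 0 < N := by linarith
  -- half of the mass is spread uniformly, which keeps the density positive
  set f₀ : (V → Fin q) → ℝ := fun z => N / 2 * (if z = x then 1 else 0) + 1 / 2 with hf₀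
  have hf0 : ∀ σ ∈ col G q, 0 < f₀ σ := fun σ _ => by
    simp only [hf₀]; split_ifs <;> linarith
  obtain ⟨hFpos, hFent⟩ := ent_iter_le hC hAT hf0 t
  set F := (stp G q)^[t] f₀ with hF
  have hFy : ∀ y ∈ col G q, F y = N / 2 * (glauberMatrix (coloringGibbs G q) ^ t) x y + 1 / 2 := by
    intro y hy
    have h1 : (glauberMatrix (coloringGibbs G q) ^ t) x y
        = (glauberMatrix (coloringGibbs G q) ^ t) y x := by
      rw [pow_apply hx, pow_apply hy]
      have := sum_iter_mul (G := G) (q := q) (f := fun z => if z = x then 1 else 0)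
        (g := fun z => if z = y then 1 else 0) t
      simp only [mul_ite, mul_one, mul_zero, ite_mul, one_mul, zero_mul] at this
      rw [sum_ite_eq' (col G q) y, sum_ite_eq' (col G q) x, if_pos hx, if_pos hy] at this
      exact this.symm
    rw [h1, hF, ← pow_sum hy]
    have h2 : ∑ z, (glauberMatrix (coloringGibbs G q) ^ t) y z = 1 := by
      have := pow_sum hy (fun _ => 1) t
      rw [iter_const hy] at this
      simpa using this
    simp only [hf₀, mul_add, sum_add_distrib, ← sum_mul, h2]
    simp [mul_comm]
  have hsum : ∑ σ ∈ col G q, F σ = N := by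
    rw [hF, sum_iter]
    simp only [hf₀, sum_add_distrib, ← mul_sum, sum_ite_eq', hx, if_true, sum_const, nsmul_eq_mul]
    rw [← hN]; ring
  have hsum0 : ∑ σ ∈ col G q, f₀ σ = N := by rw [← hsum, hF, sum_iter]
  have hav : ∀ σ, av (col G q) univ F σ = 1 := fun σ => by
    rw [av, bl_univ, hsum, ← hN, div_self hN0.ne']
  have hav0 : ∀ σ, av (col G q) univ f₀ σ = 1 := fun σ => by
    rw [av, bl_univ, hsum0, ← hN, div_self hN0.ne']
  have hNq : Real.log N ≤ Fintype.card V * q := by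
    have h1 : N ≤ (q : ℝ) ^ Fintype.card V := by
      rw [hN]
      have := card_bl_le (col G q) univ x
      rw [bl_univ, card_univ] at this
      exact_mod_cast this
    refine (Real.log_le_log hN0 h1).trans ?_
    rw [Real.log_pow]
    exact mul_le_mul_of_nonneg_left (Real.log_le_self (Nat.cast_nonneg q)) (Nat.cast_nonneg _)
  have hent0 : ent (col G q) f₀ univ ≤ N * (Fintype.card V * q) := by
    have : ent (col G q) f₀ univ ≤ ∑ σ ∈ col G q, f₀ σ * (Fintype.card V * q) := by
      refine sum_le_sum fun σ hσ => mul_le_mul_of_nonneg_left ?_ (hf0 σ hσ).le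
      rw [hav0, Real.log_one, sub_zero]
      refine (Real.log_le_log (hf0 σ hσ) ?_).trans hNq
      simp only [hf₀]; split_ifs <;> linarith
    rwa [← sum_mul, hsum0] at this
  -- Pinsker-type bound through the Hellinger distance
  have hP : (∑ σ ∈ col G q, |F σ - 1|) ^ 2 ≤ 4 * N * ent (col G q) F univ := by
    have h1 : ∀ σ ∈ col G q, |F σ - 1| = |√(F σ) - 1| * (√(F σ) + 1) := fun σ hσ => by
      have := Real.mul_self_sqrt (hFpos σ hσ).le
      rw [← abs_of_nonneg (by positivity : 0 ≤ √(F σ) + 1), ← abs_mul]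
      congr 1
      linarith
    rw [sum_congr rfl h1]
    refine (sum_mul_sq_le_sq_mul_sq _ _ _).trans ?_
    have h2 := hell_le (R := univ) hFpos
    simp only [hav, Real.sqrt_one] at h2
    have h3 : ∑ σ ∈ col G q, (√(F σ) + 1) ^ 2 ≤ 4 * N := by
      have : ∀ σ ∈ col G q, (√(F σ) + 1) ^ 2 ≤ 2 * F σ + 2 := fun σ hσ => by
        nlinarith [Real.mul_self_sqrt (hFpos σ hσ).le, sq_nonneg (√(F σ) - 1)]
      refine (sum_le_sum this).trans (le_of_eq ?_)
      rw [sum_add_distrib, ← mul_sum, hsum, sum_const, nsmul_eq_mul, ← hN]; ring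
    simp_rw [sq_abs]
    rw [mul_comm (4 * N)]
    exact mul_le_mul h2 h3 (sum_nonneg fun _ _ => sq_nonneg _) (ent_nonneg hFpos)
  have htv : tvDist (fun y => (glauberMatrix (coloringGibbs G q) ^ t) x y) (coloringGibbs G q)
      = (∑ σ ∈ col G q, |F σ - 1|) / N := by
    rw [tv_eq hx, ← hN, mul_sum, sum_div]
    refine sum_congr rfl fun y hy => ?_
    rw [hFy y hy, eq_div_iff hN0.ne']
    have : N / 2 * (glauberMatrix (coloringGibbs G q) ^ t) x y + 1 / 2 - 1
        = N / 2 * ((glauberMatrix (coloringGibbs G q) ^ t) x y - 1 / N) := by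
      field_simp; ring
    rw [this, abs_mul, abs_of_pos (by positivity : 0 < N / 2)]
    ring
  rw [htv, div_pow, div_le_iff₀ (by positivity)]
  refine hP.trans ?_
  have h5 := hFent.trans (mul_le_mul_of_nonneg_left hent0 (Real.exp_pos _).le)
  have h6 := mul_le_mul_of_nonneg_left h5 (by positivity : 0 ≤ 4 * N)
  refine h6.trans (le_of_eq ?_)
  ring

/-- Approximate tensorisation of entropy implies mixing in `O(n log n)` steps. -/
lemma mix_of_at {C : ℝ} (hC : 0 < C) (hn : 2 ≤ Fintype.card V) (hq : 1 ≤ q)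
    (hAT : ∀ f : (V → Fin q) → ℝ, (∀ σ ∈ col G q, 0 < f σ) →
      ent (col G q) f univ ≤ C * ∑ v, ent (col G q) f {v}) :
    (mixingTime (coloringGibbs G q) (glauberMatrix (coloringGibbs G q)) (1 / 4) : ℝ)
      ≤ (C * (1 + 2 * Real.log (64 * q)) + 1) * Fintype.card V
        * Real.log (Fintype.card V) := by
  have : Nonempty V := Fintype.card_pos_iff.mp (by omega)
  set n : ℝ := (Fintype.card V : ℝ) with hn'
  have hn2 : 2 ≤ n := by rw [hn']; exact_mod_cast hn
  have hq1 : (1 : ℝ) ≤ q := by exact_mod_cast hq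
  have hlog : 1 / 2 ≤ Real.log n :=
    (by linarith [Real.log_two_gt_d9] : (1:ℝ) / 2 ≤ Real.log 2).trans
      (Real.log_le_log (by norm_num) hn2)
  set X : ℝ := C * n * Real.log (64 * n * q) with hX
  have hL : 0 ≤ Real.log (64 * q) := Real.log_nonneg (by linarith)
  have hlog2 : Real.log (64 * n * q) = Real.log n + Real.log (64 * q) := by
    rw [← Real.log_mul (by positivity) (by positivity)]; congr 1; ring
  have hX0 : 0 ≤ X := by rw [hX, hlog2]; positivity
  have hm : mixingTime (coloringGibbs G q) (glauberMatrix (coloringGibbs G q)) (1 / 4) ≤ ⌈X⌉₊ := by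
    refine mixing_le fun σ hσ => ?_
    refine le_of_sq_le_sq (a := tvDist _ _) ?_ (by norm_num)
    refine (tv_le_of_at hC hAT hσ _).trans ?_
    rw [← hn']
    have h1 : Real.log (64 * n * q) ≤ (⌈X⌉₊ : ℝ) / (C * n) := by
      rw [le_div_iff₀ (by positivity), mul_comm]
      exact Nat.le_ceil X
    have h2 : Real.exp (-((⌈X⌉₊ : ℝ) / (C * n))) ≤ (64 * n * q)⁻¹ := by
      rw [← Real.exp_log (by positivity : 0 < 64 * n * q), ← Real.exp_neg]
      exact Real.exp_le_exp.mpr (by linarith)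
    calc _ ≤ 4 * (64 * n * q)⁻¹ * (n * q) := by gcongr
      _ ≤ (1 / 4) ^ 2 := by
        apply le_of_eq; field_simp; norm_num
  have h1 : (⌈X⌉₊ : ℝ) ≤ X + 1 := (Nat.ceil_lt_add_one hX0).le
  have h2 : (mixingTime (coloringGibbs G q) (glauberMatrix (coloringGibbs G q)) (1 / 4) : ℝ)
      ≤ ⌈X⌉₊ := by exact_mod_cast hm
  refine h2.trans (h1.trans ?_)
  have h3 : (1 : ℝ) ≤ n * Real.log n := by nlinarith
  have h4 : X ≤ C * n * (Real.log n + 2 * Real.log (64 * q) * Real.log n) := by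
    rw [hX, hlog2]
    refine mul_le_mul_of_nonneg_left ?_ (by positivity)
    nlinarith
  linarith

end Glauber

/-! ### Path coupling when there are more than twice as many colours as neighbours -/

section Path

variable {V : Type} [Fintype V] [DecidableEq V] {G : SimpleGraph V} [DecidableRel G.Adj] {q : ℕ}
variable {σ τ ρ x y : V → Fin q} {u v w : V} {D : ℕ} {f g : (V → Fin q) → ℝ}

/-- Uniform average of `h` over `A`. -/
def avg (A : Finset (Fin q)) (h : Fin q → ℝ) : ℝ := (∑ c ∈ A, h c) / A.card

lemma avg_sub_le_aux {A B : Finset (Fin q)} {h : Fin q → ℝ} {l : ℝ} (hl : 0 ≤ l)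
    (hh : ∀ c d, |h c - h d| ≤ l) (hA : A.Nonempty) (hB : B.Nonempty) (hAB : (A \ B).card ≤ 1)
    (hc : B.card ≤ A.card) : |avg A h - avg B h| ≤ l / A.card := by
  have hA0 : (0 : ℝ) < A.card := by exact_mod_cast card_pos.mpr hA
  have hB0 : (0 : ℝ) < B.card := by exact_mod_cast card_pos.mpr hB
  set M := avg B h with hM
  have hMB : ∑ c ∈ B, (h c - M) = 0 := by
    rw [sum_sub_distrib, sum_const, nsmul_eq_mul, hM, avg]; field_simp; ring
  have hle : ∀ c, |h c - M| ≤ l := by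
    intro c
    have : h c - M = (∑ d ∈ B, (h c - h d)) / B.card := by
      rw [sum_sub_distrib, sum_const, nsmul_eq_mul, hM, avg]; field_simp
    rw [this, abs_div, abs_of_pos hB0, div_le_iff₀ hB0]
    refine (abs_sum_le_sum_abs _ _).trans ((sum_le_sum fun d _ => hh c d).trans ?_)
    rw [sum_const, nsmul_eq_mul, mul_comm]
  have h1 : avg A h - M = (∑ c ∈ A, (h c - M)) / A.card := by
    rw [sum_sub_distrib, sum_const, nsmul_eq_mul, avg]; field_simp
  have h2 : ∑ c ∈ A, (h c - M) = ∑ c ∈ A \ B, (h c - M) - ∑ c ∈ B \ A, (h c - M) := by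
    have e1 := sum_inter_add_sum_sdiff A B (fun c => h c - M)
    have e2 := sum_inter_add_sum_sdiff B A (fun c => h c - M)
    rw [inter_comm] at e2
    linarith
  have h3 : (B \ A).card ≤ (A \ B).card := by
    have e1 := card_sdiff_add_card_inter A B
    have e2 := card_sdiff_add_card_inter B A
    rw [inter_comm] at e2
    omega
  rw [h1, abs_div, abs_of_pos hA0]
  refine div_le_div_of_nonneg_right ?_ hA0.le
  rw [h2]
  rcases Nat.lt_or_ge (A \ B).card 1 with ha | ha
  · have a0 : A \ B = ∅ := card_eq_zero.mp (by omega)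
    have b0 : B \ A = ∅ := card_eq_zero.mp (by omega)
    rw [a0, b0]; simpa using hl
  · obtain ⟨a, ha⟩ := card_eq_one.mp (le_antisymm hAB ha)
    rw [ha, sum_singleton]
    rcases Nat.lt_or_ge (B \ A).card 1 with hb | hb
    · have b0 : B \ A = ∅ := card_eq_zero.mp (by omega)
      rw [b0, sum_empty, sub_zero]; exact hle a
    · obtain ⟨b, hb⟩ := card_eq_one.mp (le_antisymm (h3.trans hAB) hb)
      rw [hb, sum_singleton, sub_sub_sub_cancel_right]
      exact hh a b

/-- Uniform averages over two sets of size at least `s`, each with at most one element outside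
the other, differ by at most a fraction `1 / s` of the oscillation. -/
lemma avg_sub_le {A B : Finset (Fin q)} {h : Fin q → ℝ} {l : ℝ} {s : ℕ} (hl : 0 ≤ l) (hs : 1 ≤ s)
    (hh : ∀ c d, |h c - h d| ≤ l) (hA : s ≤ A.card) (hB : s ≤ B.card) (hAB : (A \ B).card ≤ 1)
    (hBA : (B \ A).card ≤ 1) : |avg A h - avg B h| ≤ l / s := by
  have hs0 : (0 : ℝ) < s := by exact_mod_cast hs
  have nA : A.Nonempty := card_pos.mp (by omega)
  have nB : B.Nonempty := card_pos.mp (by omega)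
  have hA' : (s : ℝ) ≤ A.card := by exact_mod_cast hA
  have hB' : (s : ℝ) ≤ B.card := by exact_mod_cast hB
  rcases le_total B.card A.card with hc | hc
  · exact (avg_sub_le_aux hl hh nA nB hAB hc).trans (div_le_div_of_nonneg_left hl hs0 hA')
  · rw [abs_sub_comm]
    exact (avg_sub_le_aux hl hh nB nA hBA hc).trans (div_le_div_of_nonneg_left hl hs0 hB')

/-- Colours not used on the neighbours of `v`. -/
def freeCol (G : SimpleGraph V) [DecidableRel G.Adj] (σ : V → Fin q) (v : V) : Finset (Fin q) :=
  univ \ (G.neighborFinset v).image σ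

lemma mem_freeCol {c : Fin q} : c ∈ freeCol G σ v ↔ ∀ u, G.Adj v u → σ u ≠ c := by
  simp [freeCol]

lemma card_freeCol (hD : ∀ v, G.degree v ≤ D) (σ : V → Fin q) (v : V) :
    q - D ≤ (freeCol G σ v).card := by
  have h1 := le_card_sdiff ((G.neighborFinset v).image σ) (univ : Finset (Fin q))
  have h2 := card_image_le (s := G.neighborFinset v) (f := σ)
  rw [SimpleGraph.card_neighborFinset_eq_degree] at h2
  rw [card_univ, Fintype.card_fin] at h1
  have := hD v
  unfold freeCol
  omega

/-- Heat-bath update at `v`, defined on all configurations, proper or not. -/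
def heat (G : SimpleGraph V) [DecidableRel G.Adj] (v : V) (f : (V → Fin q) → ℝ)
    (σ : V → Fin q) : ℝ := avg (freeCol G σ v) fun c => f (Function.update σ v c)

/-- Glauber dynamics extended to all configurations. -/
def hstp (G : SimpleGraph V) [DecidableRel G.Adj] (f : (V → Fin q) → ℝ)
    (σ : V → Fin q) : ℝ := (Fintype.card V : ℝ)⁻¹ * ∑ v, heat G v f σ

lemma heat_eq (hσ : σ ∈ col G q) (v : V) : heat G v f σ = av (col G q) {v} f σ := by
  have h : ∀ j, Function.update σ v j ∈ col G q ↔ j ∈ freeCol G σ v := by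
    intro j
    rw [mem_freeCol]
    refine ⟨fun h u hu => ?_, fun h => update_mem_col hσ h⟩
    have := mem_col.mp h v u hu
    rw [Function.update_self, Function.update_of_ne hu.ne'] at this
    exact this.symm
  have h1 : ∀ F : (V → Fin q) → ℝ, ∑ τ ∈ bl (col G q) {v} σ, F τ
      = ∑ c ∈ freeCol G σ v, F (Function.update σ v c) := by
    intro F
    rw [← sum_update_eq]
    simp_rw [h]
    rw [← sum_filter, filter_mem_eq_inter, univ_inter]
  have h2 := h1 fun _ => 1
  simp only [sum_const, nsmul_eq_mul, mul_one] at h2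
  rw [heat, avg, av, h1, h2]

lemma hstp_eq (hσ : σ ∈ col G q) : hstp G f σ = stp G q f σ := by
  unfold hstp stp
  rw [sum_congr rfl fun v _ => heat_eq hσ v]

lemma hstp_iter (t : ℕ) (hσ : σ ∈ col G q) : (hstp G)^[t] f σ = (stp G q)^[t] f σ := by
  induction t generalizing σ with
  | zero => rfl
  | succ t ih =>
    rw [Function.iterate_succ_apply', Function.iterate_succ_apply', hstp_eq hσ]
    exact stp_congr (fun τ hτ => ih hτ) σ

/-- `f` changes by at most `l` when a single vertex is recoloured. -/
def Lip (f : (V → Fin q) → ℝ) (l : ℝ) : Prop :=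
  ∀ σ w c, |f σ - f (Function.update σ w c)| ≤ l

lemma freeCol_sdiff (σ : V → Fin q) (w v : V) (c : Fin q) :
    (freeCol G σ v \ freeCol G (Function.update σ w c) v).card ≤ 1 := by
  have : freeCol G σ v \ freeCol G (Function.update σ w c) v ⊆ {c} := by
    intro d hd
    rw [mem_sdiff, mem_freeCol, mem_freeCol] at hd
    obtain ⟨h1, h2⟩ := hd
    push Not at h2
    obtain ⟨u, hu, hud⟩ := h2
    rw [mem_singleton]
    by_cases huw : u = w
    · rw [huw, Function.update_self] at hud; exact hud.symm
    · rw [Function.update_of_ne huw] at hud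
      exact absurd hud (h1 u hu)
  exact (card_le_card this).trans (card_singleton _).le

/-- Effect of a change of colour at `w` on the update at `v`: the change is forgotten if `v = w`,
and it alters the set of free colours at `v` only if `v` is adjacent to `w`. -/
lemma heat_lip {l : ℝ} {s : ℕ} (hl : 0 ≤ l) (hs : 1 ≤ s) (hf : Lip f l)
    (hav : ∀ (σ : V → Fin q) v, s ≤ (freeCol G σ v).card) (σ : V → Fin q) (w : V) (c : Fin q)
    (v : V) : |heat G v f σ - heat G v f (Function.update σ w c)|
      ≤ (if v = w then 0 else l) + if G.Adj w v then l / s else 0 := by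
  set σ' := Function.update σ w c with hσ'
  have hav' : ¬ G.Adj w v → freeCol G σ' v = freeCol G σ v := by
    intro h
    ext d
    rw [mem_freeCol, mem_freeCol]
    refine forall₂_congr fun u hu => ?_
    rw [hσ', Function.update_of_ne (fun e : u = w => h (by rw [← e]; exact hu.symm))]
  by_cases hvw : v = w
  · subst hvw
    rw [heat, heat, hav' (G.loopless.irrefl v)]
    simp [hσ']
  · have hcomm : ∀ d, Function.update σ' v d = Function.update (Function.update σ v d) w c :=
      fun d => Function.update_comm (Ne.symm hvw) c d σ
    have h1 : |avg (freeCol G σ' v) (fun d => f (Function.update σ v d))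
        - avg (freeCol G σ' v) (fun d => f (Function.update σ' v d))| ≤ l := by
      have hp : (0 : ℝ) < (freeCol G σ' v).card := by
        exact_mod_cast lt_of_lt_of_le hs (hav σ' v)
      rw [avg, avg, ← sub_div, ← sum_sub_distrib, abs_div, abs_of_pos hp, div_le_iff₀ hp]
      refine (abs_sum_le_sum_abs _ _).trans ((sum_le_sum fun d _ => ?_).trans
        (by rw [sum_const, nsmul_eq_mul, mul_comm]))
      rw [hcomm]
      exact hf _ w c
    rw [if_neg hvw, heat, heat]
    by_cases hadj : G.Adj w v
    · rw [if_pos hadj]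
      have h2 : |avg (freeCol G σ v) (fun d => f (Function.update σ v d))
          - avg (freeCol G σ' v) (fun d => f (Function.update σ v d))| ≤ l / s := by
        refine avg_sub_le hl hs (fun a b => ?_) (hav σ v) (hav σ' v) (freeCol_sdiff σ w v c) ?_
        · have := hf (Function.update σ v a) v b
          rwa [Function.update_idem] at this
        · have := freeCol_sdiff (G := G) σ' w v (σ w)
          rwa [hσ', Function.update_idem, Function.update_eq_self] at this
      have := abs_sub_le (avg (freeCol G σ v) (fun d => f (Function.update σ v d)))
        (avg (freeCol G σ' v) (fun d => f (Function.update σ v d)))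
        (avg (freeCol G σ' v) (fun d => f (Function.update σ' v d)))
      linarith
    · rw [if_neg hadj, add_zero, ← hav' hadj]
      exact h1

/-- Path coupling in dual form: one step shrinks Lipschitz constants, because a disagreement at
`w` is erased when `w` is updated and spreads to each of its at most `D` neighbours with
probability at most `1 / (D + 1)`. -/
lemma hstp_lip [Nonempty V] {l : ℝ} (hl : 0 ≤ l) (hf : Lip f l) (hD : ∀ v, G.degree v ≤ D)
    (hq : 2 * D + 1 ≤ q) :
    Lip (hstp G f) (Real.exp (-(1 / (Fintype.card V * (D + 1)))) * l) := by
  intro σ w c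
  set n : ℝ := (Fintype.card V : ℝ) with hn
  have hn0 : 0 < n := by rw [hn]; exact_mod_cast Fintype.card_pos
  unfold hstp
  rw [← mul_sub, ← sum_sub_distrib, abs_mul, abs_of_pos (inv_pos.mpr hn0)]
  have h1 : |∑ v, (heat G v f σ - heat G v f (Function.update σ w c))|
      ≤ (n - 1) * l + D * (l / (D + 1)) := by
    refine (abs_sum_le_sum_abs _ _).trans ((sum_le_sum fun v _ => heat_lip (s := D + 1) hl
      (by omega) hf (fun σ v => (by omega : D + 1 ≤ q - D).trans (card_freeCol hD σ v)) σ w c v).trans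
      ?_)
    rw [sum_add_distrib]
    refine add_le_add ?_ ?_
    · have : ∀ v : V, (if v = w then 0 else l) = l - if v = w then l else 0 := fun v => by
        split_ifs <;> simp
      rw [sum_congr rfl fun v _ => this v, sum_sub_distrib, sum_ite_eq' univ w, sum_const,
        nsmul_eq_mul, card_univ, ← hn]
      simp only [mem_univ, if_true]
      linarith
    · rw [← sum_filter, sum_const, nsmul_eq_mul]
      push_cast
      refine mul_le_mul_of_nonneg_right ?_ (by positivity)
      have : (univ.filter fun v => G.Adj w v).card = G.degree w := by
        rw [← SimpleGraph.card_neighborFinset_eq_degree]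
        congr 1
        ext; simp
      rw [this]
      exact_mod_cast hD w
  refine (mul_le_mul_of_nonneg_left h1 (inv_pos.mpr hn0).le).trans ?_
  have h2 : n⁻¹ * ((n - 1) * l + D * (l / (D + 1))) = (1 - 1 / (n * (D + 1))) * l := by
    field_simp; ring
  rw [h2]
  refine mul_le_mul_of_nonneg_right ?_ hl
  have := Real.add_one_le_exp (-(1 / (n * (D + 1))))
  linarith

lemma hstp_iter_lip [Nonempty V] {l : ℝ} (hl : 0 ≤ l) (hf : Lip f l) (hD : ∀ v, G.degree v ≤ D)
    (hq : 2 * D + 1 ≤ q) (t : ℕ) :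
    Lip ((hstp G)^[t] f) (Real.exp (-(t / (Fintype.card V * (D + 1)))) * l) := by
  induction t with
  | zero => simpa using hf
  | succ t ih =>
    rw [Function.iterate_succ_apply']
    have := hstp_lip (by positivity) ih hD hq
    rw [← mul_assoc, ← Real.exp_add] at this
    convert this using 3
    push_cast
    ring

lemma lip_diam {l : ℝ} (hf : Lip f l) (σ τ : V → Fin q) : |f σ - f τ| ≤ Fintype.card V * l := by
  have key : ∀ S : Finset V, |f σ - f (glue S τ σ)| ≤ S.card * l := by
    intro S
    induction S using Finset.induction_on with
    | empty =>
      have : glue ∅ τ σ = σ := by funext v; simp [glue]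
      simp [this]
    | insert a S ha ih =>
      have h1 : glue (insert a S) τ σ = Function.update (glue S τ σ) a (τ a) := by
        funext v
        by_cases hv : v = a
        · subst hv; simp [glue]
        · simp [glue, hv]
      rw [h1, card_insert_of_notMem ha]
      have h2 := hf (glue S τ σ) a (τ a)
      have h3 := abs_sub_le (f σ) (f (glue S τ σ)) (f (Function.update (glue S τ σ) a (τ a)))
      push_cast
      linarith
  have := key univ
  have h : glue univ τ σ = τ := by funext v; simp [glue]
  rwa [h, card_univ] at this

lemma tv_le_of_path [Nonempty V] (hD : ∀ v, G.degree v ≤ D) (hq : 2 * D + 1 ≤ q)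
    (hx : x ∈ col G q) (t : ℕ) :
    tvDist (fun y => (glauberMatrix (coloringGibbs G q) ^ t) x y) (coloringGibbs G q)
      ≤ Fintype.card V * Real.exp (-(t / (Fintype.card V * (D + 1)))) := by
  set N : ℝ := ((col G q).card : ℝ) with hN
  have hN0 : 0 < N := by rw [hN]; exact_mod_cast card_pos.mpr ⟨x, hx⟩
  set P := glauberMatrix (coloringGibbs G q) ^ t with hP
  -- the optimal test function for the total variation distance
  set s : (V → Fin q) → ℝ := fun y => if 0 ≤ P x y - 1 / N then 1 else -1 with hs
  have hlip : Lip s 2 := by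
    intro σ w c
    simp only [hs]
    split_ifs <;> norm_num
  have h1 : ∀ z ∈ col G q, |(stp G q)^[t] s x - (stp G q)^[t] s z|
      ≤ Fintype.card V * (Real.exp (-(t / (Fintype.card V * (D + 1)))) * 2) := by
    intro z hz
    rw [← hstp_iter t hx, ← hstp_iter t hz]
    exact lip_diam (hstp_iter_lip (by norm_num) hlip hD hq t) x z
  have h2 : ∑ y ∈ col G q, |P x y - 1 / N| = (stp G q)^[t] s x
      - (∑ z ∈ col G q, (stp G q)^[t] s z) / N := by
    have e1 : ∀ y ∈ col G q, |P x y - 1 / N| = P x y * s y - s y / N := by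
      intro y _
      simp only [hs]
      split_ifs with h
      · rw [abs_of_nonneg h]; ring
      · rw [abs_of_neg (not_le.mp h)]; ring
    rw [sum_congr rfl e1, sum_sub_distrib, sum_iter, sum_div, ← pow_sum hx]
    congr 1
    refine sum_subset (subset_univ _) fun y _ hy => ?_
    rw [hP, pow_apply_zero hx t hy, zero_mul]
  have h3 : (stp G q)^[t] s x - (∑ z ∈ col G q, (stp G q)^[t] s z) / N
      ≤ Fintype.card V * (Real.exp (-(t / (Fintype.card V * (D + 1)))) * 2) := by
    have : (stp G q)^[t] s x - (∑ z ∈ col G q, (stp G q)^[t] s z) / N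
        = (∑ z ∈ col G q, ((stp G q)^[t] s x - (stp G q)^[t] s z)) / N := by
      rw [sum_sub_distrib, sum_const, nsmul_eq_mul, ← hN]; field_simp
    rw [this, div_le_iff₀ hN0]
    refine (sum_le_sum fun z hz => (le_abs_self _).trans (h1 z hz)).trans (le_of_eq ?_)
    rw [sum_const, nsmul_eq_mul, ← hN, mul_comm]
  rw [tv_eq hx, ← hN, ← hP, h2]
  linarith

/-- Path coupling implies mixing in `O(n log n)` steps when `q > 2 D`. -/
lemma mix_of_path (hn : 2 ≤ Fintype.card V) (hD : ∀ v, G.degree v ≤ D) (hq : 2 * D + 1 ≤ q) :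
    (mixingTime (coloringGibbs G q) (glauberMatrix (coloringGibbs G q)) (1 / 4) : ℝ)
      ≤ (3 * (D + 1) + 1) * Fintype.card V * Real.log (Fintype.card V) := by
  have : Nonempty V := Fintype.card_pos_iff.mp (by omega)
  set n : ℝ := (Fintype.card V : ℝ) with hn'
  have hn2 : 2 ≤ n := by rw [hn']; exact_mod_cast hn
  have hlog2 := Real.log_two_gt_d9
  have hlogn : Real.log 2 ≤ Real.log n := Real.log_le_log (by norm_num) hn2
  have hlog4 : Real.log (4 * n) ≤ 3 * Real.log n := by
    rw [Real.log_mul (by norm_num) (by positivity), show (4 : ℝ) = 2 ^ 2 by norm_num, Real.log_pow]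
    push_cast
    linarith
  set X : ℝ := n * (D + 1) * Real.log (4 * n) with hX
  have hX0 : 0 ≤ X := by
    have : 0 ≤ Real.log (4 * n) := Real.log_nonneg (by linarith)
    positivity
  have hm : mixingTime (coloringGibbs G q) (glauberMatrix (coloringGibbs G q)) (1 / 4) ≤ ⌈X⌉₊ := by
    refine mixing_le fun σ hσ => (tv_le_of_path hD hq hσ _).trans ?_
    rw [← hn']
    have h1 : Real.log (4 * n) ≤ (⌈X⌉₊ : ℝ) / (n * (D + 1)) := by
      rw [le_div_iff₀ (by positivity), mul_comm]
      exact Nat.le_ceil X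
    have h2 : Real.exp (-((⌈X⌉₊ : ℝ) / (n * (D + 1)))) ≤ (4 * n)⁻¹ := by
      rw [← Real.exp_log (by positivity : 0 < 4 * n), ← Real.exp_neg]
      exact Real.exp_le_exp.mpr (by linarith)
    calc _ ≤ n * (4 * n)⁻¹ := by gcongr
      _ = 1 / 4 := by field_simp
  have h1 : (⌈X⌉₊ : ℝ) ≤ X + 1 := (Nat.ceil_lt_add_one hX0).le
  have h2 : (mixingTime (coloringGibbs G q) (glauberMatrix (coloringGibbs G q)) (1 / 4) : ℝ)
      ≤ ⌈X⌉₊ := by exact_mod_cast hm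
  refine h2.trans (h1.trans ?_)
  have h3 : (1 : ℝ) ≤ n * Real.log n := by nlinarith
  have h4 : X ≤ n * (D + 1) * (3 * Real.log n) :=
    mul_le_mul_of_nonneg_left hlog4 (by positivity)
  linarith

end Path

/-! ### Few colours: a constant for each number of colours -/

section Final

/-- For `q ≤ 2Δ` the constant may be chosen separately for each `q`, since only finitely many
`q` occur. -/
lemma mix_few (Δ : ℕ) (hΔ : 3 ≤ Δ) (q : ℕ) : ∃ C : ℝ, ∀ α : ℝ, 0 < α → α = Real.exp (1 / α) →
    α * (Δ : ℝ) ≤ q → q ≤ 2 * Δ →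
    ∀ (V : Type) [Fintype V] [DecidableEq V] (G : SimpleGraph V) [DecidableRel G.Adj],
      2 ≤ Fintype.card V → (∀ v, G.degree v ≤ Δ) → G.CliqueFree 3 →
      (mixingTime (coloringGibbs G q) (glauberMatrix (coloringGibbs G q)) (1 / 4) : ℝ)
        ≤ C * Fintype.card V * Real.log (Fintype.card V) := by
  by_cases h : ∃ α : ℝ, 0 < α ∧ α = Real.exp (1 / α) ∧ α * (Δ : ℝ) ≤ q ∧ q ≤ 2 * Δ
  · obtain ⟨α, h0, hα, hq, hq2⟩ := h
    obtain ⟨κ, hκ0, hκ1, hnum⟩ := numeric_cond h0 hα hΔ hq hq2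
    have hα' := alpha_gt h0 hα
    have hΔR : (3 : ℝ) ≤ Δ := by exact_mod_cast hΔ
    have hqΔ : Δ + 2 ≤ q := by
      have : (Δ : ℝ) + 2 ≤ q := by nlinarith
      exact_mod_cast this
    set N : ℕ := ⌈4 * ((q : ℝ) ^ 2 * (Δ * (2 / (1 - κ)))) / (1 / (q : ℝ) ^ (Δ + 1)) ^ 2 + 1⌉₊
      with hN
    have hq0 : (0 : ℝ) < q := by exact_mod_cast (by omega : 0 < q)
    refine ⟨2 * (144 * (q : ℝ) ^ 2 * (Δ : ℝ) ^ 2) ^ N * (1 + 2 * Real.log (64 * q)) + 1, ?_⟩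
    intro _ _ _ _ _ V _ _ G _ hn hD hG
    exact mix_of_at (by positivity) hn (by omega) fun f hf =>
      at_col hD (by omega) hqΔ hκ1 (marg_bound hG (by omega) hnum hκ0) hf (Nat.le_ceil _)
  · exact ⟨0, fun α h0 hα hq hq2 => absurd ⟨α, h0, hα, hq, hq2⟩ h⟩

end Final

end

end ColoringMixing

/-- **Optimal mixing for sampling proper `q`-colorings of triangle-free graphs with
`q ≥ (α*+δ)Δ`, where `α* ≈ 1.763` solves `α* = exp(1/α*)`.** -/
theorem coloring_optimal_mixing
    (Δ : ℕ) (hΔ : 3 ≤ Δ) (δ : ℝ) (hδ0 : 0 < δ) :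
    ∃ C : ℝ, ∀ αstar : ℝ, 0 < αstar → αstar = Real.exp (1 / αstar) →
      ∀ (V : Type) [Fintype V] [DecidableEq V]
        (G : SimpleGraph V) [DecidableRel G.Adj],
        2 ≤ Fintype.card V → (∀ v : V, G.degree v ≤ Δ) → G.CliqueFree 3 →
        ∀ q : ℕ, (αstar + δ) * (Δ : ℝ) ≤ (q : ℝ) →
        (mixingTime (coloringGibbs G q)
            (glauberMatrix (coloringGibbs G q)) (1 / 4) : ℝ) ≤
          C * (Fintype.card V : ℝ) * Real.log (Fintype.card V) := by
  classical
  choose Cq hCq using ColoringMixing.mix_few Δ hΔ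
  refine ⟨(3 * ((Δ : ℝ) + 1) + 1) + ∑ q ∈ Finset.range (2 * Δ + 1), |Cq q|, ?_⟩
  intro αstar h0 hα V _ _ G _ hn hD hG q hq
  have hlog : 0 ≤ Real.log (Fintype.card V) := Real.log_natCast_nonneg _
  have hsum : 0 ≤ ∑ q ∈ Finset.range (2 * Δ + 1), |Cq q| :=
    Finset.sum_nonneg fun _ _ => abs_nonneg _
  have hmono : ∀ {a b : ℝ}, a ≤ b → a * Fintype.card V * Real.log (Fintype.card V)
      ≤ b * Fintype.card V * Real.log (Fintype.card V) := fun h =>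
    mul_le_mul_of_nonneg_right (mul_le_mul_of_nonneg_right h (Nat.cast_nonneg _)) hlog
  by_cases hq2 : q ≤ 2 * Δ
  · have hq' : αstar * (Δ : ℝ) ≤ q := by
      have : 0 ≤ δ * (Δ : ℝ) := by positivity
      linarith
    refine (hCq q αstar h0 hα hq' hq2 V G hn hD hG).trans (hmono ?_)
    have h1 : |Cq q| ≤ ∑ q ∈ Finset.range (2 * Δ + 1), |Cq q| :=
      Finset.single_le_sum (f := fun q => |Cq q|) (fun _ _ => abs_nonneg _)
        (Finset.mem_range.mpr (by omega))
    have h2 : (0 : ℝ) ≤ 3 * ((Δ : ℝ) + 1) + 1 := by positivity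
    linarith [le_abs_self (Cq q)]
  · exact (ColoringMixing.mix_of_path hn hD (by omega)).trans (hmono (by linarith))
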